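/- For the Glauber dynamics of the square plaquette model on Λ=[1:L_c]² with all-plus boundary conditions, where L_c=⌊e^{β/2}⌋ is the critical length, there exist constants c,C>0 and β₀ such that for all β≥β₀: c·e^{3.5β} ≤ T_mix⁺(L_c) ≤ C·β⁸·e^{3.75β}. -/

import Mathlib

open scoped BigOperators

attribute [local instance] Classical.propDecidable

noncomputable section

namespace SPM

/-- Spin configurations on the box `[1:L]²`; `true` codes spin `+1`. -/
abbrev Config (L : ℕ) := Fin L × Fin L → Bool

/-- The spin at the integer point `y ∈ ℤ²`, with all-plus boundary conditions:
sites outside `[1:L]²` carry spin `+1`. Site `i : Fin L × Fin L` sits at `(i₁+1, i₂+1)`. -/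
def spinAt (L : ℕ) (σ : Config L) (y : ℤ × ℤ) : ℝ :=
  if ∃ i : Fin L × Fin L, ((i.1 : ℤ) + 1, (i.2 : ℤ) + 1) = y ∧ σ i = false then -1 else 1

/-- The plaquette variable `p_x(σ) = ∏_{y ∈ B_x} σ_y`. -/
def plaq (L : ℕ) (σ : Config L) (x : ℤ × ℤ) : ℝ :=
  spinAt L σ x * spinAt L σ (x.1 + 1, x.2) * spinAt L σ (x.1, x.2 + 1) *
    spinAt L σ (x.1 + 1, x.2 + 1)

/-- The plaquettes meeting the box `[1:L]²` are indexed by `[0:L]²`. -/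
def plaqSet (L : ℕ) : Finset (ℤ × ℤ) :=
  Finset.Icc (0 : ℤ) (L : ℤ) ×ˢ Finset.Icc (0 : ℤ) (L : ℤ)

/-- The set of defects `D(σ)`. -/
def defects (L : ℕ) (σ : Config L) : Finset (ℤ × ℤ) :=
  (plaqSet L).filter fun x => plaq L σ x = -1

/-- The Hamiltonian `H(σ) = -(1/2) ∑_x p_x(σ)`. -/
def ham (L : ℕ) (σ : Config L) : ℝ := -(1 / 2) * ∑ x ∈ plaqSet L, plaq L σ x

/-- The Gibbs measure `π(σ) = e^{-βH(σ)}/Z`. -/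
def gibbs (L : ℕ) (β : ℝ) (σ : Config L) : ℝ :=
  Real.exp (-β * ham L σ) / ∑ η : Config L, Real.exp (-β * ham L η)

/-- Flip one spin. -/
def flip (L : ℕ) (σ : Config L) (x : Fin L × Fin L) : Config L :=
  fun i => if i = x then !(σ i) else σ i

/-- Metropolis rate of the move `σ → η`: `min(1, e^{-β(H(η)-H(σ))})`. -/
def metroRate (L : ℕ) (β : ℝ) (σ η : Config L) : ℝ :=
  min 1 (Real.exp (-β * (ham L η - ham L σ)))

/-- The Glauber generator, as a matrix. -/
def gen (L : ℕ) (β : ℝ) : Matrix (Config L) (Config L) ℝ :=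
  fun σ η =>
    if η = σ then -(∑ x : Fin L × Fin L, metroRate L β σ (flip L σ x))
    else ∑ x : Fin L × Fin L, if η = flip L σ x then metroRate L β σ (flip L σ x) else 0

/-- Entrywise matrix exponential `∑ₖ Aᵏ/k!`. -/
def mexp {n : Type*} [Fintype n] [DecidableEq n] (A : Matrix n n ℝ) : Matrix n n ℝ :=
  fun i j => ∑' k : ℕ, (A ^ k) i j / (Nat.factorial k : ℝ)

/-- Total-variation distance between two (probability) vectors. -/
def tv {n : Type*} [Fintype n] (μ ν : n → ℝ) : ℝ := (∑ s, |μ s - ν s|) / 2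

/-- The `ε`-mixing time of the Glauber dynamics. -/
def tmix (L : ℕ) (β ε : ℝ) : ℝ :=
  sInf {t : ℝ | 0 < t ∧ ∀ σ : Config L, tv (mexp (t • gen L β) σ) (gibbs L β) < ε}

/-- The critical length scale `L_c = ⌊e^{β/2}⌋`. -/
def Lc (β : ℝ) : ℕ := ⌊Real.exp (β / 2)⌋₊

end SPM


open SPM

/-!
Up to a constant the Hamiltonian is the number `D` of defects, and for `L` of order `X = e^{β/2}`
the all-plus configuration carries at least half of the Gibbs measure `π`.

**Upper bound.** The key estimate is `∑ π D f² ≤ A 𝓓(f, f)` for `f` vanishing at all-plus, with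
`A` of order `X⁷`. It is a Hardy inequality. Every column with a defect has at least two of them,
and the lower one of two consecutive defects is pushed upwards by flips of row segments that end at
a neighbouring occupied column. Such a push costs no energy and is undone uniquely, unless it
removes defects, which is rare under `π`. The height to climb contributes `L²` to `A`, and the
row flip, realised by at most `L` single spin flips through an energy barrier of `2`, contributes
`L e^{2β}`.

The weight `D` replaces a logarithmic Sobolev inequality. A density with respect to `π` is large
only where `D` is large, so its squared norm, initially at most `2 e^{βM}` with `M = max D`, reaches
order one in time `β A log (β M)`; then the spectral gap `1 / A` takes over.

**Lower bound.** The test function is the area of the minus phase above the threshold `2L`. A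
configuration with four defects is a minus rectangle, and if some spin flip does not raise its
energy, then it has a side of length one and the test function vanishes around it. Hence the
Dirichlet form is carried by at most of order `L⁵` configurations with six defects, up to higher
energies, and is of order `L⁵ e^{-6β} ≈ X⁻⁷`. The order `L⁴` rectangles of area of order `L²` give
the test function a variance of order `L⁴ e^{-4β} (L²)² ≈ 1`.
-/

namespace SPM

/-! ### Reversible Markov generators -/

section MatrixExponential

variable {S : Type*} [Fintype S] [DecidableEq S]

theorem hasSum_mexp (A : Matrix S S ℝ) (i j : S) :
    HasSum (fun k : ℕ => (A ^ k) i j / (Nat.factorial k : ℝ)) (NormedSpace.exp A i j) := by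
  let _ : NormedRing (Matrix S S ℝ) := Matrix.linftyOpNormedRing
  let _ : NormedAlgebra ℝ (Matrix S S ℝ) := Matrix.linftyOpNormedAlgebra
  have hrow := Pi.hasSum.1 (NormedSpace.exp_series_hasSum_exp' (𝕂 := ℝ) A) i
  have hentry : HasSum (fun k : ℕ => ((Nat.factorial k : ℝ)⁻¹ • A ^ k) i j)
      (NormedSpace.exp A i j) := Pi.hasSum.1 hrow j
  simpa only [Matrix.smul_apply, smul_eq_mul, ← div_eq_inv_mul] using hentry

theorem mexp_eq_exp (A : Matrix S S ℝ) : mexp A = NormedSpace.exp A := by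
  ext i j
  exact (hasSum_mexp A i j).tsum_eq

theorem mexp_zero : mexp (0 : Matrix S S ℝ) = 1 := by
  rw [mexp_eq_exp, NormedSpace.exp_zero]

theorem mexp_transpose (A : Matrix S S ℝ) : mexp A.transpose = (mexp A).transpose := by
  rw [mexp_eq_exp, mexp_eq_exp, Matrix.exp_transpose]

theorem hasDerivAt_mexp (A : Matrix S S ℝ) (t : ℝ) (i j : S) :
    HasDerivAt (fun s : ℝ => mexp (s • A) i j) ((A * mexp (t • A)) i j) t := by
  let _ : NormedRing (Matrix S S ℝ) := Matrix.linftyOpNormedRing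
  let _ : NormedAlgebra ℝ (Matrix S S ℝ) := Matrix.linftyOpNormedAlgebra
  simp only [mexp_eq_exp]
  exact hasDerivAt_pi.1 (hasDerivAt_pi.1 (hasDerivAt_exp_smul_const' (𝕂 := ℝ) A t) i) j

theorem semiconjBy_mexp {X A B : Matrix S S ℝ} (h : SemiconjBy X A B) :
    SemiconjBy X (mexp A) (mexp B) := by
  let _ : NormedRing (Matrix S S ℝ) := Matrix.linftyOpNormedRing
  let _ : NormedAlgebra ℝ (Matrix S S ℝ) := Matrix.linftyOpNormedAlgebra
  let _ : NormedAlgebra ℚ (Matrix S S ℝ) := Matrix.linftyOpNormedAlgebra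
  have : CompleteSpace (Matrix S S ℝ) := FiniteDimensional.complete ℝ _
  rw [mexp_eq_exp, mexp_eq_exp]
  exact h.exp_right

theorem mexp_nonneg_of_nonneg {A : Matrix S S ℝ} (hA : ∀ i j, 0 ≤ A i j) (i j : S) :
    0 ≤ mexp A i j := by
  have hpow (k : ℕ) : ∀ i j, 0 ≤ (A ^ k) i j := by
    induction k with
    | zero => intro i j; rw [pow_zero, Matrix.one_apply]; split_ifs <;> norm_num
    | succ k ih =>
      intro i j
      rw [pow_succ, Matrix.mul_apply]
      exact Finset.sum_nonneg fun l _ => mul_nonneg (ih _ _) (hA _ _)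
  exact tsum_nonneg fun k => div_nonneg (hpow k i j) (by positivity)

theorem mexp_add_smul_one (A : Matrix S S ℝ) (c : ℝ) :
    mexp (A + c • (1 : Matrix S S ℝ)) = Real.exp c • mexp A := by
  have hexp : NormedSpace.exp (c • (1 : Matrix S S ℝ)) = Real.exp c • (1 : Matrix S S ℝ) := by
    rw [Matrix.smul_one_eq_diagonal, Matrix.exp_diagonal, Matrix.smul_one_eq_diagonal]
    ext i j
    simp [Matrix.diagonal, Real.exp_eq_exp_ℝ]
  rw [mexp_eq_exp, mexp_eq_exp,
    Matrix.exp_add_of_commute _ _ ((Commute.one_right A).smul_right c), hexp, Matrix.mul_smul,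
    mul_one]

theorem mexp_nonneg_of_offDiag_nonneg {A : Matrix S S ℝ} (hA : ∀ i j, i ≠ j → 0 ≤ A i j)
    (i j : S) : 0 ≤ mexp A i j := by
  set c := ∑ i, |A i i|
  have hdiag (i : S) : 0 ≤ A i i + c := by
    have : |A i i| ≤ c :=
      Finset.single_le_sum (f := fun i => |A i i|) (fun i _ => abs_nonneg _) (Finset.mem_univ i)
    linarith [neg_abs_le (A i i)]
  have hshift (i j : S) : 0 ≤ (A + c • (1 : Matrix S S ℝ)) i j := by
    by_cases h : i = j
    · subst h; simpa using hdiag i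
    · simpa [h] using hA i j h
  have h := mexp_nonneg_of_nonneg hshift i j
  rw [mexp_add_smul_one, Matrix.smul_apply, smul_eq_mul] at h
  exact nonneg_of_mul_nonneg_right h (Real.exp_pos c)

theorem mexp_mulVec_of_mulVec_eq_zero {A : Matrix S S ℝ} {v : S → ℝ} (h : A.mulVec v = 0) :
    (mexp A).mulVec v = v := by
  have hsemi : SemiconjBy (Matrix.of fun i _ => v i) 0 A := by
    ext i j
    simpa [Matrix.mul_apply, Matrix.mulVec, dotProduct] using (congrFun h i).symm
  have hexp := semiconjBy_mexp hsemi
  rw [mexp_zero, SemiconjBy, mul_one] at hexp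
  ext i
  exact (congrFun (congrFun hexp i) i).symm

theorem mexp_detailed_balance {A : Matrix S S ℝ} {p : S → ℝ}
    (h : ∀ i j, p i * A i j = p j * A j i) (i j : S) :
    p i * mexp A i j = p j * mexp A j i := by
  have hsemi : SemiconjBy (Matrix.diagonal p) A A.transpose := by
    ext i j
    rw [Matrix.diagonal_mul, Matrix.mul_diagonal, Matrix.transpose_apply, h, mul_comm]
  have hexp := congrFun (congrFun (semiconjBy_mexp hsemi) i) j
  rwa [mexp_transpose, Matrix.diagonal_mul, Matrix.mul_diagonal, Matrix.transpose_apply,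
    mul_comm (mexp A j i)] at hexp

end MatrixExponential

section Moments

variable {S : Type*} [Fintype S] {p : S → ℝ}

/-- The expectation of `f` under the weights `p`. -/
def mean (p f : S → ℝ) : ℝ := ∑ s, p s * f s

/-- The squared norm of `f` in `ℓ²(p)`. -/
def sqNorm (p f : S → ℝ) : ℝ := ∑ s, p s * f s ^ 2

/-- The variance of `f` under the weights `p`. -/
def variance (p f : S → ℝ) : ℝ := sqNorm p fun s => f s - mean p f

theorem sqNorm_nonneg (hp : ∀ s, 0 ≤ p s) (f : S → ℝ) : 0 ≤ sqNorm p f :=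
  Finset.sum_nonneg fun s _ => mul_nonneg (hp s) (sq_nonneg _)

theorem mean_sub_const (hp : ∑ s, p s = 1) (f : S → ℝ) (c : ℝ) :
    mean p (fun s => f s - c) = mean p f - c := by
  simp only [mean, mul_sub, Finset.sum_sub_distrib, ← Finset.sum_mul, hp, one_mul]

theorem sqNorm_sub_const (hp : ∑ s, p s = 1) (f : S → ℝ) (c : ℝ) :
    sqNorm p (fun s => f s - c) = sqNorm p f - 2 * c * mean p f + c ^ 2 := by
  have h (s : S) : p s * (f s - c) ^ 2 = p s * f s ^ 2 - 2 * c * (p s * f s) + c ^ 2 * p s := by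
    ring
  simp only [sqNorm, mean, h, Finset.sum_add_distrib, Finset.sum_sub_distrib, ← Finset.mul_sum,
    hp, mul_one]

theorem variance_eq_sqNorm_sub (hp : ∑ s, p s = 1) (f : S → ℝ) :
    variance p f = sqNorm p f - mean p f ^ 2 := by
  rw [variance, sqNorm_sub_const hp]
  ring

theorem variance_le_sqNorm_sub_const (hp : ∑ s, p s = 1) (f : S → ℝ) (c : ℝ) :
    variance p f ≤ sqNorm p fun s => f s - c := by
  rw [variance_eq_sqNorm_sub hp, sqNorm_sub_const hp]
  linarith [sq_nonneg (mean p f - c)]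

theorem sq_mean_le (hp : ∀ s, 0 ≤ p s) (f : S → ℝ) : mean p f ^ 2 ≤ (∑ s, p s) * sqNorm p f :=
  Finset.sum_sq_le_sum_mul_sum_of_sq_le_mul _ (fun s _ => hp s)
    (fun s _ => mul_nonneg (hp s) (sq_nonneg _)) (fun s _ => by rw [mul_pow, sq (p s), mul_assoc])

theorem mul_sqNorm_le_variance (hp : ∀ s, 0 ≤ p s) (hp1 : ∑ s, p s = 1) {f : S → ℝ} {o : S}
    (hf : f o = 0) : p o * sqNorm p f ≤ variance p f := by
  classical
  have hq (g : S → ℝ) : ∑ s, (if s = o then 0 else p s) * g s = ∑ s, p s * g s - p o * g o := by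
    rw [← Finset.sum_erase_eq_sub (Finset.mem_univ o), ← Finset.sum_erase _ (a := o) (by simp)]
    exact Finset.sum_congr rfl fun s hs => by rw [if_neg (Finset.ne_of_mem_erase hs)]
  have h := sq_mean_le (p := fun s => if s = o then 0 else p s)
    (fun s => by split_ifs; exacts [le_rfl, hp s]) f
  have hmass := hq 1
  simp only [mean, sqNorm, hq, hf, Pi.one_apply, mul_one, hp1] at h hmass
  rw [hmass] at h
  rw [variance_eq_sqNorm_sub hp1]
  simp only [mean, sqNorm]
  linarith

theorem four_mul_tv_sq_le_variance (hp : ∀ s, 0 ≤ p s) (hp1 : ∑ s, p s = 1) {g : S → ℝ}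
    (hg : mean p g = 1) : 4 * tv (fun s => p s * g s) p ^ 2 ≤ variance p g := by
  have htv : 2 * tv (fun s => p s * g s) p = mean p fun s => |g s - 1| := by
    rw [tv, mul_div_cancel₀ _ two_ne_zero]
    refine Finset.sum_congr rfl fun s _ => ?_
    rw [← mul_sub_one, abs_mul, abs_of_nonneg (hp s)]
  calc 4 * tv (fun s => p s * g s) p ^ 2 = (mean p fun s => |g s - 1|) ^ 2 := by rw [← htv]; ring
    _ ≤ sqNorm p fun s => |g s - 1| := by simpa only [hp1, one_mul] using sq_mean_le hp _
    _ = variance p g := by simp only [variance, sqNorm, sq_abs, hg]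

end Moments

section ReversibleChain

variable {S : Type*} [Fintype S]

/-- `G` is the generator of a continuous-time chain on `S`, reversible with respect to the
probability vector `p`. -/
structure IsReversibleGenerator (G : Matrix S S ℝ) (p : S → ℝ) : Prop where
  pos : ∀ s, 0 < p s
  sum_one : ∑ s, p s = 1
  row_sum : ∀ s, ∑ r, G s r = 0
  offDiag_nonneg : ∀ s r, s ≠ r → 0 ≤ G s r
  balance : ∀ s r, p s * G s r = p r * G r s

/-- The Dirichlet form of the generator `G` with respect to `p`. -/
def dirichlet (G : Matrix S S ℝ) (p f : S → ℝ) : ℝ :=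
  (∑ s, ∑ r, p s * G s r * (f r - f s) ^ 2) / 2

/-- The action of the semigroup `e^{tG}` on functions. -/
def semigroup [DecidableEq S] (G : Matrix S S ℝ) (t : ℝ) (f : S → ℝ) : S → ℝ :=
  (mexp (t • G)).mulVec f

variable {G : Matrix S S ℝ} {p : S → ℝ}

theorem dirichlet_sub_const (G : Matrix S S ℝ) (p f : S → ℝ) (c : ℝ) :
    dirichlet G p (fun s => f s - c) = dirichlet G p f := by
  simp only [dirichlet, sub_sub_sub_cancel_right]

theorem semigroup_zero [DecidableEq S] (G : Matrix S S ℝ) (f : S → ℝ) : semigroup G 0 f = f := by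
  rw [semigroup, zero_smul, mexp_zero, Matrix.one_mulVec]

theorem hasDerivAt_semigroup [DecidableEq S] (G : Matrix S S ℝ) (f : S → ℝ) (t : ℝ) (s : S) :
    HasDerivAt (fun t => semigroup G t f s) (G.mulVec (semigroup G t f) s) t := by
  rw [semigroup, Matrix.mulVec_mulVec]
  exact HasDerivAt.fun_sum fun r _ => (hasDerivAt_mexp G t s r).mul_const _

namespace IsReversibleGenerator

theorem dirichlet_nonneg (h : IsReversibleGenerator G p) (f : S → ℝ) : 0 ≤ dirichlet G p f := by
  refine div_nonneg (Finset.sum_nonneg fun s _ => Finset.sum_nonneg fun r _ => ?_) zero_le_two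
  by_cases hsr : s = r
  · rw [hsr, sub_self, zero_pow two_ne_zero, mul_zero]
  · exact mul_nonneg (mul_nonneg (h.pos s).le (h.offDiag_nonneg s r hsr)) (sq_nonneg _)

theorem dirichlet_le_of_abs_sub_le (h : IsReversibleGenerator G p) {f g : S → ℝ}
    (hfg : ∀ s r, |f r - f s| ≤ |g r - g s|) : dirichlet G p f ≤ dirichlet G p g := by
  refine div_le_div_of_nonneg_right
    (Finset.sum_le_sum fun s _ => Finset.sum_le_sum fun r _ => ?_) zero_le_two
  by_cases hsr : s = r
  · rw [hsr, sub_self, sub_self]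
  · exact mul_le_mul_of_nonneg_left (sq_le_sq.2 (hfg s r))
      (mul_nonneg (h.pos s).le (h.offDiag_nonneg s r hsr))

theorem sum_mul_mulVec_comm (h : IsReversibleGenerator G p) (f g : S → ℝ) :
    ∑ s, p s * f s * G.mulVec g s = ∑ s, p s * g s * G.mulVec f s := by
  simp only [Matrix.mulVec, dotProduct, Finset.mul_sum]
  rw [Finset.sum_comm]
  refine Finset.sum_congr rfl fun s _ => Finset.sum_congr rfl fun r _ => ?_
  linear_combination (f r * g s) * h.balance r s

theorem sum_mul_mulVec_self (h : IsReversibleGenerator G p) (f : S → ℝ) :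
    ∑ s, p s * f s * G.mulVec f s = -dirichlet G p f := by
  have hrow : ∑ s, ∑ r, p s * G s r * f s ^ 2 = 0 := by
    refine Finset.sum_eq_zero fun s _ => ?_
    rw [← Finset.sum_mul, ← Finset.mul_sum, h.row_sum, mul_zero, zero_mul]
  have hcol : ∑ s, ∑ r, p s * G s r * f r ^ 2 = 0 := by
    rw [Finset.sum_comm, ← hrow]
    refine Finset.sum_congr rfl fun s _ => Finset.sum_congr rfl fun r _ => ?_
    rw [h.balance]
  have hexpand : ∑ s, ∑ r, p s * G s r * (f r - f s) ^ 2 =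
      ∑ s, ∑ r, p s * G s r * f r ^ 2 + ∑ s, ∑ r, p s * G s r * f s ^ 2
        - 2 * ∑ s, ∑ r, p s * f s * (G s r * f r) := by
    simp only [Finset.mul_sum, ← Finset.sum_add_distrib, ← Finset.sum_sub_distrib]
    exact Finset.sum_congr rfl fun s _ => Finset.sum_congr rfl fun r _ => by ring
  simp only [dirichlet, Matrix.mulVec, dotProduct, Finset.mul_sum]
  rw [hexpand, hrow, hcol]
  ring

variable [DecidableEq S]

theorem semigroup_const (h : IsReversibleGenerator G p) (t c : ℝ) :
    semigroup G t (fun _ => c) = fun _ => c := by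
  refine mexp_mulVec_of_mulVec_eq_zero (funext fun s => ?_)
  simp only [Matrix.mulVec, dotProduct, Matrix.smul_apply, smul_eq_mul, Pi.zero_apply]
  rw [← Finset.sum_mul, ← Finset.mul_sum, h.row_sum, mul_zero, zero_mul]

theorem mexp_balance (h : IsReversibleGenerator G p) (t : ℝ) (s r : S) :
    p s * mexp (t • G) s r = p r * mexp (t • G) r s := by
  refine mexp_detailed_balance (fun i j => ?_) s r
  simp only [Matrix.smul_apply, smul_eq_mul]
  linear_combination t * h.balance i j

theorem mexp_row_sum (h : IsReversibleGenerator G p) (t : ℝ) (s : S) :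
    ∑ r, mexp (t • G) s r = 1 := by
  simpa only [semigroup, Matrix.mulVec, dotProduct, mul_one] using
    congrFun (h.semigroup_const t 1) s

theorem mexp_nonneg (h : IsReversibleGenerator G p) {t : ℝ} (ht : 0 ≤ t) (s r : S) :
    0 ≤ mexp (t • G) s r :=
  mexp_nonneg_of_offDiag_nonneg (fun i j hij => mul_nonneg ht (h.offDiag_nonneg i j hij)) s r

theorem mean_semigroup (h : IsReversibleGenerator G p) (t : ℝ) (f : S → ℝ) :
    mean p (semigroup G t f) = mean p f := by
  simp only [mean, semigroup, Matrix.mulVec, dotProduct, Finset.mul_sum]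
  rw [Finset.sum_comm]
  refine Finset.sum_congr rfl fun r _ => ?_
  calc _ = ∑ s, p r * f r * mexp (t • G) r s :=
        Finset.sum_congr rfl fun s _ => by linear_combination f r * h.mexp_balance t s r
    _ = _ := by rw [← Finset.mul_sum, h.mexp_row_sum, mul_one]

theorem hasDerivAt_sqNorm_semigroup (h : IsReversibleGenerator G p) (f : S → ℝ) (t : ℝ) :
    HasDerivAt (fun t => sqNorm p (semigroup G t f)) (-2 * dirichlet G p (semigroup G t f)) t := by
  have hsum : HasDerivAt (fun t => sqNorm p (semigroup G t f))
      (∑ s, p s * (2 * semigroup G t f s * G.mulVec (semigroup G t f) s)) t :=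
    HasDerivAt.fun_sum fun s _ => by
      simpa using ((hasDerivAt_semigroup G f t s).pow 2).const_mul (p s)
  convert hsum using 1
  rw [neg_mul, ← mul_neg, ← h.sum_mul_mulVec_self, Finset.mul_sum]
  exact Finset.sum_congr rfl fun s _ => by ring

theorem antitone_sqNorm_semigroup (h : IsReversibleGenerator G p) (f : S → ℝ) :
    Antitone fun t => sqNorm p (semigroup G t f) :=
  antitone_of_hasDerivAt_nonpos (h.hasDerivAt_sqNorm_semigroup f) fun _ =>
    mul_nonpos_of_nonpos_of_nonneg (by norm_num) (h.dirichlet_nonneg _)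

theorem hasDerivAt_dirichlet_semigroup (h : IsReversibleGenerator G p) (f : S → ℝ) (t : ℝ) :
    HasDerivAt (fun t => dirichlet G p (semigroup G t f))
      (-2 * sqNorm p (G.mulVec (semigroup G t f))) t := by
  have hgen (s : S) : HasDerivAt (fun t => G.mulVec (semigroup G t f) s)
      (G.mulVec (G.mulVec (semigroup G t f)) s) t :=
    HasDerivAt.fun_sum fun r _ => (hasDerivAt_semigroup G f t r).const_mul _
  have hform : (fun t => dirichlet G p (semigroup G t f)) =
      fun t => -∑ s, p s * semigroup G t f s * G.mulVec (semigroup G t f) s := by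
    ext t; rw [h.sum_mul_mulVec_self, neg_neg]
  have hsum : HasDerivAt (fun t => -∑ s, p s * semigroup G t f s * G.mulVec (semigroup G t f) s)
      (-∑ s, (p s * G.mulVec (semigroup G t f) s * G.mulVec (semigroup G t f) s +
        p s * semigroup G t f s * G.mulVec (G.mulVec (semigroup G t f)) s)) t :=
    (HasDerivAt.fun_sum fun s _ =>
      ((hasDerivAt_semigroup G f t s).const_mul (p s)).mul (hgen s)).neg
  rw [hform]
  convert hsum using 1
  rw [Finset.sum_add_distrib, h.sum_mul_mulVec_comm (semigroup G t f), ← Finset.sum_add_distrib,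
    sqNorm, Finset.mul_sum, ← Finset.sum_neg_distrib]
  exact Finset.sum_congr rfl fun s _ => by ring

theorem antitone_dirichlet_semigroup (h : IsReversibleGenerator G p) (f : S → ℝ) :
    Antitone fun t => dirichlet G p (semigroup G t f) :=
  antitone_of_hasDerivAt_nonpos (h.hasDerivAt_dirichlet_semigroup f) fun _ =>
    mul_nonpos_of_nonpos_of_nonneg (by norm_num) (sqNorm_nonneg (fun s => (h.pos s).le) _)

theorem sqNorm_sub_le_sqNorm_semigroup (h : IsReversibleGenerator G p) (f : S → ℝ) {t : ℝ}
    (ht : 0 ≤ t) : sqNorm p f - 2 * t * dirichlet G p f ≤ sqNorm p (semigroup G t f) := by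
  have hder (t : ℝ) : HasDerivAt
      (fun t => sqNorm p (semigroup G t f) + 2 * t * dirichlet G p f)
      (-2 * dirichlet G p (semigroup G t f) + 2 * dirichlet G p f) t := by
    have hlin : HasDerivAt (fun t : ℝ => 2 * t * dirichlet G p f) (2 * dirichlet G p f) t := by
      simpa using ((hasDerivAt_id t).const_mul 2).mul_const (dirichlet G p f)
    exact (h.hasDerivAt_sqNorm_semigroup f t).add hlin
  have hmono : MonotoneOn (fun t => sqNorm p (semigroup G t f) + 2 * t * dirichlet G p f)
      (Set.Ici 0) := by
    refine monotoneOn_of_hasDerivWithinAt_nonneg (convex_Ici 0)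
      (fun t _ => (hder t).continuousAt.continuousWithinAt)
      (fun t _ => (hder t).hasDerivWithinAt) fun t ht => ?_
    have := h.antitone_dirichlet_semigroup f (show 0 ≤ t from interior_subset ht)
    simp only [semigroup_zero] at this
    linarith
  have := hmono (Set.mem_Ici.2 le_rfl) (Set.mem_Ici.2 ht) ht
  simp only [semigroup_zero] at this
  linarith

-- Cauchy–Schwarz against the signed kernel `e^{tG} - 1 ⊗ p`; reversibility bounds its columns
-- by its rows, which is what the total variation hypothesis controls.
theorem sqNorm_semigroup_le_of_tv_le (h : IsReversibleGenerator G p) {t δ : ℝ}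
    (hmix : ∀ s, tv (mexp (t • G) s) p ≤ δ) {f : S → ℝ} (hf : mean p f = 0) :
    sqNorm p (semigroup G t f) ≤ (2 * δ) ^ 2 * sqNorm p f := by
  set k : S → S → ℝ := fun s r => |mexp (t • G) s r - p r|
  have hk (s r : S) : 0 ≤ k s r := abs_nonneg _
  have hrow (s : S) : ∑ r, k s r ≤ 2 * δ := by
    have hhalf : (∑ r, k s r) / 2 ≤ δ := hmix s
    linarith
  have hsymm (s r : S) : p s * k s r = p r * k r s := by
    change p s * |mexp (t • G) s r - p r| = p r * |mexp (t • G) r s - p s|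
    nth_rw 1 [← abs_of_pos (h.pos s)]
    nth_rw 2 [← abs_of_pos (h.pos r)]
    rw [← abs_mul, ← abs_mul, mul_sub, mul_sub, h.mexp_balance, mul_comm (p s) (p r)]
  have hpointwise (s : S) : semigroup G t f s ^ 2 ≤ 2 * δ * ∑ r, k s r * f r ^ 2 := by
    have hsemi : semigroup G t f s = ∑ r, (mexp (t • G) s r - p r) * f r := by
      have hzero : ∑ r, p r * f r = 0 := hf
      simp only [sub_mul, Finset.sum_sub_distrib, hzero, sub_zero]
      rfl
    have hterm (r : S) : 0 ≤ k s r * f r ^ 2 := mul_nonneg (hk s r) (sq_nonneg _)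
    refine le_trans ?_ (mul_le_mul_of_nonneg_right (hrow s) (Finset.sum_nonneg fun r _ => hterm r))
    rw [hsemi]
    refine Finset.sum_sq_le_sum_mul_sum_of_sq_le_mul _ (fun r _ => hk s r) (fun r _ => hterm r)
      fun r _ => le_of_eq ?_
    rw [mul_pow, ← sq_abs (mexp (t • G) s r - p r), sq, mul_assoc]
  calc sqNorm p (semigroup G t f)
      ≤ ∑ s, p s * (2 * δ * ∑ r, k s r * f r ^ 2) :=
        Finset.sum_le_sum fun s _ => mul_le_mul_of_nonneg_left (hpointwise s) (h.pos s).le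
    _ = ∑ r, 2 * δ * (p r * f r ^ 2) * ∑ s, k r s := by
        simp only [Finset.mul_sum]
        rw [Finset.sum_comm]
        exact Finset.sum_congr rfl fun r _ => Finset.sum_congr rfl fun s _ => by
          linear_combination 2 * δ * f r ^ 2 * hsymm s r
    _ ≤ ∑ r, 2 * δ * (p r * f r ^ 2) * (2 * δ) := by
        refine Finset.sum_le_sum fun r _ => mul_le_mul_of_nonneg_left (hrow r) ?_
        have hδ : 0 ≤ 2 * δ := (Finset.sum_nonneg fun s _ => hk r s).trans (hrow r)
        exact mul_nonneg hδ (mul_nonneg (h.pos r).le (sq_nonneg _))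
    _ = (2 * δ) ^ 2 * sqNorm p f := by
        rw [sqNorm, Finset.mul_sum]
        exact Finset.sum_congr rfl fun r _ => by ring

theorem variance_le_of_tv_le (h : IsReversibleGenerator G p) {t δ : ℝ} (ht : 0 ≤ t)
    (hmix : ∀ s, tv (mexp (t • G) s) p ≤ δ) (f : S → ℝ) :
    (1 - (2 * δ) ^ 2) * variance p f ≤ 2 * t * dirichlet G p f := by
  have hcentred : mean p (fun s => f s - mean p f) = 0 := by
    rw [mean_sub_const h.sum_one, sub_self]
  have hupper := h.sqNorm_semigroup_le_of_tv_le hmix hcentred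
  have hlower := h.sqNorm_sub_le_sqNorm_semigroup (fun s => f s - mean p f) ht
  rw [dirichlet_sub_const] at hlower
  rw [variance]
  linarith

theorem variance_semigroup_le (h : IsReversibleGenerator G p) {A : ℝ} (hA : 0 < A)
    (hgap : ∀ f, variance p f ≤ A * dirichlet G p f) (f : S → ℝ) {t τ : ℝ} (hτ : 0 ≤ τ) :
    variance p (semigroup G (t + τ) f) ≤
      Real.exp (-(2 * τ / A)) * variance p (semigroup G t f) := by
  have hvar (t : ℝ) : variance p (semigroup G t f) =
      sqNorm p (semigroup G t f) - mean p f ^ 2 := by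
    rw [variance_eq_sqNorm_sub h.sum_one, h.mean_semigroup]
  have hder (t : ℝ) : HasDerivAt (fun t => variance p (semigroup G t f) * Real.exp (2 * t / A))
      (-2 * dirichlet G p (semigroup G t f) * Real.exp (2 * t / A) +
        variance p (semigroup G t f) * (Real.exp (2 * t / A) * (2 * 1 / A))) t := by
    simp only [hvar]
    exact ((h.hasDerivAt_sqNorm_semigroup f t).sub_const _).mul
      ((((hasDerivAt_id t).const_mul 2).div_const A).exp)
  have hanti : Antitone fun t => variance p (semigroup G t f) * Real.exp (2 * t / A) :=
    antitone_of_hasDerivAt_nonpos hder fun t => by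
      have hfactor : -2 * dirichlet G p (semigroup G t f) * Real.exp (2 * t / A) +
          variance p (semigroup G t f) * (Real.exp (2 * t / A) * (2 * 1 / A)) =
          Real.exp (2 * t / A) * (2 / A) *
            (variance p (semigroup G t f) - A * dirichlet G p (semigroup G t f)) := by
        field_simp
        ring
      rw [hfactor]
      exact mul_nonpos_of_nonneg_of_nonpos (by positivity) (by simpa using hgap _)
  have hle := hanti (show t ≤ t + τ by linarith)
  simp only [mul_add, add_div, Real.exp_add, ← mul_assoc] at hle
  rw [mul_right_comm] at hle
  rw [Real.exp_neg, inv_mul_eq_div, le_div_iff₀ (Real.exp_pos _)]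
  exact le_of_mul_le_mul_right hle (Real.exp_pos _)

theorem mul_semigroup_single (h : IsReversibleGenerator G p) (t : ℝ) (s r : S) :
    p r * semigroup G t (Pi.single s (p s)⁻¹) r = mexp (t • G) s r := by
  have hs := (h.pos s).ne'
  have hcol : semigroup G t (Pi.single s (p s)⁻¹) r = mexp (t • G) r s * (p s)⁻¹ := by
    simp [semigroup]
  rw [hcol, ← mul_assoc, ← h.mexp_balance, mul_right_comm, mul_inv_cancel₀ hs, one_mul]

theorem mean_single (h : IsReversibleGenerator G p) (s : S) :
    mean p (Pi.single s (p s)⁻¹) = 1 := by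
  simp [mean, Pi.single_apply, (h.pos s).ne']

theorem sqNorm_single (h : IsReversibleGenerator G p) (s : S) :
    sqNorm p (Pi.single s (p s)⁻¹) = (p s)⁻¹ := by
  have := (h.pos s).ne'
  simp only [sqNorm, Pi.single_apply, ite_pow, mul_ite, ne_eq, OfNat.ofNat_ne_zero,
    not_false_eq_true, zero_pow, mul_zero, Finset.sum_ite_eq', Finset.mem_univ, if_true]
  field_simp

theorem semigroup_single_nonneg (h : IsReversibleGenerator G p) {t : ℝ} (ht : 0 ≤ t) (s r : S) :
    0 ≤ semigroup G t (Pi.single s (p s)⁻¹) r :=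
  nonneg_of_mul_nonneg_right ((h.mul_semigroup_single t s r).symm ▸ h.mexp_nonneg ht s r) (h.pos r)

theorem four_mul_tv_sq_le (h : IsReversibleGenerator G p) (t : ℝ) (s : S) :
    4 * tv (mexp (t • G) s) p ^ 2 ≤ variance p (semigroup G t (Pi.single s (p s)⁻¹)) := by
  have hmean : mean p (semigroup G t (Pi.single s (p s)⁻¹)) = 1 := by
    rw [h.mean_semigroup, h.mean_single]
  have := four_mul_tv_sq_le_variance (fun r => (h.pos r).le) h.sum_one hmean
  simpa only [h.mul_semigroup_single] using this

end IsReversibleGenerator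

end ReversibleChain

/-! ### Mixing from an energy-weighted Poincaré inequality -/

section EnergyPoincare

variable {S : Type*} [Fintype S] {G : Matrix S S ℝ} {p : S → ℝ}

/-- The Poincaré inequality with constant `A` in which the variance is replaced by the
second moment weighted by the energy `D`, for functions vanishing at the ground state `o`. -/
def EnergyPoincare (G : Matrix S S ℝ) (p D : S → ℝ) (o : S) (A : ℝ) : Prop :=
  ∀ f : S → ℝ, f o = 0 → ∑ s, p s * D s * f s ^ 2 ≤ A * dirichlet G p f

theorem EnergyPoincare.mono {D : S → ℝ} {o : S} {A B : ℝ} (hA : EnergyPoincare G p D o A)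
    (h : IsReversibleGenerator G p) (hAB : A ≤ B) : EnergyPoincare G p D o B :=
  fun f hf => (hA f hf).trans (mul_le_mul_of_nonneg_right hAB (h.dirichlet_nonneg f))

theorem le_mul_exp_one_of_mul_log_le {u u' : ℝ → ℝ} {a K R : ℝ} (ha : 0 < a) (hK : 0 < K)
    (hR : 1 ≤ R) (hder : ∀ t, HasDerivAt u (u' t) t) (hanti : Antitone u)
    (hu0 : u 0 ≤ K * Real.exp R)
    (hdecay : ∀ t, 0 ≤ t → K ≤ u t → u t * Real.log (u t / K) ≤ -(a * u' t)) :
    u (a * Real.log R) ≤ K * Real.exp 1 := by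
  set T := a * Real.log R with hT
  have hT0 : 0 ≤ T := mul_nonneg ha.le (Real.log_nonneg hR)
  by_contra! hcon
  have hpos (t : ℝ) (ht : t ≤ T) : 0 < u t :=
    (mul_pos hK (Real.exp_pos 1)).trans (hcon.trans_le (hanti ht))
  have hbig (t : ℝ) (ht : t ≤ T) : K ≤ u t :=
    (le_mul_of_one_le_right hK.le (Real.one_le_exp zero_le_one)).trans
      (hcon.le.trans (hanti ht))
  have hder_log (t : ℝ) (ht : t ∈ Set.Icc 0 T) :
      HasDerivAt (fun t => Real.log (u t / K) * Real.exp (t / a))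
        (u' t / K / (u t / K) * Real.exp (t / a) +
          Real.log (u t / K) * (Real.exp (t / a) * (1 / a))) t :=
    (((hder t).div_const K).log (div_pos (hpos t ht.2) hK).ne').mul
      (((hasDerivAt_id t).div_const a).exp)
  have hanti_log : AntitoneOn (fun t => Real.log (u t / K) * Real.exp (t / a)) (Set.Icc 0 T) := by
    refine antitoneOn_of_hasDerivWithinAt_nonpos (convex_Icc 0 T)
      (fun t ht => (hder_log t ht).continuousAt.continuousWithinAt)
      (fun t ht => (hder_log t (interior_subset ht)).hasDerivWithinAt) fun t ht => ?_
    have ⟨ht0, htT⟩ := interior_subset ht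
    have hut := hpos t htT
    have hfactor : u' t / K / (u t / K) * Real.exp (t / a) +
        Real.log (u t / K) * (Real.exp (t / a) * (1 / a)) =
        Real.exp (t / a) / (u t * a) * (u t * Real.log (u t / K) + a * u' t) := by
      field_simp
      ring
    rw [hfactor]
    exact mul_nonpos_of_nonneg_of_nonpos (by positivity) (by linarith [hdecay t ht0 (hbig t htT)])
  have hends := hanti_log (Set.left_mem_Icc.2 hT0) (Set.right_mem_Icc.2 hT0) hT0
  have hexpT : Real.exp (T / a) = R := by
    rw [hT, mul_div_cancel_left₀ _ ha.ne', Real.exp_log (zero_lt_one.trans_le hR)]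
  have hstart : Real.log (u 0 / K) ≤ R := by
    rwa [Real.log_le_iff_le_exp (div_pos (hpos 0 hT0) hK), div_le_iff₀' hK]
  have hend : 1 < Real.log (u T / K) := by
    rwa [Real.lt_log_iff_exp_lt (div_pos (hpos T le_rfl) hK), lt_div_iff₀' hK]
  simp only [zero_div, Real.exp_zero, mul_one, hexpT] at hends
  nlinarith

namespace IsReversibleGenerator

variable {D : S → ℝ} {o : S} {A : ℝ}

theorem variance_le_of_energyPoincare (h : IsReversibleGenerator G p)
    (hD : ∀ s, s ≠ o → 1 ≤ D s) (hA : EnergyPoincare G p D o A) (f : S → ℝ) :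
    variance p f ≤ A * dirichlet G p f :=
  calc variance p f ≤ sqNorm p fun s => f s - f o := variance_le_sqNorm_sub_const h.sum_one f _
    _ ≤ ∑ s, p s * D s * (f s - f o) ^ 2 := by
        refine Finset.sum_le_sum fun s _ => ?_
        by_cases hs : s = o
        · simp [hs]
        · exact mul_le_mul_of_nonneg_right (le_mul_of_one_le_right (h.pos s).le (hD s hs))
            (sq_nonneg _)
    _ ≤ A * dirichlet G p f := by
        simpa only [dirichlet_sub_const] using hA (fun s => f s - f o) (sub_self _)

theorem mul_le_one_of_mean_eq_one (h : IsReversibleGenerator G p) {g : S → ℝ}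
    (hg : ∀ s, 0 ≤ g s) (hg1 : mean p g = 1) (s : S) : p s * g s ≤ 1 :=
  hg1 ▸ Finset.single_le_sum (f := fun s => p s * g s)
    (fun s _ => mul_nonneg (h.pos s).le (hg s)) (Finset.mem_univ s)

theorem sqNorm_sub_le_sqNorm_posPart (h : IsReversibleGenerator G p) {g : S → ℝ}
    (hg : ∀ s, 0 ≤ g s) {c : ℝ} (hc : 0 ≤ c) :
    sqNorm p g - 2 * c * mean p g ≤ sqNorm p fun s => max (g s - c) 0 := by
  simp only [sqNorm, mean, Finset.mul_sum, ← Finset.sum_sub_distrib]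
  refine Finset.sum_le_sum fun s _ => ?_
  have hpoint : g s ^ 2 - 2 * c * g s ≤ max (g s - c) 0 ^ 2 := by
    rcases le_total (g s) c with hs | hs
    · rw [max_eq_right (sub_nonpos.2 hs)]
      nlinarith [hg s]
    · rw [max_eq_left (sub_nonneg.2 hs)]
      nlinarith
  linarith [mul_le_mul_of_nonneg_left hpoint (h.pos s).le]

theorem dirichlet_posPart_le (h : IsReversibleGenerator G p) (g : S → ℝ) (c : ℝ) :
    dirichlet G p (fun s => max (g s - c) 0) ≤ dirichlet G p g :=
  h.dirichlet_le_of_abs_sub_le fun s r => by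
    simpa only [sub_sub_sub_cancel_right] using abs_max_sub_max_le_abs (g r - c) (g s - c) 0

-- A probability density exceeds the level `c` only where `p s ≤ 1 / c`, that is, where the
-- energy is at least `log (c / Z) / β`; the truncation at `c` still carries half of the
-- squared norm.
theorem mul_log_le_of_energyPoincare (h : IsReversibleGenerator G p) {β Z : ℝ} (hβ : 0 < β)
    (hZ : 0 < Z) (hp : ∀ s, p s = Real.exp (-β * D s) / Z) (ho : D o = 0)
    (hA : EnergyPoincare G p D o A) (hA0 : 0 < A) {g : S → ℝ} (hg : ∀ s, 0 ≤ g s)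
    (hg1 : mean p g = 1) (hlarge : 4 * Z ≤ sqNorm p g) :
    sqNorm p g * Real.log (sqNorm p g / (4 * Z)) ≤ 2 * β * A * dirichlet G p g := by
  set u := sqNorm p g
  set c := u / 4 with hc
  set k : S → ℝ := fun s => max (g s - c) 0
  have hu0 : 0 < u := by linarith
  have hc0 : 0 < c := by linarith
  have hpc (s : S) (hs : c ≤ g s) : p s * c ≤ 1 :=
    (mul_le_mul_of_nonneg_left hs (h.pos s).le).trans (h.mul_le_one_of_mean_eq_one hg hg1 s)
  have hko : k o = 0 := by
    have hgo := h.mul_le_one_of_mean_eq_one hg hg1 o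
    rw [hp, ho, mul_zero, Real.exp_zero, one_div_mul_eq_div, div_le_one hZ] at hgo
    exact max_eq_right (by linarith)
  have henergy (s : S) (hs : c ≤ g s) : Real.log (u / (4 * Z)) / β ≤ D s := by
    have hdensity := hpc s hs
    rw [hp, div_mul_eq_mul_div, div_le_one hZ, neg_mul, Real.exp_neg, inv_mul_eq_div,
      div_le_iff₀ (Real.exp_pos _)] at hdensity
    rw [div_le_iff₀' hβ, Real.log_le_iff_le_exp (by positivity), div_le_iff₀ (by positivity)]
    linarith
  have hweighted : Real.log (u / (4 * Z)) / β * sqNorm p k ≤ ∑ s, p s * D s * k s ^ 2 := by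
    rw [sqNorm, Finset.mul_sum]
    refine Finset.sum_le_sum fun s _ => ?_
    rcases le_total (g s) c with hs | hs
    · have hks : k s = 0 := max_eq_right (sub_nonpos.2 hs)
      simp [hks]
    · rw [mul_comm (p s) (D s), mul_assoc]
      exact mul_le_mul_of_nonneg_right (henergy s hs) (mul_nonneg (h.pos s).le (sq_nonneg _))
  have hhalf : u / 2 ≤ sqNorm p k := by
    have := h.sqNorm_sub_le_sqNorm_posPart hg hc0.le
    rw [hg1] at this
    linarith
  have hlog : 0 ≤ Real.log (u / (4 * Z)) :=
    Real.log_nonneg ((one_le_div (by positivity)).2 hlarge)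
  have hchain : Real.log (u / (4 * Z)) / β * (u / 2) ≤ A * dirichlet G p g :=
    (mul_le_mul_of_nonneg_left hhalf (div_nonneg hlog hβ.le)).trans <| hweighted.trans <|
      (hA k hko).trans (mul_le_mul_of_nonneg_left (h.dirichlet_posPart_le g c) hA0.le)
  rw [div_mul_eq_mul_div, div_le_iff₀ hβ] at hchain
  linarith

variable [DecidableEq S]

theorem sqNorm_semigroup_single_le (h : IsReversibleGenerator G p) {β Z M : ℝ} (hβ : 0 < β)
    (hZ : 0 < Z) (hp : ∀ s, p s = Real.exp (-β * D s) / Z) (ho : D o = 0)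
    (hM : ∀ s, D s ≤ M) (hM1 : 1 ≤ β * M) (hA0 : 0 < A) (hA : EnergyPoincare G p D o A) (s : S) :
    sqNorm p (semigroup G (β * A * Real.log (β * M)) (Pi.single s (p s)⁻¹)) ≤
      4 * Z * Real.exp 1 := by
  refine le_mul_exp_one_of_mul_log_le (mul_pos hβ hA0) (mul_pos four_pos hZ) hM1
    (h.hasDerivAt_sqNorm_semigroup _) (h.antitone_sqNorm_semigroup _) ?_ fun t ht hlarge => ?_
  · have hexp : Real.exp (β * D s) ≤ Real.exp (β * M) :=
      Real.exp_le_exp.2 (mul_le_mul_of_nonneg_left (hM s) hβ.le)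
    rw [semigroup_zero, h.sqNorm_single, hp, inv_div, neg_mul, Real.exp_neg, div_inv_eq_mul]
    nlinarith [Real.exp_pos (β * D s)]
  · have hmean := (h.mean_semigroup t (Pi.single s (p s)⁻¹)).trans (h.mean_single s)
    have := h.mul_log_le_of_energyPoincare hβ hZ hp ho hA hA0 (h.semigroup_single_nonneg ht s)
      hmean hlarge
    linarith

-- The squared norm of the density falls below a constant in a time of order
-- `β A log (β M)`; from then on the spectral gap `1 / A` takes over.
theorem tv_sq_le_of_energyPoincare (h : IsReversibleGenerator G p) {β Z M : ℝ} (hβ : 0 < β)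
    (hZ : 0 < Z) (hp : ∀ s, p s = Real.exp (-β * D s) / Z) (ho : D o = 0)
    (hD : ∀ s, s ≠ o → 1 ≤ D s) (hM : ∀ s, D s ≤ M) (hM1 : 1 ≤ β * M) (hA0 : 0 < A)
    (hA : EnergyPoincare G p D o A) {τ : ℝ} (hτ : 0 ≤ τ) (s : S) :
    tv (mexp ((β * A * Real.log (β * M) + τ) • G) s) p ^ 2 ≤ Z * Real.exp (1 - 2 * τ / A) := by
  set T := β * A * Real.log (β * M)
  set φ : S → ℝ := Pi.single s (p s)⁻¹
  have hT : variance p (semigroup G T φ) ≤ 4 * Z * Real.exp 1 := by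
    rw [variance_eq_sqNorm_sub h.sum_one]
    linarith [h.sqNorm_semigroup_single_le hβ hZ hp ho hM hM1 hA0 hA s,
      sq_nonneg (mean p (semigroup G T φ))]
  have hdecay := (h.variance_semigroup_le hA0 (h.variance_le_of_energyPoincare hD hA) φ hτ).trans
    (mul_le_mul_of_nonneg_left hT (Real.exp_pos _).le)
  rw [sub_eq_add_neg, Real.exp_add]
  linarith [h.four_mul_tv_sq_le (T + τ) s]

theorem tv_lt_of_energyPoincare (h : IsReversibleGenerator G p) {β Z M : ℝ} (hβ : 0 < β)
    (hZ : 0 < Z) (hZ2 : Z ≤ 2) (hp : ∀ s, p s = Real.exp (-β * D s) / Z) (ho : D o = 0)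
    (hD : ∀ s, s ≠ o → 1 ≤ D s) (hM : ∀ s, D s ≤ M) (hM1 : 1 ≤ β * M) (hA0 : 0 < A)
    (hA : EnergyPoincare G p D o A) (s : S) :
    tv (mexp ((β * A * Real.log (β * M) + 3 * A) • G) s) p < 1 / 4 := by
  have htv := h.tv_sq_le_of_energyPoincare hβ hZ hp ho hD hM hM1 hA0 hA
    (mul_nonneg zero_le_three hA0.le) s
  have hexponent : 1 - 2 * (3 * A) / A = -5 := by field_simp; norm_num
  have hexp : 32 < Real.exp 5 := by
    have hpow : Real.exp 5 = Real.exp 1 ^ 5 := by rw [← Real.exp_nat_mul]; norm_num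
    have htwo : (2 : ℝ) < Real.exp 1 := by linarith [Real.exp_one_gt_d9]
    calc (32 : ℝ) = 2 ^ 5 := by norm_num
      _ < Real.exp 1 ^ 5 := pow_lt_pow_left₀ htwo zero_le_two (by norm_num)
      _ = Real.exp 5 := hpow.symm
  rw [hexponent, Real.exp_neg, ← div_eq_mul_inv] at htv
  have hsmall : Z / Real.exp 5 < (1 / 4) ^ 2 := by
    rw [div_lt_iff₀ (Real.exp_pos 5)]
    linarith
  exact lt_of_pow_lt_pow_left₀ 2 (by norm_num) (htv.trans_lt hsmall)

end IsReversibleGenerator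

end EnergyPoincare

/-! ### Defects, rectangle flips and the Gibbs measure -/

section Defects

variable {L : ℕ}

/-- The spin at `(i, j)` is `-1`; the box occupies `1 ≤ i, j ≤ L` and all other sites are plus. -/
def minusAt (σ : Config L) (i j : ℕ) : Bool :=
  decide (∃ k : Fin L × Fin L, (k.1 : ℕ) + 1 = i ∧ (k.2 : ℕ) + 1 = j ∧ σ k = false)

/-- The plaquette with lower left corner `(i, j)` is a defect. -/
def isDefect (σ : Config L) (i j : ℕ) : Bool :=
  (minusAt σ i j ^^ minusAt σ (i + 1) j) ^^ (minusAt σ i (j + 1) ^^ minusAt σ (i + 1) (j + 1))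

/-- The plaquettes `[0:L]²` in natural number coordinates. -/
def grid (L : ℕ) : Finset (ℕ × ℕ) := Finset.range (L + 1) ×ˢ Finset.range (L + 1)

/-- The set of defects in natural number coordinates. -/
def defectSet (σ : Config L) : Finset (ℕ × ℕ) := (grid L).filter fun z => isDefect σ z.1 z.2 = true

/-- The number of defects; it differs from the Hamiltonian by a constant. -/
def energy (σ : Config L) : ℕ := (defectSet σ).card

/-- Site `i` lies strictly above exactly one of the plaquettes `a` and `u`, that is, between
them. -/
def between (a u i : ℕ) : Bool := decide (a < i) ^^ decide (u < i)

/-- Flip all spins in the rectangle with opposite plaquette corners `(a, b)` and `(u, v)`, which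
flips exactly the four corner plaquettes. -/
def flipRect (σ : Config L) (a u b v : ℕ) : Config L :=
  fun k => σ k ^^ (between a u (k.1 + 1) && between b v (k.2 + 1))

/-- The all-plus configuration, the ground state. -/
def allPlus (L : ℕ) : Config L := fun _ => true

theorem mem_grid {z : ℕ × ℕ} : z ∈ grid L ↔ z.1 ≤ L ∧ z.2 ≤ L := by
  simp [grid]

theorem mem_defectSet {σ : Config L} {z : ℕ × ℕ} :
    z ∈ defectSet σ ↔ (z.1 ≤ L ∧ z.2 ≤ L) ∧ isDefect σ z.1 z.2 = true := by
  simp [defectSet, mem_grid]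

theorem minusAt_succ (σ : Config L) (k : Fin L × Fin L) :
    minusAt σ (k.1 + 1) (k.2 + 1) = !(σ k) := by
  rw [minusAt, Bool.eq_iff_iff, decide_eq_true_eq, Bool.not_eq_true']
  constructor
  · rintro ⟨k', hfst, hsnd, hk'⟩
    have hkk' : k' = k := Prod.ext (Fin.ext (by omega)) (Fin.ext (by omega))
    rw [← hkk', hk']
  · exact fun hk => ⟨k, rfl, rfl, hk⟩

theorem minusAt_eq_false {σ : Config L} {i j : ℕ} (h : i = 0 ∨ L < i ∨ j = 0 ∨ L < j) :
    minusAt σ i j = false := by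
  simp only [minusAt, decide_eq_false_iff_not]
  rintro ⟨k, hi, hj, -⟩
  have := k.1.2
  have := k.2.2
  omega

theorem exists_site_or (L i j : ℕ) :
    (∃ k : Fin L × Fin L, i = k.1 + 1 ∧ j = k.2 + 1) ∨ (i = 0 ∨ L < i ∨ j = 0 ∨ L < j) := by
  refine or_iff_not_imp_right.2 fun h => ?_
  push Not at h
  exact ⟨(⟨i - 1, by omega⟩, ⟨j - 1, by omega⟩), by dsimp only; omega, by dsimp only; omega⟩

theorem between_eq_false {a u i : ℕ} (ha : a ≤ L) (hu : u ≤ L) (h : i = 0 ∨ L < i) :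
    between a u i = false := by
  rcases h with h | h
  · simp [between, h]
  · simp [between, ha.trans_lt h, hu.trans_lt h]

theorem minusAt_flipRect (σ : Config L) {a u b v : ℕ} (ha : a ≤ L) (hu : u ≤ L) (hb : b ≤ L)
    (hv : v ≤ L) (i j : ℕ) :
    minusAt (flipRect σ a u b v) i j = (minusAt σ i j ^^ (between a u i && between b v j)) := by
  rcases exists_site_or L i j with ⟨k, rfl, rfl⟩ | h
  · rw [minusAt_succ, minusAt_succ, flipRect, Bool.not_xor]
  · rw [minusAt_eq_false h, minusAt_eq_false h]
    rcases h with h | h | h | h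
    · simp [between_eq_false ha hu (Or.inl h)]
    · simp [between_eq_false ha hu (Or.inr h)]
    · simp [between_eq_false hb hv (Or.inl h)]
    · simp [between_eq_false hb hv (Or.inr h)]

theorem between_xor_succ (a u i : ℕ) :
    (between a u i ^^ between a u (i + 1)) = (decide (i = a) ^^ decide (i = u)) := by
  unfold between
  rcases lt_trichotomy a i with h | h | h <;> rcases lt_trichotomy u i with h' | h' | h' <;> grind

theorem isDefect_flipRect (σ : Config L) {a u b v : ℕ} (ha : a ≤ L) (hu : u ≤ L) (hb : b ≤ L)
    (hv : v ≤ L) (i j : ℕ) :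
    isDefect (flipRect σ a u b v) i j = (isDefect σ i j ^^
      ((decide (i = a) ^^ decide (i = u)) && (decide (j = b) ^^ decide (j = v)))) := by
  rw [← between_xor_succ, ← between_xor_succ]
  simp only [isDefect, minusAt_flipRect σ ha hu hb hv, Bool.and_xor_distrib_left,
    Bool.and_xor_distrib_right, Bool.xor_assoc, Bool.xor_left_comm, Bool.xor_comm]

theorem flipRect_flipRect_add (σ : Config L) (a k u b v : ℕ) :
    flipRect (flipRect σ a k b v) k u b v = flipRect σ a u b v := by
  funext z
  have hadd (i : ℕ) : between a u i = (between a k i ^^ between k u i) := by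
    simp [between]
  simp only [flipRect, hadd, Bool.and_xor_distrib_right, Bool.xor_assoc]

theorem between_comm (a u i : ℕ) : between a u i = between u a i := Bool.xor_comm _ _

theorem flipRect_self (σ : Config L) (a b v : ℕ) : flipRect σ a a b v = σ := by
  funext z; simp [flipRect, between]

theorem flipRect_comm_left (σ : Config L) (a u b v : ℕ) :
    flipRect σ a u b v = flipRect σ u a b v := by
  funext z
  simp only [flipRect, between_comm a u]

theorem flipRect_flipRect (σ : Config L) (a u b v : ℕ) :
    flipRect (flipRect σ a u b v) a u b v = σ := by
  rw [flipRect_comm_left (flipRect σ a u b v), flipRect_flipRect_add, flipRect_self]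

theorem between_succ (a i : ℕ) : between a (a + 1) (i + 1) = decide (i = a) := by
  unfold between
  rcases lt_trichotomy a i with h | h | h <;> grind

theorem flip_eq_flipRect (σ : Config L) (x : Fin L × Fin L) :
    flip L σ x = flipRect σ x.1 (x.1 + 1) x.2 (x.2 + 1) := by
  funext z
  have hz : z = x ↔ (z.1 : ℕ) = x.1 ∧ (z.2 : ℕ) = x.2 := by
    rw [Prod.ext_iff, Fin.ext_iff, Fin.ext_iff]
  simp only [flip, flipRect, between_succ, hz, ← Bool.decide_and]
  split_ifs with h <;> simp [h]

theorem flip_ne (σ : Config L) (x : Fin L × Fin L) : flip L σ x ≠ σ := by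
  intro h
  have := congrFun h x
  simp [flip] at this

theorem flip_flip (σ : Config L) (x : Fin L × Fin L) : flip L (flip L σ x) x = σ := by
  funext z; by_cases h : z = x <;> simp [flip, h]

theorem energy_eq_sum (σ : Config L) :
    energy σ = ∑ z ∈ grid L, (isDefect σ z.1 z.2).toNat := by
  rw [energy, defectSet, Finset.card_filter]
  exact Finset.sum_congr rfl fun z _ => by cases isDefect σ z.1 z.2 <;> simp

theorem energy_flipRect (σ : Config L) {a u b v : ℕ} (ha : a ≤ L) (hu : u ≤ L) (hb : b ≤ L)
    (hv : v ≤ L) (hau : a ≠ u) (hbv : b ≠ v) :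
    energy (flipRect σ a u b v) + 2 * ((isDefect σ a b).toNat + (isDefect σ a v).toNat +
      (isDefect σ u b).toNat + (isDefect σ u v).toNat) = energy σ + 4 := by
  set corners : Finset (ℕ × ℕ) := {a, u} ×ˢ {b, v}
  have hmem (z : ℕ × ℕ) : z ∈ corners ↔ (z.1 = a ∨ z.1 = u) ∧ (z.2 = b ∨ z.2 = v) := by
    simp only [corners, Finset.mem_product, Finset.mem_insert, Finset.mem_singleton]
  have hsub : corners ⊆ grid L := by
    intro z hz
    rw [hmem] at hz
    rw [mem_grid]
    omega
  have hcorner (g : ℕ × ℕ → ℕ) : ∑ z ∈ grid L, (if z ∈ corners then g z else 0) =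
      g (a, b) + g (a, v) + g (u, b) + g (u, v) := by
    rw [← Finset.sum_filter, Finset.filter_mem_eq_inter, Finset.inter_eq_right.2 hsub,
      Finset.sum_product, Finset.sum_pair hau, Finset.sum_pair hbv, Finset.sum_pair hbv]
    ring
  have hpoint : ∑ z ∈ grid L, ((isDefect (flipRect σ a u b v) z.1 z.2).toNat +
      (if z ∈ corners then 2 * (isDefect σ z.1 z.2).toNat else 0)) =
      ∑ z ∈ grid L, ((isDefect σ z.1 z.2).toNat + (if z ∈ corners then 1 else 0)) := by
    refine Finset.sum_congr rfl fun z _ => ?_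
    rw [isDefect_flipRect σ ha hu hb hv]
    simp only [hmem]
    by_cases hza : z.1 = a <;> by_cases hzu : z.1 = u <;> by_cases hzb : z.2 = b <;>
      by_cases hzv : z.2 = v <;> cases hq : isDefect σ z.1 z.2 <;> grind
  rw [Finset.sum_add_distrib, Finset.sum_add_distrib,
    hcorner (fun z => 2 * (isDefect σ z.1 z.2).toNat), hcorner (fun _ => 1), ← energy_eq_sum,
    ← energy_eq_sum] at hpoint
  dsimp only at hpoint
  omega

theorem exists_ne_xor_succ {g : ℕ → Bool} {x n : ℕ} (hx : x ≤ n) (hg0 : g 0 = false)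
    (hgn : g (n + 1) = false) (hgx : (g x ^^ g (x + 1)) = true) :
    ∃ u ≤ n, u ≠ x ∧ (g u ^^ g (u + 1)) = true := by
  by_contra! hcon
  have hstep (i : ℕ) (hi : i ≤ n) (hix : i ≠ x) : g i = g (i + 1) := by
    simpa using hcon i hi hix
  have hleft (i : ℕ) (hi : i ≤ x) : g i = false := by
    induction i with
    | zero => exact hg0
    | succ i ih => rw [← hstep i (by omega) (by omega), ih (by omega)]
  have hright (i : ℕ) (hxi : x < i) (hi : i ≤ n + 1) : g i = false := by
    induction hi using Nat.decreasingInduction with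
    | self => exact hgn
    | of_succ i hi ih => rw [hstep i (by omega) (by omega), ih (by omega)]
  simp [hleft x le_rfl, hright (x + 1) (by omega) (by omega)] at hgx

theorem exists_row_mate {σ : Config L} {x y : ℕ} (hx : x ≤ L) (h : isDefect σ x y = true) :
    ∃ u ≤ L, u ≠ x ∧ isDefect σ u y = true := by
  have hrow (i : ℕ) : isDefect σ i y =
      ((minusAt σ i y ^^ minusAt σ i (y + 1)) ^^
        (minusAt σ (i + 1) y ^^ minusAt σ (i + 1) (y + 1))) := by
    simp only [isDefect, Bool.xor_assoc, Bool.xor_left_comm]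
  simp only [hrow] at h ⊢
  exact exists_ne_xor_succ (g := fun i => minusAt σ i y ^^ minusAt σ i (y + 1)) hx
    (by simp [minusAt_eq_false]) (by simp [minusAt_eq_false]) h

theorem exists_col_mate {σ : Config L} {x y : ℕ} (hy : y ≤ L) (h : isDefect σ x y = true) :
    ∃ v ≤ L, v ≠ y ∧ isDefect σ x v = true :=
  exists_ne_xor_succ (g := fun j => minusAt σ x j ^^ minusAt σ (x + 1) j) hy
    (by simp [minusAt_eq_false]) (by simp [minusAt_eq_false]) h

theorem minusAt_eq_of_isDefect_eq {σ τ : Config L}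
    (h : ∀ i ≤ L, ∀ j ≤ L, isDefect σ i j = isDefect τ i j) (i j : ℕ) :
    minusAt σ i j = minusAt τ i j := by
  induction i generalizing j with
  | zero => simp [minusAt_eq_false]
  | succ i ihi =>
    induction j with
    | zero => simp [minusAt_eq_false]
    | succ j ihj =>
      by_cases hij : i ≤ L ∧ j ≤ L
      · have hdefect := h i hij.1 j hij.2
        rw [isDefect, isDefect, ihi, ihi, ihj] at hdefect
        simpa using hdefect
      · rw [minusAt_eq_false (by omega), minusAt_eq_false (by omega)]

theorem eq_of_isDefect_eq {σ τ : Config L}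
    (h : ∀ i ≤ L, ∀ j ≤ L, isDefect σ i j = isDefect τ i j) : σ = τ := by
  funext k
  simpa only [minusAt_succ, Bool.not_inj_iff] using minusAt_eq_of_isDefect_eq h (k.1 + 1) (k.2 + 1)

theorem isDefect_allPlus (i j : ℕ) : isDefect (allPlus L) i j = false := by
  simp [isDefect, minusAt, allPlus]

theorem energy_allPlus : energy (allPlus L) = 0 := by
  simp [energy_eq_sum, isDefect_allPlus]

theorem eq_allPlus_of_energy_eq_zero {σ : Config L} (h : energy σ = 0) : σ = allPlus L := by
  refine eq_of_isDefect_eq fun i hi j hj => ?_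
  rw [isDefect_allPlus, ← Bool.not_eq_true]
  intro hij
  rw [energy, Finset.card_eq_zero] at h
  exact Finset.eq_empty_iff_forall_notMem.1 h (i, j) (mem_defectSet.2 ⟨⟨hi, hj⟩, hij⟩)

theorem defectSet_nonempty {σ : Config L} (h : σ ≠ allPlus L) : (defectSet σ).Nonempty := by
  rw [← Finset.card_pos]
  exact Nat.pos_of_ne_zero (mt eq_allPlus_of_energy_eq_zero h)

theorem four_le_energy {σ : Config L} (h : σ ≠ allPlus L) : 4 ≤ energy σ := by
  obtain ⟨⟨x, y⟩, hxy⟩ := defectSet_nonempty h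
  obtain ⟨⟨hx, hy⟩, hd⟩ := mem_defectSet.1 hxy
  dsimp only at hx hy hd
  obtain ⟨u, hu, hux, hud⟩ := exists_row_mate hx hd
  obtain ⟨v, hv, hvy, hvd⟩ := exists_col_mate hy hd
  obtain ⟨w, hw, hwy, hwd⟩ := exists_col_mate hy hud
  have hsub : ({(x, y), (u, y), (x, v), (u, w)} : Finset (ℕ × ℕ)) ⊆ defectSet σ := by
    simp only [Finset.insert_subset_iff, Finset.singleton_subset_iff, mem_defectSet]
    exact ⟨⟨⟨hx, hy⟩, hd⟩, ⟨⟨hu, hy⟩, hud⟩, ⟨⟨hx, hv⟩, hvd⟩, ⟨⟨hu, hw⟩, hwd⟩⟩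
  have hcard : ({(x, y), (u, y), (x, v), (u, w)} : Finset (ℕ × ℕ)).card = 4 := by
    rw [Finset.card_insert_of_notMem, Finset.card_insert_of_notMem, Finset.card_insert_of_notMem,
      Finset.card_singleton] <;>
      simp only [Finset.mem_insert, Finset.mem_singleton, Prod.mk.injEq] <;> omega
  exact hcard ▸ Finset.card_le_card hsub

theorem card_grid (L : ℕ) : (grid L).card = (L + 1) ^ 2 := by
  rw [grid, Finset.card_product, Finset.card_range, sq]

theorem energy_le (σ : Config L) : energy σ ≤ (L + 1) ^ 2 :=
  card_grid L ▸ Finset.card_filter_le _ _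

end Defects

section GibbsMeasure

variable {L : ℕ}

theorem spinAt_natCast (σ : Config L) (i j : ℕ) :
    spinAt L σ ((i : ℤ), (j : ℤ)) = if minusAt σ i j = true then -1 else 1 := by
  simp only [spinAt, minusAt, decide_eq_true_eq, Prod.mk.injEq, and_assoc]
  norm_cast

theorem plaq_natCast (σ : Config L) (i j : ℕ) :
    plaq L σ ((i : ℤ), (j : ℤ)) = 1 - 2 * ((isDefect σ i j).toNat : ℝ) := by
  have hright := spinAt_natCast σ (i + 1) j
  have hup := spinAt_natCast σ i (j + 1)
  have hdiag := spinAt_natCast σ (i + 1) (j + 1)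
  push_cast at hright hup hdiag
  rw [plaq, isDefect, spinAt_natCast σ i j, hright, hup, hdiag]
  cases minusAt σ i j <;> cases minusAt σ (i + 1) j <;> cases minusAt σ i (j + 1) <;>
    cases minusAt σ (i + 1) (j + 1) <;> norm_num

theorem plaqSet_eq_image (L : ℕ) :
    plaqSet L = (grid L).image fun z => ((z.1 : ℤ), (z.2 : ℤ)) := by
  ext ⟨a, b⟩
  simp only [plaqSet, grid, Finset.mem_product, Finset.mem_Icc, Finset.mem_image, Finset.mem_range,
    Prod.mk.injEq, Prod.exists]
  constructor
  · rintro ⟨⟨ha0, haL⟩, hb0, hbL⟩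
    exact ⟨a.toNat, b.toNat, by omega, by omega, by omega⟩
  · rintro ⟨i, j, hij, rfl, rfl⟩
    omega

theorem ham_eq (σ : Config L) : ham L σ = energy σ - (L + 1 : ℝ) ^ 2 / 2 := by
  have hinj : Set.InjOn (fun z : ℕ × ℕ => ((z.1 : ℤ), (z.2 : ℤ))) (grid L) :=
    fun z _ w _ h => by simpa [Prod.ext_iff] using h
  rw [ham, plaqSet_eq_image, Finset.sum_image hinj,
    Finset.sum_congr rfl fun z _ => plaq_natCast σ z.1 z.2, Finset.sum_sub_distrib,
    ← Finset.mul_sum, energy_eq_sum, Finset.sum_const, card_grid]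
  push_cast
  ring

/-- The partition function normalised so that the ground state has weight one. -/
def partitionFn (L : ℕ) (β : ℝ) : ℝ := ∑ σ : Config L, Real.exp (-β * energy σ)

theorem partitionFn_pos (L : ℕ) (β : ℝ) : 0 < partitionFn L β :=
  Finset.sum_pos (fun _ _ => Real.exp_pos _) ⟨allPlus L, Finset.mem_univ _⟩

theorem one_le_partitionFn (L : ℕ) (β : ℝ) : 1 ≤ partitionFn L β := by
  have hground : Real.exp (-β * energy (allPlus L)) = 1 := by simp [energy_allPlus]
  exact hground.ge.trans (Finset.single_le_sum (f := fun σ => Real.exp (-β * energy σ))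
    (fun σ _ => (Real.exp_pos _).le) (Finset.mem_univ (allPlus L)))

theorem gibbs_eq (β : ℝ) (σ : Config L) :
    gibbs L β σ = Real.exp (-β * energy σ) / partitionFn L β := by
  have hshift (η : Config L) : Real.exp (-β * ham L η) =
      Real.exp (β * ((L + 1 : ℝ) ^ 2 / 2)) * Real.exp (-β * energy η) := by
    rw [ham_eq, ← Real.exp_add]; congr 1; ring
  simp only [gibbs, partitionFn, hshift]
  rw [← Finset.mul_sum, mul_div_mul_left _ _ (Real.exp_pos _).ne']

theorem gibbs_pos (β : ℝ) (σ : Config L) : 0 < gibbs L β σ := by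
  rw [gibbs_eq]; exact div_pos (Real.exp_pos _) (partitionFn_pos _ _)

theorem gibbs_le_exp (β : ℝ) (σ : Config L) : gibbs L β σ ≤ Real.exp (-β * energy σ) := by
  rw [gibbs_eq]
  exact div_le_self (Real.exp_pos _).le (one_le_partitionFn L β)

theorem sum_gibbs (L : ℕ) (β : ℝ) : ∑ σ : Config L, gibbs L β σ = 1 := by
  simp only [gibbs_eq]
  rw [← Finset.sum_div]
  exact div_self (partitionFn_pos L β).ne'

theorem gibbs_eq_mul_of_energy {β : ℝ} {σ τ : Config L} {d : ℝ}
    (h : (energy σ : ℝ) = energy τ + d) : gibbs L β σ = Real.exp (-β * d) * gibbs L β τ := by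
  rw [gibbs_eq, gibbs_eq, h, mul_add, Real.exp_add]; ring

theorem gibbs_le_of_energy_le {β : ℝ} (hβ : 0 ≤ β) {σ τ : Config L} (h : energy τ ≤ energy σ) :
    gibbs L β σ ≤ gibbs L β τ := by
  have henergy : (energy τ : ℝ) ≤ energy σ := by exact_mod_cast h
  rw [gibbs_eq, gibbs_eq]
  refine div_le_div_of_nonneg_right (Real.exp_le_exp.2 ?_) (partitionFn_pos _ _).le
  exact mul_le_mul_of_nonpos_left henergy (neg_nonpos.2 hβ)

theorem gibbs_mul_metroRate (β : ℝ) (σ η : Config L) :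
    gibbs L β σ * metroRate L β σ η = min (gibbs L β σ) (gibbs L β η) := by
  rw [metroRate, mul_min_of_nonneg _ _ (gibbs_pos β σ).le, mul_one]
  congr 1
  rw [gibbs_eq, gibbs_eq, div_mul_eq_mul_div, ← Real.exp_add, ham_eq, ham_eq]
  congr 2
  ring

theorem gen_of_ne (β : ℝ) {σ η : Config L} (h : η ≠ σ) : gen L β σ η =
    ∑ x : Fin L × Fin L, if η = flip L σ x then metroRate L β σ (flip L σ x) else 0 :=
  if_neg h

theorem gibbs_mul_gen_of_ne (β : ℝ) {σ η : Config L} (h : η ≠ σ) :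
    gibbs L β σ * gen L β σ η =
      ∑ x : Fin L × Fin L, if η = flip L σ x then min (gibbs L β σ) (gibbs L β η) else 0 := by
  rw [gen_of_ne β h, Finset.mul_sum]
  refine Finset.sum_congr rfl fun x _ => ?_
  by_cases hx : η = flip L σ x
  · rw [if_pos hx, if_pos hx, ← hx, gibbs_mul_metroRate]
  · rw [if_neg hx, if_neg hx, mul_zero]

theorem eq_flip_comm {σ η : Config L} {x : Fin L × Fin L} : η = flip L σ x ↔ σ = flip L η x := by
  constructor <;> rintro rfl <;> rw [flip_flip]

theorem sum_gen (β : ℝ) (σ : Config L) : ∑ η, gen L β σ η = 0 := by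
  have hdiag : gen L β σ σ = -∑ x : Fin L × Fin L, metroRate L β σ (flip L σ x) := if_pos rfl
  rw [← Finset.sum_erase_add _ _ (Finset.mem_univ σ),
    Finset.sum_congr rfl fun η hη => gen_of_ne β (Finset.ne_of_mem_erase hη), Finset.sum_comm,
    hdiag, ← sub_eq_add_neg, sub_eq_zero]
  refine Finset.sum_congr rfl fun x _ => ?_
  rw [Finset.sum_ite_eq', if_pos (Finset.mem_erase.2 ⟨flip_ne σ x, Finset.mem_univ _⟩)]

theorem isReversibleGenerator_gen (L : ℕ) (β : ℝ) :
    IsReversibleGenerator (gen L β) (gibbs L β) where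
  pos := gibbs_pos β
  sum_one := sum_gibbs L β
  row_sum := sum_gen β
  offDiag_nonneg σ η h := by
    rw [gen_of_ne β h.symm]
    refine Finset.sum_nonneg fun x _ => ?_
    split_ifs
    exacts [le_min zero_le_one (Real.exp_pos _).le, le_rfl]
  balance σ η := by
    by_cases h : η = σ
    · rw [h]
    · rw [gibbs_mul_gen_of_ne β h, gibbs_mul_gen_of_ne β (Ne.symm h)]
      refine Finset.sum_congr rfl fun x _ => ?_
      rw [min_comm]
      exact if_congr eq_flip_comm rfl rfl

theorem dirichlet_gen (β : ℝ) (f : Config L → ℝ) :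
    dirichlet (gen L β) (gibbs L β) f =
      (∑ σ : Config L, ∑ x : Fin L × Fin L,
        min (gibbs L β σ) (gibbs L β (flip L σ x)) * (f (flip L σ x) - f σ) ^ 2) / 2 := by
  rw [dirichlet]
  congr 1
  refine Finset.sum_congr rfl fun σ _ => ?_
  have hedge (η : Config L) : gibbs L β σ * gen L β σ η * (f η - f σ) ^ 2 =
      ∑ x : Fin L × Fin L, if η = flip L σ x then
        min (gibbs L β σ) (gibbs L β η) * (f η - f σ) ^ 2 else 0 := by
    by_cases h : η = σ
    · simp [h]
    · rw [gibbs_mul_gen_of_ne β h, Finset.sum_mul]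
      exact Finset.sum_congr rfl fun x _ => by rw [ite_mul, zero_mul]
  rw [Finset.sum_congr rfl fun η _ => hedge η, Finset.sum_comm]
  exact Finset.sum_congr rfl fun x _ => by rw [Finset.sum_ite_eq', if_pos (Finset.mem_univ _)]

end GibbsMeasure

/-! ### Counting configurations by their number of defects -/

section LevelSets

variable {L : ℕ}

/-- The configurations with exactly `m` defects. -/
def levelSet (L m : ℕ) : Finset (Config L) := Finset.univ.filter fun σ => energy σ = m

theorem mem_levelSet {m : ℕ} {σ : Config L} : σ ∈ levelSet L m ↔ energy σ = m := by
  simp [levelSet]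

theorem card_levelSet_zero_le (L : ℕ) : (levelSet L 0).card ≤ 1 := by
  refine Finset.card_le_one.2 fun σ hσ τ hτ => ?_
  rw [eq_allPlus_of_energy_eq_zero (mem_levelSet.1 hσ),
    eq_allPlus_of_energy_eq_zero (mem_levelSet.1 hτ)]

theorem levelSet_eq_empty {m : ℕ} (hm₁ : 1 ≤ m) (hm₃ : m ≤ 3) : levelSet L m = ∅ := by
  refine Finset.eq_empty_of_forall_notMem fun σ hσ => ?_
  rw [mem_levelSet] at hσ
  have hne : σ ≠ allPlus L := by
    rintro rfl
    rw [energy_allPlus] at hσ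
    omega
  have := four_le_energy hne
  omega

theorem exists_rectangle_reduction {σ : Config L} {z : ℕ × ℕ} (hz : z ∈ defectSet σ) :
    ∃ w ∈ grid L, (energy (flipRect σ z.1 w.1 z.2 w.2) + 2 = energy σ ∧
        w ∈ defectSet (flipRect σ z.1 w.1 z.2 w.2)) ∨
      energy (flipRect σ z.1 w.1 z.2 w.2) + 4 = energy σ := by
  obtain ⟨⟨hx, hy⟩, hd⟩ := mem_defectSet.1 hz
  obtain ⟨u, hu, hux, hud⟩ := exists_row_mate hx hd
  obtain ⟨v, hv, hvy, hvd⟩ := exists_col_mate hy hd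
  have henergy := energy_flipRect σ hx hu hy hv hux.symm hvy.symm
  rw [hd, hud, hvd] at henergy
  refine ⟨(u, v), mem_grid.2 ⟨hu, hv⟩, ?_⟩
  cases huv : isDefect σ u v
  · left
    rw [huv] at henergy
    simp only [Bool.toNat_true, Bool.toNat_false] at henergy
    refine ⟨by dsimp only; omega, mem_defectSet.2 ⟨⟨hu, hv⟩, ?_⟩⟩
    rw [isDefect_flipRect σ hx hu hy hv, huv]
    simp [hux, hvy]
  · right
    rw [huv] at henergy
    simp only [Bool.toNat_true] at henergy
    dsimp only
    omega

/-- The configurations with exactly `m` defects, one of which is marked. -/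
def markedLevelSet (L m : ℕ) : Finset (Σ _ : Config L, ℕ × ℕ) := (levelSet L m).sigma defectSet

theorem card_markedLevelSet (L m : ℕ) :
    (markedLevelSet L m).card = m * (levelSet L m).card := by
  rw [markedLevelSet, Finset.card_sigma, mul_comm]
  exact Finset.sum_const_nat fun σ hσ => mem_levelSet.1 hσ

theorem card_markedLevelSet_le (L m : ℕ) :
    (markedLevelSet L (m + 4)).card ≤
      (markedLevelSet L (m + 2) ×ˢ grid L ∪ ((levelSet L m).sigma fun _ => grid L) ×ˢ grid L).card
      := by
  have hreduce : ∀ p ∈ markedLevelSet L (m + 4), ∃ w : ℕ × ℕ,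
      ((⟨flipRect p.1 p.2.1 w.1 p.2.2 w.2, w⟩, p.2) : (Σ _ : Config L, ℕ × ℕ) × ℕ × ℕ) ∈
        markedLevelSet L (m + 2) ×ˢ grid L ∪ ((levelSet L m).sigma fun _ => grid L) ×ˢ grid L := by
    rintro ⟨σ, z⟩ hp
    obtain ⟨hσ, hz⟩ := Finset.mem_sigma.1 hp
    have hzgrid : z ∈ grid L := (Finset.mem_filter.1 hz).1
    rw [mem_levelSet] at hσ
    obtain ⟨w, hw, ⟨henergy, hmark⟩ | henergy⟩ := exists_rectangle_reduction hz
    · exact ⟨w, Finset.mem_union_left _ (Finset.mem_product.2 ⟨Finset.mem_sigma.2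
        ⟨mem_levelSet.2 (by dsimp only at *; omega), hmark⟩, hzgrid⟩)⟩
    · exact ⟨w, Finset.mem_union_right _ (Finset.mem_product.2 ⟨Finset.mem_sigma.2
        ⟨mem_levelSet.2 (by dsimp only at *; omega), hw⟩, hzgrid⟩)⟩
  choose! w hw using hreduce
  refine Finset.card_le_card_of_injOn _ hw ?_
  rintro ⟨σ, z⟩ - ⟨σ', z'⟩ - h
  simp only [Prod.mk.injEq, Sigma.mk.injEq, heq_eq_eq] at h
  obtain ⟨⟨hflip, hw⟩, rfl⟩ := h
  have hσ := congrArg (fun τ => flipRect τ z.1 (w ⟨σ, z⟩).1 z.2 (w ⟨σ, z⟩).2) hflip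
  simp only [hw, flipRect_flipRect] at hσ
  rw [hσ]

theorem card_levelSet_recursion (L m : ℕ) :
    (m + 4) * (levelSet L (m + 4)).card ≤
      (L + 1) ^ 2 * (m + 2) * (levelSet L (m + 2)).card + (L + 1) ^ 4 * (levelSet L m).card := by
  rw [← card_markedLevelSet]
  refine ((card_markedLevelSet_le L m).trans (Finset.card_union_le _ _)).trans_eq ?_
  simp only [Finset.card_product, card_markedLevelSet, Finset.card_sigma, Finset.sum_const,
    smul_eq_mul, card_grid]
  ring

theorem card_levelSet_le (L m : ℕ) : (levelSet L m).card ≤ (L + 1) ^ m := by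
  induction m using Nat.strong_induction_on with
  | _ m ih =>
    rcases lt_or_ge m 4 with hm | hm
    · rcases Nat.eq_zero_or_pos m with rfl | hpos
      · simpa using card_levelSet_zero_le L
      · simp [levelSet_eq_empty hpos (by omega)]
    · obtain ⟨k, rfl⟩ := Nat.exists_eq_add_of_le' hm
      refine Nat.le_of_mul_le_mul_left (c := k + 4) ?_ (by omega)
      calc (k + 4) * (levelSet L (k + 4)).card
          ≤ (L + 1) ^ 2 * (k + 2) * (levelSet L (k + 2)).card +
              (L + 1) ^ 4 * (levelSet L k).card := card_levelSet_recursion L k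
        _ ≤ (L + 1) ^ 2 * (k + 2) * (L + 1) ^ (k + 2) + (L + 1) ^ 4 * (L + 1) ^ k := by
            gcongr <;> exact ih _ (by omega)
        _ = (k + 3) * (L + 1) ^ (k + 4) := by ring
        _ ≤ (k + 4) * (L + 1) ^ (k + 4) := by gcongr; omega

theorem levelSet_five_eq_empty (L : ℕ) : levelSet L 5 = ∅ := by
  have h := card_levelSet_recursion L 1
  rw [levelSet_eq_empty (m := 1 + 2) (by norm_num) le_rfl,
    levelSet_eq_empty (m := 1) le_rfl (by norm_num)] at h
  rw [← Finset.card_eq_zero]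
  simpa using h

theorem sum_levelSet_energy_exp_le (L m : ℕ) (β : ℝ) :
    ∑ σ ∈ levelSet L m, (energy σ : ℝ) * Real.exp (-β * energy σ) ≤
      (2 * ((L + 1) * Real.exp (-β))) ^ m := by
  have hcard : ((levelSet L m).card : ℝ) ≤ (L + 1 : ℝ) ^ m := by
    exact_mod_cast card_levelSet_le L m
  have hpow : (m : ℝ) ≤ 2 ^ m := by exact_mod_cast Nat.lt_two_pow_self.le
  calc ∑ σ ∈ levelSet L m, (energy σ : ℝ) * Real.exp (-β * energy σ)
      = (levelSet L m).card * ((m : ℝ) * Real.exp (-β * m)) := by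
        rw [Finset.sum_congr rfl fun σ hσ => by rw [mem_levelSet.1 hσ], Finset.sum_const,
          nsmul_eq_mul]
    _ ≤ (L + 1 : ℝ) ^ m * ((2 : ℝ) ^ m * Real.exp (-β * m)) := by gcongr
    _ = (2 * ((L + 1) * Real.exp (-β))) ^ m := by
        rw [mul_comm (-β), Real.exp_nat_mul, mul_pow, mul_pow]; ring

theorem sum_energy_exp_le {β r : ℝ} (hr : r = (L + 1) * Real.exp (-β)) (hr4 : r ≤ 1 / 4) (k : ℕ) :
    ∑ σ : Config L with k ≤ energy σ, (energy σ : ℝ) * Real.exp (-β * energy σ) ≤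
      2 * (2 * r) ^ k := by
  have hr0 : 0 ≤ r := by rw [hr]; positivity
  have hmaps : ∀ σ ∈ ({σ : Config L | k ≤ energy σ} : Finset (Config L)),
      energy σ ∈ Finset.Ico k ((L + 1) ^ 2 + 1) := fun σ hσ =>
    Finset.mem_Ico.2 ⟨(Finset.mem_filter.1 hσ).2, Nat.lt_succ_of_le (energy_le σ)⟩
  rw [← Finset.sum_fiberwise_of_maps_to hmaps]
  calc _ ≤ ∑ m ∈ Finset.Ico k ((L + 1) ^ 2 + 1), (2 * r) ^ m := by
        refine Finset.sum_le_sum fun m _ => ?_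
        rw [hr]
        refine le_trans ?_ (sum_levelSet_energy_exp_le L m β)
        refine Finset.sum_le_sum_of_subset_of_nonneg ?_ fun σ _ _ => by positivity
        exact fun σ hσ => mem_levelSet.2 (Finset.mem_filter.1 hσ).2
    _ ≤ (2 * r) ^ k / (1 - 2 * r) := geom_sum_Ico_le_of_lt_one (by linarith) (by linarith)
    _ ≤ 2 * (2 * r) ^ k := by
        rw [div_le_iff₀ (by linarith)]
        nlinarith [pow_nonneg (mul_nonneg zero_le_two hr0) k]

theorem partitionFn_le_two {β : ℝ} (hr4 : (L + 1) * Real.exp (-β) ≤ 1 / 4) :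
    partitionFn L β ≤ 2 := by
  have hground : ∑ σ : Config L with ¬ 1 ≤ energy σ, Real.exp (-β * energy σ) ≤ 1 := by
    calc ∑ σ : Config L with ¬ 1 ≤ energy σ, Real.exp (-β * energy σ)
        ≤ ∑ σ ∈ {allPlus L}, Real.exp (-β * energy σ) := by
          refine Finset.sum_le_sum_of_subset_of_nonneg ?_ fun σ _ _ => (Real.exp_pos _).le
          intro σ hσ
          have := (Finset.mem_filter.1 hσ).2
          exact Finset.mem_singleton.2 (eq_allPlus_of_energy_eq_zero (by omega))
      _ = 1 := by simp [energy_allPlus]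
  have hexcited : ∑ σ : Config L with 1 ≤ energy σ, Real.exp (-β * energy σ) ≤
      ∑ σ : Config L with 1 ≤ energy σ, (energy σ : ℝ) * Real.exp (-β * energy σ) :=
    Finset.sum_le_sum fun σ hσ => le_mul_of_one_le_left (Real.exp_pos _).le
      (by exact_mod_cast (Finset.mem_filter.1 hσ).2)
  have hsum := sum_energy_exp_le (L := L) rfl hr4 1
  rw [partitionFn, ← Finset.sum_filter_add_sum_filter_not _ (fun σ => 1 ≤ energy σ)]
  linarith

end LevelSets

section DiscreteGronwall

theorem le_pow_mul_sum_of_recursion {c : ℝ} (hc : 1 ≤ c) {A B : ℕ → ℝ} (hB : ∀ j, 0 ≤ B j)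
    (h0 : A 0 ≤ B 0) (hA : ∀ j, A (j + 1) ≤ c * A j + B (j + 1)) (j : ℕ) :
    A j ≤ c ^ j * ∑ i ∈ Finset.range (j + 1), B i := by
  induction j with
  | zero => simpa using h0
  | succ j ih =>
    rw [Finset.sum_range_succ]
    calc A (j + 1) ≤ c * A j + B (j + 1) := hA j
      _ ≤ c * (c ^ j * ∑ i ∈ Finset.range (j + 1), B i) + c ^ (j + 1) * B (j + 1) :=
          add_le_add (mul_le_mul_of_nonneg_left ih (zero_le_one.trans hc))
            (le_mul_of_one_le_left (hB _) (one_le_pow₀ hc))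
      _ = _ := by ring

theorem one_add_inv_pow_le_three {n j : ℕ} (h : j ≤ n) : (1 + 1 / (n : ℝ)) ^ j ≤ 3 :=
  calc (1 + 1 / (n : ℝ)) ^ j ≤ (1 + 1 / n) ^ n :=
        pow_le_pow_right₀ (le_add_of_nonneg_right (by positivity)) h
    _ ≤ Real.exp 1 := by rw [one_div]; exact Real.one_add_inv_pow_le_exp
    _ ≤ 3 := Real.exp_one_lt_three.le

theorem sum_le_of_recursion {n : ℕ} {A B : ℕ → ℝ} (hB : ∀ j, 0 ≤ B j) (h0 : A 0 ≤ B 0)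
    (hA : ∀ j, A (j + 1) ≤ (1 + 1 / n) * A j + B (j + 1)) :
    ∑ j ∈ Finset.range n, A j ≤ 3 * n * ∑ j ∈ Finset.range n, B j := by
  have hterm : ∀ j ∈ Finset.range n, A j ≤ 3 * ∑ i ∈ Finset.range n, B i := by
    intro j hj
    have hjn := Finset.mem_range.1 hj
    have hle := le_pow_mul_sum_of_recursion (c := 1 + 1 / n)
      (le_add_of_nonneg_right (by positivity)) hB h0 hA j
    refine hle.trans (mul_le_mul (one_add_inv_pow_le_three hjn.le) ?_
      (Finset.sum_nonneg fun i _ => hB i) (by norm_num))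
    exact Finset.sum_le_sum_of_subset_of_nonneg (Finset.range_subset_range.2 hjn)
      fun i _ _ => hB i
  calc ∑ j ∈ Finset.range n, A j
      ≤ ∑ j ∈ Finset.range n, 3 * ∑ i ∈ Finset.range n, B i := Finset.sum_le_sum hterm
    _ = _ := by rw [Finset.sum_const, Finset.card_range, nsmul_eq_mul]; ring

end DiscreteGronwall

/-! ### Row flips between consecutive occupied columns -/

section RowFlips

variable {L : ℕ}

/-- The number of defects in column `i` within the strip formed by the rows `y` and `y + 1`. -/
def occ (σ : Config L) (y i : ℕ) : ℕ := (isDefect σ i y).toNat + (isDefect σ i (y + 1)).toNat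

theorem occ_le_two (σ : Config L) (y i : ℕ) : occ σ y i ≤ 2 := by
  unfold occ
  cases isDefect σ i y <;> cases isDefect σ i (y + 1) <;> simp

theorem occ_pos_of_isDefect {σ : Config L} {y x : ℕ} (h : isDefect σ x y = true) :
    0 < occ σ y x := by simp [occ, h]

theorem sum_occ_le (σ : Config L) :
    ∑ y ∈ Finset.range L, ∑ x ∈ Finset.range (L + 1), occ σ y x ≤ 2 * energy σ := by
  have henergy : energy σ = ∑ y ∈ Finset.range (L + 1), ∑ x ∈ Finset.range (L + 1),
      (isDefect σ x y).toNat := by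
    rw [energy_eq_sum, grid, Finset.sum_product, Finset.sum_comm]
  have hlower : ∑ y ∈ Finset.range L, ∑ x ∈ Finset.range (L + 1), (isDefect σ x y).toNat ≤
      energy σ := by
    rw [henergy, Finset.sum_range_succ]; omega
  have hupper : ∑ y ∈ Finset.range L, ∑ x ∈ Finset.range (L + 1), (isDefect σ x (y + 1)).toNat ≤
      energy σ := by
    rw [henergy, Finset.sum_range_succ']; omega
  simp only [occ, Finset.sum_add_distrib]
  omega

/-- Flip the spins between the plaquette columns `a` and `u` in the row of sites that separates the
plaquette rows `y` and `y + 1`. -/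
def flipRow (σ : Config L) (y a u : ℕ) : Config L := flipRect σ a u y (y + 1)

theorem flipRow_self (σ : Config L) (y a : ℕ) : flipRow σ y a a = σ := flipRect_self _ _ _ _

theorem flipRow_comm (σ : Config L) (y a u : ℕ) : flipRow σ y a u = flipRow σ y u a :=
  flipRect_comm_left _ _ _ _ _

theorem flipRow_flipRow (σ : Config L) (y a u : ℕ) : flipRow (flipRow σ y a u) y a u = σ :=
  flipRect_flipRect _ _ _ _ _

theorem flipRow_flipRow_succ (σ : Config L) (y a k : ℕ) :
    flipRow (flipRow σ y a k) y k (k + 1) = flipRow σ y a (k + 1) :=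
  flipRect_flipRect_add σ a k (k + 1) y (y + 1)

theorem sum_comp_flipRow (y a u : ℕ) (F : Config L → ℝ) :
    ∑ σ, F (flipRow σ y a u) = ∑ σ, F σ :=
  Equiv.sum_comp (Function.Involutive.toPerm _ fun σ => flipRow_flipRow σ y a u) F

theorem isDefect_flipRow (σ : Config L) {y a u : ℕ} (hy : y < L) (ha : a ≤ L) (hu : u ≤ L)
    (i j : ℕ) :
    isDefect (flipRow σ y a u) i j = (isDefect σ i j ^^
      ((decide (i = a) ^^ decide (i = u)) && (decide (j = y) ^^ decide (j = y + 1)))) :=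
  isDefect_flipRect σ ha hu hy.le hy i j

theorem energy_flipRow (σ : Config L) {y a u : ℕ} (hy : y < L) (ha : a ≤ L) (hu : u ≤ L)
    (hau : a ≠ u) :
    energy (flipRow σ y a u) + 2 * (occ σ y a + occ σ y u) = energy σ + 4 := by
  have := energy_flipRect σ ha hu hy.le hy hau (Nat.lt_succ_self y).ne
  rw [Nat.succ_eq_add_one] at this
  unfold occ flipRow
  omega

theorem occ_flipRow_of_ne (σ : Config L) {y a u i : ℕ} (hy : y < L) (ha : a ≤ L) (hu : u ≤ L)
    (hia : i ≠ a) (hiu : i ≠ u) : occ (flipRow σ y a u) y i = occ σ y i := by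
  unfold occ
  rw [isDefect_flipRow σ hy ha hu, isDefect_flipRow σ hy ha hu]
  simp [hia, hiu]

theorem occ_flipRow_left (σ : Config L) {y a u : ℕ} (hy : y < L) (ha : a ≤ L) (hu : u ≤ L)
    (hau : a ≠ u) : occ (flipRow σ y a u) y a + occ σ y a = 2 := by
  unfold occ
  rw [isDefect_flipRow σ hy ha hu, isDefect_flipRow σ hy ha hu]
  cases isDefect σ a y <;> cases isDefect σ a (y + 1) <;> simp [hau]

theorem occ_flipRow_right (σ : Config L) {y a u : ℕ} (hy : y < L) (ha : a ≤ L) (hu : u ≤ L)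
    (hau : a ≠ u) : occ (flipRow σ y a u) y u + occ σ y u = 2 := by
  rw [flipRow_comm]
  exact occ_flipRow_left σ hy hu ha hau.symm

end RowFlips

section Runs

variable {L : ℕ}

/-- Column `a` is occupied in the strip at `y` and the columns in `(a, k]` are empty. -/
structure RunsTo (σ : Config L) (y a k : ℕ) : Prop where
  le : a ≤ k
  occ_pos : 0 < occ σ y a
  occ_eq_zero : ∀ j, a < j → j ≤ k → occ σ y j = 0

/-- `a < u` are consecutive occupied columns in the strip at `y`. -/
structure Consec (σ : Config L) (y a u : ℕ) : Prop where
  lt : a < u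
  le : u ≤ L
  occ_left_pos : 0 < occ σ y a
  occ_right_pos : 0 < occ σ y u
  occ_eq_zero : ∀ k, a < k → k < u → occ σ y k = 0

theorem Consec.runsTo {σ : Config L} {y a u k : ℕ} (h : Consec σ y a u) (hak : a ≤ k)
    (hku : k < u) : RunsTo σ y a k :=
  ⟨hak, h.occ_left_pos, fun j haj hjk => h.occ_eq_zero j haj (hjk.trans_lt hku)⟩

theorem Consec.unique {σ : Config L} {y a u u' : ℕ} (h : Consec σ y a u) (h' : Consec σ y a u') :
    u = u' := by
  rcases lt_trichotomy u u' with hlt | heq | hlt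
  · exact absurd (h'.occ_eq_zero u h.lt hlt) h.occ_right_pos.ne'
  · exact heq
  · exact absurd (h.occ_eq_zero u' h'.lt hlt) h'.occ_right_pos.ne'

theorem RunsTo.energy_flipRow_le {σ : Config L} {y a k : ℕ} (h : RunsTo σ y a k) (hy : y < L)
    (hk : k ≤ L) : energy (flipRow σ y a k) + 2 * occ σ y a ≤ energy σ + 4 := by
  rcases h.le.eq_or_lt with rfl | hlt
  · rw [flipRow_self]
    have := occ_le_two σ y a
    omega
  · have := energy_flipRow σ hy (h.le.trans hk) hk hlt.ne
    omega

theorem RunsTo.energy_flipRow_succ_le {σ : Config L} {y a k : ℕ} (h : RunsTo σ y a k) (hy : y < L)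
    (hk : k < L) : energy (flipRow σ y a (k + 1)) + 2 * occ σ y a ≤ energy σ + 4 := by
  have := energy_flipRow σ hy (h.le.trans hk.le) hk (Nat.lt_succ_of_le h.le).ne
  rw [Nat.succ_eq_add_one] at this
  omega

/-- The Boltzmann factor lost along a run started from a column with `m` defects: only the runs
from a singly occupied column have to climb, by an energy of at most `2`. -/
def runWeight (β : ℝ) (m : ℕ) : ℝ := if m = 1 then Real.exp (2 * β) else 1

theorem runWeight_nonneg (β : ℝ) (m : ℕ) : 0 ≤ runWeight β m := by
  unfold runWeight; split_ifs <;> positivity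

theorem gibbs_le_runWeight_mul {β : ℝ} (hβ : 0 ≤ β) {σ τ : Config L} {m : ℕ} (hm : 0 < m)
    (hm2 : m ≤ 2) (h : energy τ + 2 * m ≤ energy σ + 4) :
    gibbs L β σ ≤ runWeight β m * gibbs L β τ := by
  obtain rfl | rfl : m = 1 ∨ m = 2 := by omega
  · rw [runWeight, if_pos rfl, gibbs_eq_mul_of_energy (τ := τ) (d := energy σ - energy τ) (by ring)]
    refine mul_le_mul_of_nonneg_right (Real.exp_le_exp.2 ?_) (gibbs_pos β τ).le
    have : (energy τ : ℝ) + 2 * 1 ≤ energy σ + 4 := by exact_mod_cast h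
    nlinarith
  · rw [runWeight, if_neg (by norm_num), one_mul]
    exact gibbs_le_of_energy_le hβ (by omega)

/-- The contribution to the Dirichlet form of the spin flip at the site `(k, y)`. -/
def edgeTerm (β : ℝ) (f : Config L → ℝ) (y k : ℕ) (ξ : Config L) : ℝ :=
  min (gibbs L β ξ) (gibbs L β (flipRow ξ y k (k + 1))) * (f (flipRow ξ y k (k + 1)) - f ξ) ^ 2

theorem edgeTerm_nonneg (β : ℝ) (f : Config L → ℝ) (y k : ℕ) (ξ : Config L) :
    0 ≤ edgeTerm β f y k ξ :=
  mul_nonneg (le_min (gibbs_pos β _).le (gibbs_pos β _).le) (sq_nonneg _)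

theorem sum_edgeTerm (β : ℝ) (f : Config L → ℝ) :
    ∑ y ∈ Finset.range L, ∑ k ∈ Finset.range L, ∑ ξ, edgeTerm β f y k ξ =
      2 * dirichlet (gen L β) (gibbs L β) f := by
  rw [dirichlet_gen, mul_div_cancel₀ _ two_ne_zero,
    Finset.sum_comm (s := (Finset.univ : Finset (Config L))), Fintype.sum_prod_type_right,
    Finset.sum_range]
  refine Finset.sum_congr rfl fun y _ => ?_
  rw [Finset.sum_range]
  refine Finset.sum_congr rfl fun k _ => Finset.sum_congr rfl fun σ _ => ?_
  rw [flip_eq_flipRect]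
  rfl

theorem sq_sub_flipRow_le (f : Config L → ℝ) (σ : Config L) {y a u : ℕ} (hau : a ≤ u)
    (hu : u ≤ L) :
    (f (flipRow σ y a u) - f σ) ^ 2 ≤
      L * ∑ k ∈ Finset.Ico a u, (f (flipRow σ y a (k + 1)) - f (flipRow σ y a k)) ^ 2 := by
  have htelescope : f (flipRow σ y a u) - f σ =
      ∑ k ∈ Finset.Ico a u, (f (flipRow σ y a (k + 1)) - f (flipRow σ y a k)) := by
    rw [Finset.sum_Ico_sub (fun k => f (flipRow σ y a k)) hau, flipRow_self]
  rw [htelescope]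
  refine sq_sum_le_card_mul_sum_sq.trans (mul_le_mul_of_nonneg_right ?_
    (Finset.sum_nonneg fun _ _ => sq_nonneg _))
  rw [Nat.card_Ico]
  exact_mod_cast (u.sub_le a).trans hu

/-- `runWeight` of the run from `a` to `k`, and zero if there is no such run. -/
def runCoeff (β : ℝ) (σ : Config L) (y a k : ℕ) : ℝ :=
  if RunsTo σ y a k then runWeight β (occ σ y a) else 0

theorem runCoeff_nonneg (β : ℝ) (σ : Config L) (y a k : ℕ) : 0 ≤ runCoeff β σ y a k := by
  unfold runCoeff
  split_ifs
  exacts [runWeight_nonneg _ _, le_rfl]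

theorem RunsTo.gibbs_mul_sq_le {β : ℝ} (hβ : 0 ≤ β) (f : Config L → ℝ) {σ : Config L}
    {y a k : ℕ} (h : RunsTo σ y a k) (hy : y < L) (hk : k < L) :
    gibbs L β σ * (f (flipRow σ y a (k + 1)) - f (flipRow σ y a k)) ^ 2 ≤
      runCoeff β σ y a k * edgeTerm β f y k (flipRow σ y a k) := by
  rw [runCoeff, if_pos h, edgeTerm, flipRow_flipRow_succ, ← mul_assoc]
  refine mul_le_mul_of_nonneg_right ?_ (sq_nonneg _)
  rw [mul_min_of_nonneg _ _ (runWeight_nonneg _ _)]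
  exact le_min
    (gibbs_le_runWeight_mul hβ h.occ_pos (occ_le_two σ y a) (h.energy_flipRow_le hy hk.le))
    (gibbs_le_runWeight_mul hβ h.occ_pos (occ_le_two σ y a) (h.energy_flipRow_succ_le hy hk))

/-- The weighted squared increment of `f` over the flip of the row between the consecutive occupied
columns `a` and `u`, and zero if `a` and `u` are not such columns. -/
def consecTerm (β : ℝ) (f : Config L → ℝ) (σ : Config L) (y a u : ℕ) : ℝ :=
  if Consec σ y a u then gibbs L β σ * (f (flipRow σ y a u) - f σ) ^ 2 else 0

theorem consecTerm_nonneg (β : ℝ) (f : Config L → ℝ) (σ : Config L) (y a u : ℕ) :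
    0 ≤ consecTerm β f σ y a u := by
  have := gibbs_pos β σ
  unfold consecTerm
  split_ifs <;> positivity

theorem Consec.consecTerm_le {β : ℝ} (hβ : 0 ≤ β) (f : Config L → ℝ) {σ : Config L} {y a u : ℕ}
    (h : Consec σ y a u) (hy : y < L) :
    consecTerm β f σ y a u ≤
      L * ∑ k ∈ Finset.range L, runCoeff β σ y a k * edgeTerm β f y k (flipRow σ y a k) := by
  have hsubset : Finset.Ico a u ⊆ Finset.range L := fun k hk =>
    Finset.mem_range.2 ((Finset.mem_Ico.1 hk).2.trans_le h.le)
  rw [consecTerm, if_pos h]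
  calc gibbs L β σ * (f (flipRow σ y a u) - f σ) ^ 2
      ≤ gibbs L β σ * (L * ∑ k ∈ Finset.Ico a u,
          (f (flipRow σ y a (k + 1)) - f (flipRow σ y a k)) ^ 2) :=
        mul_le_mul_of_nonneg_left (sq_sub_flipRow_le f σ h.lt.le h.le) (gibbs_pos β σ).le
    _ = L * ∑ k ∈ Finset.Ico a u,
          gibbs L β σ * (f (flipRow σ y a (k + 1)) - f (flipRow σ y a k)) ^ 2 := by
        rw [mul_left_comm, Finset.mul_sum]
    _ ≤ L * ∑ k ∈ Finset.Ico a u, runCoeff β σ y a k * edgeTerm β f y k (flipRow σ y a k) := by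
        refine mul_le_mul_of_nonneg_left (Finset.sum_le_sum fun k hk => ?_) (Nat.cast_nonneg L)
        have hmem := Finset.mem_Ico.1 hk
        exact (h.runsTo hmem.1 hmem.2).gibbs_mul_sq_le hβ f hy (Finset.mem_range.1 (hsubset hk))
    _ ≤ L * ∑ k ∈ Finset.range L, runCoeff β σ y a k * edgeTerm β f y k (flipRow σ y a k) :=
        mul_le_mul_of_nonneg_left (Finset.sum_le_sum_of_subset_of_nonneg hsubset fun k _ _ =>
          mul_nonneg (runCoeff_nonneg _ _ _ _ _) (edgeTerm_nonneg _ _ _ _ _)) (Nat.cast_nonneg L)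

theorem sum_consecTerm_le {β : ℝ} (hβ : 0 ≤ β) (f : Config L → ℝ) (σ : Config L) {y : ℕ} (a : ℕ)
    (hy : y < L) :
    ∑ u ∈ Finset.range (L + 1), consecTerm β f σ y a u ≤
      L * ∑ k ∈ Finset.range L, runCoeff β σ y a k * edgeTerm β f y k (flipRow σ y a k) := by
  have hzero (u : ℕ) (h : ¬ Consec σ y a u) : consecTerm β f σ y a u = 0 := if_neg h
  by_cases hex : ∃ u, Consec σ y a u
  · obtain ⟨u, hu⟩ := hex
    rw [Finset.sum_eq_single_of_mem u (Finset.mem_range.2 (Nat.lt_succ_of_le hu.le))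
      fun u' _ hne => hzero u' fun h => hne (h.unique hu)]
    exact hu.consecTerm_le hβ f hy
  · push Not at hex
    rw [Finset.sum_eq_zero fun u _ => hzero u (hex u)]
    exact mul_nonneg (Nat.cast_nonneg L) (Finset.sum_nonneg fun k _ =>
      mul_nonneg (runCoeff_nonneg _ _ _ _ _) (edgeTerm_nonneg _ _ _ _ _))

theorem not_runsTo_of_lt_of_runsTo {ξ : Config L} {y b c k : ℕ} (hy : y < L) (hk : k < L)
    (hbc : b < c) (hck : c ≤ k) (hb : RunsTo (flipRow ξ y b k) y b k)
    (hb1 : occ (flipRow ξ y b k) y b = 1) : occ (flipRow ξ y c k) y c ≠ 1 := by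
  intro hc1
  have hempty := hb.occ_eq_zero c hbc hck
  rcases hck.eq_or_lt with rfl | hlt
  · rw [flipRow_self] at hc1
    have := occ_flipRow_right ξ hy (hbc.le.trans hk.le) hk.le hbc.ne
    omega
  · have := occ_flipRow_of_ne ξ hy (hbc.le.trans (hck.trans hk.le)) hk.le hbc.ne' hlt.ne
    have := occ_flipRow_left ξ hy (hck.trans hk.le) hk.le hlt.ne
    omega

theorem runsTo_start_unique {ξ : Config L} {y a a' k : ℕ} (hy : y < L) (hk : k < L)
    (h : RunsTo (flipRow ξ y a k) y a k) (hocc : occ (flipRow ξ y a k) y a = 1)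
    (h' : RunsTo (flipRow ξ y a' k) y a' k) (hocc' : occ (flipRow ξ y a' k) y a' = 1) :
    a = a' := by
  rcases lt_trichotomy a a' with hlt | heq | hlt
  · exact absurd hocc' (not_runsTo_of_lt_of_runsTo hy hk hlt h'.le h hocc)
  · exact heq
  · exact absurd hocc (not_runsTo_of_lt_of_runsTo hy hk hlt h.le h' hocc')

-- At most one start `a` has a large weight, so the sum does not pay `exp (2 * β)` for each of them.
theorem sum_runCoeff_le (β : ℝ) (ξ : Config L) {y k : ℕ} (hy : y < L) (hk : k < L) :
    ∑ a ∈ Finset.range (L + 1), runCoeff β (flipRow ξ y a k) y a k ≤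
      Real.exp (2 * β) + (L + 1) := by
  let heavy (a : ℕ) : Prop :=
    RunsTo (flipRow ξ y a k) y a k ∧ occ (flipRow ξ y a k) y a = 1
  have hcoeff : ∀ a ∈ Finset.range (L + 1), runCoeff β (flipRow ξ y a k) y a k ≤
      (if heavy a then Real.exp (2 * β) else 0) + 1 := by
    intro a _
    have := Real.exp_pos (2 * β)
    unfold runCoeff runWeight
    split_ifs with hruns hone hheavy <;> first | linarith | exact absurd ⟨hruns, hone⟩ hheavy
  have hcard : ({a ∈ Finset.range (L + 1) | heavy a} : Finset ℕ).card ≤ 1 := by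
    refine Finset.card_le_one.2 fun a ha a' ha' => ?_
    have h := (Finset.mem_filter.1 ha).2
    have h' := (Finset.mem_filter.1 ha').2
    exact runsTo_start_unique hy hk h.1 h.2 h'.1 h'.2
  refine (Finset.sum_le_sum hcoeff).trans ?_
  rw [Finset.sum_add_distrib, ← Finset.sum_filter, Finset.sum_const, nsmul_eq_mul]
  refine add_le_add (mul_le_of_le_one_left (Real.exp_pos _).le (by exact_mod_cast hcard)) ?_
  simp

/-- Weighted squared increments of `f` over the row flips between consecutive occupied columns. -/
def runSum (β : ℝ) (f : Config L → ℝ) : ℝ :=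
  ∑ y ∈ Finset.range L, ∑ a ∈ Finset.range (L + 1), ∑ u ∈ Finset.range (L + 1), ∑ σ : Config L,
    consecTerm β f σ y a u

theorem sum_sum_consecTerm_le {β : ℝ} (hβ : 0 ≤ β) (f : Config L → ℝ) {y : ℕ} (a : ℕ)
    (hy : y < L) :
    ∑ u ∈ Finset.range (L + 1), ∑ σ : Config L, consecTerm β f σ y a u ≤
      L * ∑ k ∈ Finset.range L, ∑ ξ : Config L,
        runCoeff β (flipRow ξ y a k) y a k * edgeTerm β f y k ξ := by
  calc ∑ u ∈ Finset.range (L + 1), ∑ σ : Config L, consecTerm β f σ y a u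
      ≤ ∑ σ : Config L, L * ∑ k ∈ Finset.range L,
          runCoeff β σ y a k * edgeTerm β f y k (flipRow σ y a k) := by
        rw [Finset.sum_comm]
        exact Finset.sum_le_sum fun σ _ => sum_consecTerm_le hβ f σ a hy
    _ = _ := by
        rw [← Finset.mul_sum, Finset.sum_comm]
        congr 1
        refine Finset.sum_congr rfl fun k _ => ?_
        rw [← sum_comp_flipRow y a k]
        simp only [flipRow_flipRow]

theorem runSum_le {β : ℝ} (hβ : 0 ≤ β) (f : Config L → ℝ) :
    runSum β f ≤ L * (Real.exp (2 * β) + (L + 1)) * (2 * dirichlet (gen L β) (gibbs L β) f) := by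
  rw [← sum_edgeTerm, runSum, Finset.mul_sum]
  refine Finset.sum_le_sum fun y hy => ?_
  rw [Finset.mem_range] at hy
  calc ∑ a ∈ Finset.range (L + 1), ∑ u ∈ Finset.range (L + 1), ∑ σ, consecTerm β f σ y a u
      ≤ ∑ a ∈ Finset.range (L + 1), L * ∑ k ∈ Finset.range L, ∑ ξ : Config L,
          runCoeff β (flipRow ξ y a k) y a k * edgeTerm β f y k ξ :=
        Finset.sum_le_sum fun a _ => sum_sum_consecTerm_le hβ f a hy
    _ = L * ∑ k ∈ Finset.range L, ∑ ξ : Config L,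
          (∑ a ∈ Finset.range (L + 1), runCoeff β (flipRow ξ y a k) y a k) *
            edgeTerm β f y k ξ := by
        rw [← Finset.mul_sum, Finset.sum_comm]
        congr 1
        refine Finset.sum_congr rfl fun k _ => ?_
        rw [Finset.sum_comm]
        exact Finset.sum_congr rfl fun ξ _ => (Finset.sum_mul _ _ _).symm
    _ ≤ L * ∑ k ∈ Finset.range L, ∑ ξ : Config L,
          (Real.exp (2 * β) + (L + 1)) * edgeTerm β f y k ξ := by
        refine mul_le_mul_of_nonneg_left (Finset.sum_le_sum fun k hk => Finset.sum_le_sum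
          fun ξ _ => ?_) (Nat.cast_nonneg L)
        exact mul_le_mul_of_nonneg_right (sum_runCoeff_le β ξ hy (Finset.mem_range.1 hk))
          (edgeTerm_nonneg _ _ _ _ _)
    _ = _ := by
        simp_rw [← Finset.mul_sum]
        ring

end Runs

/-! ### The Hardy inequality for defects -/

section UpSets

variable {L : ℕ}

/-- The plaquette `z` is a defect whose nearest defect above in the same column is at distance
`j + 1`. -/
structure IsUpPair (σ : Config L) (j : ℕ) (z : ℕ × ℕ) : Prop where
  fst_le : z.1 ≤ L
  snd_add_le : z.2 + 1 + j ≤ L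
  isDefect : isDefect σ z.1 z.2 = true
  isDefect_above : SPM.isDefect σ z.1 (z.2 + 1 + j) = true
  isDefect_between : ∀ i < j, SPM.isDefect σ z.1 (z.2 + 1 + i) = false

theorem IsUpPair.not_lt {σ : Config L} {j j' : ℕ} {z : ℕ × ℕ} (h : IsUpPair σ j z)
    (h' : IsUpPair σ j' z) : ¬ j < j' := fun hlt => by
  simpa [h.isDefect_above] using h'.isDefect_between j hlt

/-- The defects whose nearest defect above in the same column is at distance `j + 1`. -/
def upSet (σ : Config L) (j : ℕ) : Finset (ℕ × ℕ) := {z ∈ grid L | IsUpPair σ j z}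

theorem mem_upSet {σ : Config L} {j : ℕ} {z : ℕ × ℕ} : z ∈ upSet σ j ↔ IsUpPair σ j z := by
  rw [upSet, Finset.mem_filter, and_iff_right_of_imp]
  intro h
  have := h.snd_add_le
  exact mem_grid.2 ⟨h.fst_le, by omega⟩

theorem disjoint_upSet (σ : Config L) {j j' : ℕ} (h : j ≠ j') :
    Disjoint (upSet σ j) (upSet σ j') := by
  refine Finset.disjoint_left.2 fun z hz hz' => ?_
  rw [mem_upSet] at hz hz'
  rcases h.lt_or_gt with hlt | hlt
  exacts [hz.not_lt hz' hlt, hz'.not_lt hz hlt]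

/-- Some plaquette above `z` in the same column is a defect. -/
def HasDefectAbove (σ : Config L) (z : ℕ × ℕ) : Prop :=
  ∃ v ≤ L, z.2 < v ∧ isDefect σ z.1 v = true

theorem exists_mem_upSet {σ : Config L} {z : ℕ × ℕ} (hz : z ∈ defectSet σ)
    (h : HasDefectAbove σ z) : ∃ j < L, z ∈ upSet σ j := by
  obtain ⟨⟨hx, -⟩, hdefect⟩ := mem_defectSet.1 hz
  obtain ⟨v, hv, hzv, hvdefect⟩ := h
  obtain ⟨j, rfl⟩ := Nat.exists_eq_add_of_lt hzv
  have hex : ∃ i, isDefect σ z.1 (z.2 + 1 + i) = true := ⟨j, by rwa [add_right_comm]⟩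
  have hle : Nat.find hex ≤ j := Nat.find_min' hex (by rwa [add_right_comm])
  exact ⟨Nat.find hex, by omega, mem_upSet.2 ⟨hx, by omega, hdefect, Nat.find_spec hex,
    fun i hi => eq_false_of_ne_true (Nat.find_min hex hi)⟩⟩

theorem card_hasDefectAbove_le (σ : Config L) :
    ((defectSet σ).filter (HasDefectAbove σ)).card ≤ ∑ j ∈ Finset.range L, (upSet σ j).card := by
  refine (Finset.card_le_card fun z hz => ?_).trans Finset.card_biUnion_le
  obtain ⟨hdefect, habove⟩ := Finset.mem_filter.1 hz
  obtain ⟨j, hj, hzj⟩ := exists_mem_upSet hdefect habove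
  exact Finset.mem_biUnion.2 ⟨j, Finset.mem_range.2 hj, hzj⟩

-- A column has at most one topmost defect, and then another defect below it.
theorem card_not_hasDefectAbove_le (σ : Config L) :
    ((defectSet σ).filter fun z => ¬ HasDefectAbove σ z).card ≤
      ((defectSet σ).filter (HasDefectAbove σ)).card := by
  refine Finset.card_le_card_of_forall_subsingleton (fun z w => z.1 = w.1) ?_ ?_
  · intro z hz
    obtain ⟨hzdefect, htop⟩ := Finset.mem_filter.1 hz
    obtain ⟨⟨hx, hy⟩, hd⟩ := mem_defectSet.1 hzdefect
    obtain ⟨v, hv, hvy, hvd⟩ := exists_col_mate hy hd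
    have hlt : v < z.2 := hvy.lt_of_le (not_lt.1 fun hlt => htop ⟨v, hv, hlt, hvd⟩)
    exact ⟨(z.1, v), Finset.mem_filter.2 ⟨mem_defectSet.2 ⟨⟨hx, hv⟩, hvd⟩, z.2, hy, hlt, hd⟩, rfl⟩
  · rintro w - z ⟨hz, hzw⟩ z' ⟨hz', hzw'⟩
    obtain ⟨hzdefect, htop⟩ := Finset.mem_filter.1 hz
    obtain ⟨hzdefect', htop'⟩ := Finset.mem_filter.1 hz'
    obtain ⟨⟨-, hy⟩, hd⟩ := mem_defectSet.1 hzdefect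
    obtain ⟨⟨-, hy'⟩, hd'⟩ := mem_defectSet.1 hzdefect'
    have hfst : z.1 = z'.1 := hzw.trans hzw'.symm
    refine Prod.ext hfst (le_antisymm ?_ ?_) <;> refine not_lt.1 fun hlt => ?_
    · exact htop' ⟨z.2, hy, hlt, hfst ▸ hd⟩
    · exact htop ⟨z'.2, hy', hlt, hfst ▸ hd'⟩

theorem energy_le_two_mul_sum_card_upSet (σ : Config L) :
    energy σ ≤ 2 * ∑ j ∈ Finset.range L, (upSet σ j).card := by
  have hsplit : energy σ = ((defectSet σ).filter (HasDefectAbove σ)).card +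
      ((defectSet σ).filter fun z => ¬ HasDefectAbove σ z).card :=
    (Finset.card_filter_add_card_filter_not _).symm
  have habove := card_hasDefectAbove_le σ
  have htop := card_not_hasDefectAbove_le σ
  omega

end UpSets

section PushUp

variable {L : ℕ}

/-- `u` is an element of `P` in `[0, L]` next to `x`, on either side. -/
structure IsNeighbour (L : ℕ) (P : ℕ → Prop) (x u : ℕ) : Prop where
  le : u ≤ L
  ne : u ≠ x
  mem : P u
  not_mem : ∀ k, (x < k ∧ k < u) ∨ (u < k ∧ k < x) → ¬ P k

/-- A neighbour of `x` in `P`, with the default value `0` if there is none. The choice depends on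
`P` and `x` only, which makes `pushUp` an involution. -/
def neighbour (L : ℕ) (P : ℕ → Prop) (x : ℕ) : ℕ :=
  if h : ∃ u, IsNeighbour L P x u then h.choose else 0

theorem isNeighbour_neighbour {P : ℕ → Prop} {x : ℕ} (hx : x ≤ L) (h : ∃ u ≤ L, u ≠ x ∧ P u) :
    IsNeighbour L P x (neighbour L P x) := by
  have hex : ∃ u, IsNeighbour L P x u := by
    obtain ⟨w, hw, hwx, hwP⟩ := h
    have hne : {u ∈ Finset.range (L + 1) | u ≠ x ∧ P u}.Nonempty :=
      ⟨w, Finset.mem_filter.2 ⟨Finset.mem_range.2 (Nat.lt_succ_of_le hw), hwx, hwP⟩⟩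
    obtain ⟨u, hu, hmin⟩ := Finset.exists_min_image _ (fun u => (u - x) + (x - u)) hne
    obtain ⟨huL, hux, huP⟩ := Finset.mem_filter.1 hu
    rw [Finset.mem_range] at huL
    refine ⟨u, by omega, hux, huP, fun k hk hkP => ?_⟩
    have := hmin k (Finset.mem_filter.2 ⟨Finset.mem_range.2 (by omega), by omega, hkP⟩)
    omega
  rw [neighbour, dif_pos hex]
  exact hex.choose_spec

/-- A neighbouring occupied column of `x` in the strip at `y`. -/
def mateCol (σ : Config L) (y x : ℕ) : ℕ := neighbour L (fun i => 0 < occ σ y i) x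

/-- Flip the row between the defect `z` and the neighbouring occupied column: the defect moves one
plaquette up. -/
def pushUp (σ : Config L) (z : ℕ × ℕ) : Config L := flipRow σ z.2 z.1 (mateCol σ z.2 z.1)

/-- The number of defects at the two columns affected by `pushUp`. -/
def pushOcc (σ : Config L) (z : ℕ × ℕ) : ℕ := occ σ z.2 z.1 + occ σ z.2 (mateCol σ z.2 z.1)

/-- `z` is a defect outside the topmost row of plaquettes. -/
structure IsPushable (σ : Config L) (z : ℕ × ℕ) : Prop where
  fst_le : z.1 ≤ L
  snd_lt : z.2 < L
  isDefect : isDefect σ z.1 z.2 = true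

theorem IsUpPair.isPushable {σ : Config L} {j : ℕ} {z : ℕ × ℕ} (h : IsUpPair σ j z) :
    IsPushable σ z :=
  ⟨h.fst_le, by have := h.snd_add_le; omega, h.isDefect⟩

namespace IsPushable

variable {σ : Config L} {z : ℕ × ℕ}

theorem occ_pos (h : IsPushable σ z) : 0 < occ σ z.2 z.1 := occ_pos_of_isDefect h.isDefect

theorem isNeighbour_mateCol (h : IsPushable σ z) :
    IsNeighbour L (fun i => 0 < occ σ z.2 i) z.1 (mateCol σ z.2 z.1) := by
  obtain ⟨u, hu, hux, hd⟩ := exists_row_mate h.fst_le h.isDefect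
  exact isNeighbour_neighbour h.fst_le ⟨u, hu, hux, occ_pos_of_isDefect hd⟩

theorem consec_mateCol (h : IsPushable σ z) :
    Consec σ z.2 z.1 (mateCol σ z.2 z.1) ∨ Consec σ z.2 (mateCol σ z.2 z.1) z.1 := by
  have hmate := h.isNeighbour_mateCol
  rcases hmate.ne.lt_or_gt with hlt | hlt
  · exact Or.inr ⟨hlt, h.fst_le, hmate.mem, h.occ_pos, fun k hk hk' =>
      Nat.eq_zero_of_not_pos (hmate.not_mem k (Or.inr ⟨hk, hk'⟩))⟩
  · exact Or.inl ⟨hlt, hmate.le, h.occ_pos, hmate.mem, fun k hk hk' =>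
      Nat.eq_zero_of_not_pos (hmate.not_mem k (Or.inl ⟨hk, hk'⟩))⟩

theorem energy_pushUp (h : IsPushable σ z) :
    energy (pushUp σ z) + 2 * pushOcc σ z = energy σ + 4 :=
  energy_flipRow σ h.snd_lt h.fst_le h.isNeighbour_mateCol.le h.isNeighbour_mateCol.ne.symm

theorem energy_pushUp_eq (h : IsPushable σ z) (hocc : pushOcc σ z ≤ 2) :
    energy (pushUp σ z) = energy σ := by
  have henergy := h.energy_pushUp
  have hpos := h.occ_pos
  have hmate : 0 < occ σ z.2 (mateCol σ z.2 z.1) := h.isNeighbour_mateCol.mem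
  unfold pushOcc at henergy hocc
  omega

theorem occ_pushUp (h : IsPushable σ z) (hocc : pushOcc σ z ≤ 2) (i : ℕ) :
    occ (pushUp σ z) z.2 i = occ σ z.2 i := by
  obtain ⟨hle, hne, hmem, -⟩ := h.isNeighbour_mateCol
  have hpos := h.occ_pos
  unfold pushOcc at hocc
  unfold pushUp
  by_cases hi : i = z.1
  · have := occ_flipRow_left σ h.snd_lt h.fst_le hle hne.symm
    subst hi
    omega
  by_cases hi' : i = mateCol σ z.2 z.1
  · have := occ_flipRow_right σ h.snd_lt h.fst_le hle hne.symm
    rw [hi']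
    omega
  · exact occ_flipRow_of_ne σ h.snd_lt h.fst_le hle hi hi'

theorem mateCol_pushUp (h : IsPushable σ z) (hocc : pushOcc σ z ≤ 2) :
    mateCol (pushUp σ z) z.2 z.1 = mateCol σ z.2 z.1 := by
  simp only [mateCol, h.occ_pushUp hocc]

theorem pushUp_pushUp (h : IsPushable σ z) (hocc : pushOcc σ z ≤ 2) :
    pushUp (pushUp σ z) z = σ := by
  rw [pushUp, h.mateCol_pushUp hocc, pushUp, flipRow_flipRow]

theorem eq_of_pushUp_eq {σ' : Config L} (h : IsPushable σ z) (hocc : pushOcc σ z ≤ 2)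
    (h' : IsPushable σ' z) (hocc' : pushOcc σ' z ≤ 2) (heq : pushUp σ z = pushUp σ' z) :
    σ = σ' := by
  rw [← h.pushUp_pushUp hocc, heq, h'.pushUp_pushUp hocc']

theorem isDefect_pushUp (h : IsPushable σ z) (j : ℕ) : SPM.isDefect (pushUp σ z) z.1 j =
    (SPM.isDefect σ z.1 j ^^ (decide (j = z.2) ^^ decide (j = z.2 + 1))) := by
  have hmate := h.isNeighbour_mateCol
  rw [pushUp, isDefect_flipRow σ h.snd_lt h.fst_le hmate.le]
  simp [hmate.ne.symm]

end IsPushable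

theorem pushUp_mem_upSet {σ : Config L} {z : ℕ × ℕ} {j : ℕ} (hz : z ∈ upSet σ (j + 1)) :
    (z.1, z.2 + 1) ∈ upSet (pushUp σ z) j := by
  have h := mem_upSet.1 hz
  have hdefect := h.isPushable.isDefect_pushUp
  have hnext : isDefect σ z.1 (z.2 + 1) = false := h.isDefect_between 0 j.succ_pos
  have hfar (i : ℕ) : isDefect (pushUp σ z) z.1 (z.2 + 1 + 1 + i) =
      isDefect σ z.1 (z.2 + 1 + (i + 1)) := by
    rw [hdefect, show z.2 + 1 + 1 + i = z.2 + 1 + (i + 1) by ring,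
      decide_eq_false (by omega), decide_eq_false (by omega), Bool.xor_false, Bool.xor_false]
  have hle := h.snd_add_le
  refine mem_upSet.2 ⟨h.fst_le, by dsimp only; omega, ?_, ?_, fun i hi => ?_⟩
  · simp [hdefect, hnext]
  · exact (hfar j).trans h.isDefect_above
  · exact (hfar i).trans (h.isDefect_between (i + 1) (Nat.succ_lt_succ hi))

theorem three_le_pushOcc_of_mem_upSet_zero {σ : Config L} {z : ℕ × ℕ} (hz : z ∈ upSet σ 0) :
    3 ≤ pushOcc σ z := by
  have h := mem_upSet.1 hz
  have htwo : occ σ z.2 z.1 = 2 := by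
    have habove : isDefect σ z.1 (z.2 + 1) = true := h.isDefect_above
    simp [occ, h.isDefect, habove]
  have hmate : 0 < occ σ z.2 (mateCol σ z.2 z.1) := h.isPushable.isNeighbour_mateCol.mem
  unfold pushOcc
  omega

end PushUp

section Hardy

variable {L : ℕ}

/-- The sum of `F σ z` over the configurations `σ` and the defects `z` of `σ` whose nearest defect
above is at distance `j + 1`. -/
def upSum (j : ℕ) (F : Config L → ℕ × ℕ → ℝ) : ℝ := ∑ σ, ∑ z ∈ upSet σ j, F σ z

theorem upSum_mono (j : ℕ) {F G : Config L → ℕ × ℕ → ℝ}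
    (h : ∀ σ z, IsUpPair σ j z → F σ z ≤ G σ z) : upSum j F ≤ upSum j G :=
  Finset.sum_le_sum fun σ _ => Finset.sum_le_sum fun z hz => h σ z (mem_upSet.1 hz)

theorem upSum_pushUp_le {F : Config L → ℝ} (hF : ∀ σ, 0 ≤ F σ) (j : ℕ) :
    upSum (j + 1) (fun σ z => if pushOcc σ z ≤ 2 then F (pushUp σ z) else 0) ≤
      upSum j fun σ _ => F σ := by
  let push : (Σ _ : Config L, ℕ × ℕ) → Σ _ : Config L, ℕ × ℕ :=
    fun p => ⟨pushUp p.1 p.2, (p.2.1, p.2.2 + 1)⟩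
  let V : Finset (Σ _ : Config L, ℕ × ℕ) :=
    {p ∈ Finset.univ.sigma fun σ => upSet σ (j + 1) | pushOcc p.1 p.2 ≤ 2}
  have hmem {p : Σ _ : Config L, ℕ × ℕ} (hp : p ∈ V) :
      p.2 ∈ upSet p.1 (j + 1) ∧ pushOcc p.1 p.2 ≤ 2 := by
    obtain ⟨hup, hocc⟩ := Finset.mem_filter.1 hp
    exact ⟨(Finset.mem_sigma.1 hup).2, hocc⟩
  have hinj : Set.InjOn push V := by
    rintro ⟨σ, x, y⟩ hp ⟨σ', x', y'⟩ hp' h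
    simp only [push, Sigma.mk.injEq, heq_eq_eq, Prod.mk.injEq, Nat.add_right_cancel_iff] at h
    obtain ⟨hσ, rfl, rfl⟩ := h
    obtain ⟨hup, hocc⟩ := hmem hp
    obtain ⟨hup', hocc'⟩ := hmem hp'
    have hσσ' : σ = σ' :=
      (mem_upSet.1 hup).isPushable.eq_of_pushUp_eq hocc (mem_upSet.1 hup').isPushable hocc' hσ
    rw [hσσ']
  unfold upSum
  rw [Finset.sum_sigma', Finset.sum_sigma', ← Finset.sum_filter]
  rw [← Finset.sum_image (f := fun p => F p.1) (g := push) hinj]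
  refine Finset.sum_le_sum_of_subset_of_nonneg ?_ fun p _ _ => hF p.1
  exact Finset.image_subset_iff.2 fun p hp =>
    Finset.mem_sigma.2 ⟨Finset.mem_univ _, pushUp_mem_upSet (hmem hp).1⟩

/-- The weighted value of `f` after the flip of a row, if that flip removes defects. -/
def terminalTerm (β : ℝ) (f : Config L → ℝ) (σ : Config L) (y x u : ℕ) : ℝ :=
  if x ≠ u ∧ 3 ≤ occ σ y x + occ σ y u then gibbs L β σ * f (flipRow σ y x u) ^ 2 else 0

theorem terminalTerm_nonneg (β : ℝ) (f : Config L → ℝ) (σ : Config L) (y x u : ℕ) :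
    0 ≤ terminalTerm β f σ y x u := by
  have := gibbs_pos β σ
  unfold terminalTerm
  split_ifs <;> positivity

/-- The error in the Hardy recursion at the defect `z`: the squared increment of `f` along `pushUp`,
and the value of `f` after a push that removes defects. -/
def hardyTerm (β : ℝ) (f : Config L → ℝ) (σ : Config L) (z : ℕ × ℕ) : ℝ :=
  (1 + L) * (gibbs L β σ * (f (pushUp σ z) - f σ) ^ 2) +
    2 * terminalTerm β f σ z.2 z.1 (mateCol σ z.2 z.1)

theorem hardyTerm_nonneg (β : ℝ) (f : Config L → ℝ) (σ : Config L) (z : ℕ × ℕ) :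
    0 ≤ hardyTerm β f σ z := by
  have := gibbs_pos β σ
  have := terminalTerm_nonneg β f σ z.2 z.1 (mateCol σ z.2 z.1)
  unfold hardyTerm
  positivity

theorem sq_le_add_sq_sub {l : ℝ} (hl : 0 < l) (a b : ℝ) :
    a ^ 2 ≤ (1 + 1 / l) * b ^ 2 + (1 + l) * (b - a) ^ 2 := by
  have hsq : (1 + 1 / l) * b ^ 2 + (1 + l) * (b - a) ^ 2 - a ^ 2 =
      1 / l * (b + l * (b - a)) ^ 2 := by
    field_simp
    ring
  have hnonneg : 0 ≤ 1 / l * (b + l * (b - a)) ^ 2 := by positivity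
  linarith

theorem IsPushable.gibbs_mul_sq_le_of_three_le {σ : Config L} {z : ℕ × ℕ} (h : IsPushable σ z)
    (hocc : 3 ≤ pushOcc σ z) (β : ℝ) (f : Config L → ℝ) :
    gibbs L β σ * f σ ^ 2 ≤ hardyTerm β f σ z := by
  have hL : (1 : ℝ) ≤ L := by exact_mod_cast (Nat.zero_le _).trans_lt h.snd_lt
  rw [hardyTerm, terminalTerm, if_pos ⟨h.isNeighbour_mateCol.ne.symm, hocc⟩]
  calc gibbs L β σ * f σ ^ 2
      ≤ gibbs L β σ * ((1 + L) * (f (pushUp σ z) - f σ) ^ 2 + 2 * f (pushUp σ z) ^ 2) := by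
        refine mul_le_mul_of_nonneg_left ?_ (gibbs_pos β σ).le
        have := sq_le_add_sq_sub one_pos (f σ) (f (pushUp σ z))
        nlinarith [sq_nonneg (f (pushUp σ z) - f σ)]
    _ = _ := by rw [← pushUp]; ring

theorem IsPushable.gibbs_mul_sq_le_of_le_two {σ : Config L} {z : ℕ × ℕ} (h : IsPushable σ z)
    (hocc : pushOcc σ z ≤ 2) (β : ℝ) (f : Config L → ℝ) :
    gibbs L β σ * f σ ^ 2 ≤ (1 + 1 / L) * (gibbs L β (pushUp σ z) * f (pushUp σ z) ^ 2) +
      hardyTerm β f σ z := by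
  have hL : (0 : ℝ) < L := by exact_mod_cast (Nat.zero_le _).trans_lt h.snd_lt
  have hgibbs : gibbs L β (pushUp σ z) = gibbs L β σ := by
    rw [gibbs_eq, gibbs_eq, h.energy_pushUp_eq hocc]
  have hterminal := terminalTerm_nonneg β f σ z.2 z.1 (mateCol σ z.2 z.1)
  have hmul := mul_le_mul_of_nonneg_left (sq_le_add_sq_sub hL (f σ) (f (pushUp σ z)))
    (gibbs_pos β σ).le
  rw [hgibbs, hardyTerm]
  linarith

theorem hardy_step (β : ℝ) (f : Config L → ℝ) (j : ℕ) :
    upSum (j + 1) (fun σ _ => gibbs L β σ * f σ ^ 2) ≤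
      (1 + 1 / L) * upSum j (fun σ _ => gibbs L β σ * f σ ^ 2) +
        upSum (j + 1) (hardyTerm β f) := by
  let g : Config L → ℝ := fun σ => gibbs L β σ * f σ ^ 2
  have hg (σ : Config L) : 0 ≤ g σ := mul_nonneg (gibbs_pos β σ).le (sq_nonneg _)
  calc upSum (j + 1) (fun σ _ => g σ)
      ≤ upSum (j + 1) fun σ z => (1 + 1 / L) * (if pushOcc σ z ≤ 2 then g (pushUp σ z) else 0) +
          hardyTerm β f σ z := by
        refine upSum_mono (j + 1) fun σ z hz => ?_
        split_ifs with hocc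
        · exact hz.isPushable.gibbs_mul_sq_le_of_le_two hocc β f
        · rw [mul_zero, zero_add]
          exact hz.isPushable.gibbs_mul_sq_le_of_three_le (by omega) β f
    _ = (1 + 1 / L) * upSum (j + 1) (fun σ z => if pushOcc σ z ≤ 2 then g (pushUp σ z) else 0) +
          upSum (j + 1) (hardyTerm β f) := by
        simp only [upSum, Finset.sum_add_distrib, Finset.mul_sum]
    _ ≤ _ := add_le_add_left
        (mul_le_mul_of_nonneg_left (upSum_pushUp_le hg j) (by positivity)) _

theorem hardy_inequality (β : ℝ) (f : Config L → ℝ) :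
    ∑ j ∈ Finset.range L, upSum j (fun σ _ => gibbs L β σ * f σ ^ 2) ≤
      3 * L * ∑ j ∈ Finset.range L, upSum j (hardyTerm β f) := by
  refine sum_le_of_recursion (fun j => Finset.sum_nonneg fun σ _ => Finset.sum_nonneg
    fun z _ => hardyTerm_nonneg β f σ z) ?_ (hardy_step β f)
  exact upSum_mono 0 fun σ z hz => hz.isPushable.gibbs_mul_sq_le_of_three_le
    (three_le_pushOcc_of_mem_upSet_zero (mem_upSet.2 hz)) β f

theorem sum_upSet_le_sum_columns {σ : Config L} {F : ℕ × ℕ → ℝ} {K : ℕ → ℕ → ℕ → ℝ}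
    (hK : ∀ y x u, 0 ≤ K y x u)
    (hF : ∀ z, IsPushable σ z → F z ≤ K z.2 z.1 (mateCol σ z.2 z.1)) :
    ∑ j ∈ Finset.range L, ∑ z ∈ upSet σ j, F z ≤
      ∑ y ∈ Finset.range L, ∑ x ∈ Finset.range (L + 1), ∑ u ∈ Finset.range (L + 1), K y x u := by
  have hpush {z : ℕ × ℕ} (hz : z ∈ (Finset.range L).biUnion (upSet σ)) : IsPushable σ z := by
    obtain ⟨j, -, hj⟩ := Finset.mem_biUnion.1 hz
    exact (mem_upSet.1 hj).isPushable
  rw [← Finset.sum_biUnion fun j _ j' _ hne => disjoint_upSet σ hne]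
  calc ∑ z ∈ (Finset.range L).biUnion (upSet σ), F z
      ≤ ∑ z ∈ (Finset.range L).biUnion (upSet σ), ∑ u ∈ Finset.range (L + 1), K z.2 z.1 u := by
        refine Finset.sum_le_sum fun z hz => (hF z (hpush hz)).trans ?_
        exact Finset.single_le_sum (f := fun u => K z.2 z.1 u) (fun u _ => hK _ _ _)
          (Finset.mem_range.2 (Nat.lt_succ_of_le (hpush hz).isNeighbour_mateCol.le))
    _ ≤ ∑ z ∈ Finset.range (L + 1) ×ˢ Finset.range L, ∑ u ∈ Finset.range (L + 1), K z.2 z.1 u := by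
        refine Finset.sum_le_sum_of_subset_of_nonneg (fun z hz => ?_)
          fun z _ _ => Finset.sum_nonneg fun u _ => hK _ _ _
        exact Finset.mem_product.2 ⟨Finset.mem_range.2 (Nat.lt_succ_of_le (hpush hz).fst_le),
          Finset.mem_range.2 (hpush hz).snd_lt⟩
    _ = _ := Finset.sum_product_right _ _ _

theorem sum_sum_sum_sum_comm {ι α β γ M : Type*} [AddCommMonoid M] (r : Finset ι) (s : Finset α)
    (t : Finset β) (u : Finset γ) (F : ι → α → β → γ → M) :
    ∑ i ∈ r, ∑ a ∈ s, ∑ b ∈ t, ∑ c ∈ u, F i a b c =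
      ∑ a ∈ s, ∑ b ∈ t, ∑ c ∈ u, ∑ i ∈ r, F i a b c := by
  rw [Finset.sum_comm]
  refine Finset.sum_congr rfl fun a _ => ?_
  rw [Finset.sum_comm]
  exact Finset.sum_congr rfl fun b _ => Finset.sum_comm

theorem sum_upSum_le_sum_columns {F : Config L → ℕ × ℕ → ℝ} {K : Config L → ℕ → ℕ → ℕ → ℝ}
    (hK : ∀ σ y x u, 0 ≤ K σ y x u)
    (hF : ∀ σ z, IsPushable σ z → F σ z ≤ K σ z.2 z.1 (mateCol σ z.2 z.1)) :
    ∑ j ∈ Finset.range L, upSum j F ≤ ∑ y ∈ Finset.range L, ∑ x ∈ Finset.range (L + 1),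
      ∑ u ∈ Finset.range (L + 1), ∑ σ, K σ y x u := by
  calc ∑ j ∈ Finset.range L, upSum j F = ∑ σ, ∑ j ∈ Finset.range L, ∑ z ∈ upSet σ j, F σ z :=
        Finset.sum_comm
    _ ≤ ∑ σ, ∑ y ∈ Finset.range L, ∑ x ∈ Finset.range (L + 1), ∑ u ∈ Finset.range (L + 1),
          K σ y x u := Finset.sum_le_sum fun σ _ => sum_upSet_le_sum_columns (hK σ) (hF σ)
    _ = _ := sum_sum_sum_sum_comm _ _ _ _ _

theorem sum_sq_pushUp_le (β : ℝ) (f : Config L → ℝ) :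
    ∑ j ∈ Finset.range L, upSum j (fun σ z => gibbs L β σ * (f (pushUp σ z) - f σ) ^ 2) ≤
      2 * runSum β f := by
  refine (sum_upSum_le_sum_columns
    (K := fun σ y x u => consecTerm β f σ y x u + consecTerm β f σ y u x)
    (fun σ y x u => add_nonneg (consecTerm_nonneg _ _ _ _ _ _) (consecTerm_nonneg _ _ _ _ _ _))
    fun σ z hz => ?_).trans_eq ?_
  · rcases hz.consec_mateCol with hc | hc
    · refine le_add_of_le_of_nonneg (le_of_eq ?_) (consecTerm_nonneg _ _ _ _ _ _)
      rw [consecTerm, if_pos hc, pushUp]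
    · refine le_add_of_nonneg_of_le (consecTerm_nonneg _ _ _ _ _ _) (le_of_eq ?_)
      rw [consecTerm, if_pos hc, pushUp, flipRow_comm]
  · simp only [Finset.sum_add_distrib]
    rw [two_mul, runSum]
    congr 1
    exact Finset.sum_congr rfl fun y _ => Finset.sum_comm

theorem terminalTerm_flipRow_le (β : ℝ) (f : Config L → ℝ) (τ : Config L) {y x u : ℕ} (hy : y < L)
    (hx : x ≤ L) (hu : u ≤ L) :
    terminalTerm β f (flipRow τ y x u) y x u ≤
      (Real.exp (-4 * β) + (occ τ y x + occ τ y u) * Real.exp (-2 * β)) *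
        (gibbs L β τ * f τ ^ 2) := by
  have hgibbs := gibbs_pos β τ
  rw [terminalTerm, flipRow_flipRow]
  split_ifs with h
  · obtain ⟨hne, hocc⟩ := h
    have hleft := occ_flipRow_left τ hy hx hu hne
    have hright := occ_flipRow_right τ hy hx hu hne
    have henergy : (energy (flipRow τ y x u) : ℝ) =
        energy τ + (4 - 2 * ((occ τ y x + occ τ y u : ℕ) : ℝ)) := by
      have : (energy (flipRow τ y x u) : ℝ) + 2 * ((occ τ y x + occ τ y u : ℕ) : ℝ) =
        energy τ + 4 := by exact_mod_cast energy_flipRow τ hy hx hu hne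
      linarith
    rw [gibbs_eq_mul_of_energy henergy, mul_assoc, ← Nat.cast_add]
    refine mul_le_mul_of_nonneg_right ?_ (by positivity)
    obtain hsum | hsum : occ τ y x + occ τ y u = 0 ∨ occ τ y x + occ τ y u = 1 := by omega
    · rw [hsum, Nat.cast_zero, show -β * (4 - 2 * 0) = -4 * β by ring, zero_mul, add_zero]
    · rw [hsum, Nat.cast_one, show -β * (4 - 2 * 1) = -2 * β by ring, one_mul]
      linarith [Real.exp_pos (-4 * β)]
  · positivity

theorem sum_columns_exp_le (β : ℝ) {τ : Config L} (hτ : τ ≠ allPlus L) :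
    ∑ y ∈ Finset.range L, ∑ x ∈ Finset.range (L + 1), ∑ u ∈ Finset.range (L + 1),
      (Real.exp (-4 * β) + (occ τ y x + occ τ y u) * Real.exp (-2 * β)) ≤
    (4 * (L + 1) * Real.exp (-2 * β) + L * (L + 1) ^ 2 * Real.exp (-4 * β)) * energy τ := by
  have henergy : (1 : ℝ) ≤ energy τ := by
    exact_mod_cast (by norm_num : 1 ≤ 4).trans (four_le_energy hτ)
  have hocc : ∑ y ∈ Finset.range L, ∑ x ∈ Finset.range (L + 1), (occ τ y x : ℝ) ≤
      2 * energy τ := by exact_mod_cast sum_occ_le τ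
  calc ∑ y ∈ Finset.range L, ∑ x ∈ Finset.range (L + 1), ∑ u ∈ Finset.range (L + 1),
        (Real.exp (-4 * β) + (occ τ y x + occ τ y u) * Real.exp (-2 * β))
      = L * (L + 1) ^ 2 * Real.exp (-4 * β) + 2 * (L + 1) * Real.exp (-2 * β) *
          ∑ y ∈ Finset.range L, ∑ x ∈ Finset.range (L + 1), (occ τ y x : ℝ) := by
        simp only [Finset.sum_add_distrib, Finset.sum_const, Finset.card_range, nsmul_eq_mul,
          ← Finset.sum_mul, ← Finset.mul_sum]
        push_cast
        ring
    _ ≤ L * (L + 1) ^ 2 * Real.exp (-4 * β) * energy τ +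
          2 * (L + 1) * Real.exp (-2 * β) * (2 * energy τ) :=
        add_le_add (le_mul_of_one_le_right (by positivity) henergy)
          (mul_le_mul_of_nonneg_left hocc (by positivity))
    _ = _ := by ring

theorem sum_terminalTerm_le (β : ℝ) {f : Config L → ℝ} (hf : f (allPlus L) = 0) :
    ∑ j ∈ Finset.range L,
      upSum j (fun σ z => terminalTerm β f σ z.2 z.1 (mateCol σ z.2 z.1)) ≤
    (4 * (L + 1) * Real.exp (-2 * β) + L * (L + 1) ^ 2 * Real.exp (-4 * β)) *
      ∑ σ, gibbs L β σ * energy σ * f σ ^ 2 := by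
  refine (sum_upSum_le_sum_columns (terminalTerm_nonneg β f) fun σ z _ => le_rfl).trans ?_
  calc ∑ y ∈ Finset.range L, ∑ x ∈ Finset.range (L + 1), ∑ u ∈ Finset.range (L + 1),
        ∑ σ, terminalTerm β f σ y x u
      ≤ ∑ y ∈ Finset.range L, ∑ x ∈ Finset.range (L + 1), ∑ u ∈ Finset.range (L + 1), ∑ τ,
          (Real.exp (-4 * β) + (occ τ y x + occ τ y u) * Real.exp (-2 * β)) *
            (gibbs L β τ * f τ ^ 2) := by
        refine Finset.sum_le_sum fun y hy => Finset.sum_le_sum fun x hx =>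
          Finset.sum_le_sum fun u hu => ?_
        rw [← sum_comp_flipRow y x u]
        exact Finset.sum_le_sum fun τ _ => terminalTerm_flipRow_le β f τ (Finset.mem_range.1 hy)
          (Finset.mem_range_succ_iff.1 hx) (Finset.mem_range_succ_iff.1 hu)
    _ = ∑ τ, (∑ y ∈ Finset.range L, ∑ x ∈ Finset.range (L + 1), ∑ u ∈ Finset.range (L + 1),
          (Real.exp (-4 * β) + (occ τ y x + occ τ y u) * Real.exp (-2 * β))) *
            (gibbs L β τ * f τ ^ 2) := by
        simp_rw [Finset.sum_mul]
        exact (sum_sum_sum_sum_comm _ _ _ _ _).symm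
    _ ≤ _ := by
        rw [Finset.mul_sum]
        refine Finset.sum_le_sum fun τ _ => ?_
        rcases eq_or_ne τ (allPlus L) with rfl | hτ
        · simp [hf]
        · have hgibbs := gibbs_pos β τ
          refine (mul_le_mul_of_nonneg_right (sum_columns_exp_le β hτ) (by positivity)).trans_eq ?_
          ring

theorem sum_energy_mul_sq_le (β : ℝ) (f : Config L → ℝ) :
    ∑ σ, gibbs L β σ * energy σ * f σ ^ 2 ≤
      2 * ∑ j ∈ Finset.range L, upSum j (fun σ _ => gibbs L β σ * f σ ^ 2) := by
  simp only [upSum]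
  rw [Finset.sum_comm, Finset.mul_sum]
  refine Finset.sum_le_sum fun σ _ => ?_
  simp only [Finset.sum_const, nsmul_eq_mul, ← Finset.sum_mul]
  have hcard : (energy σ : ℝ) ≤ 2 * ∑ j ∈ Finset.range L, ((upSet σ j).card : ℝ) := by
    exact_mod_cast energy_le_two_mul_sum_card_upSet σ
  have := gibbs_pos β σ
  calc gibbs L β σ * energy σ * f σ ^ 2 = energy σ * (gibbs L β σ * f σ ^ 2) := by ring
    _ ≤ _ := by
      rw [← mul_assoc 2]
      exact mul_le_mul_of_nonneg_right hcard (by positivity)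

theorem energyPoincare_gen {β : ℝ} (hβ : 0 ≤ β)
    (hsmall : 12 * L * (4 * (L + 1) * Real.exp (-2 * β) + L * (L + 1) ^ 2 * Real.exp (-4 * β)) ≤
      1 / 2) :
    EnergyPoincare (gen L β) (gibbs L β) (fun σ => (energy σ : ℝ)) (allPlus L)
      (48 * L ^ 2 * (1 + L) * (Real.exp (2 * β) + (L + 1))) := by
  intro f hf
  set Q := ∑ σ, gibbs L β σ * energy σ * f σ ^ 2
  set D := dirichlet (gen L β) (gibbs L β) f
  let S := ∑ j ∈ Finset.range L,
    upSum j (fun σ z => gibbs L β σ * (f (pushUp σ z) - f σ) ^ 2)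
  let T := ∑ j ∈ Finset.range L,
    upSum j (fun σ z => terminalTerm β f σ z.2 z.1 (mateCol σ z.2 z.1))
  have hQ : 0 ≤ Q := Finset.sum_nonneg fun σ _ =>
    mul_nonneg (mul_nonneg (gibbs_pos β σ).le (Nat.cast_nonneg _)) (sq_nonneg _)
  have hhardy : Q ≤ 6 * L * (1 + L) * S + 12 * L * T := by
    calc Q ≤ 2 * (3 * L * ∑ j ∈ Finset.range L, upSum j (hardyTerm β f)) :=
          (sum_energy_mul_sq_le β f).trans
            (mul_le_mul_of_nonneg_left (hardy_inequality β f) zero_le_two)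
      _ = 2 * (3 * L * ((1 + L) * S + 2 * T)) := by
          simp only [S, T, upSum, hardyTerm, Finset.sum_add_distrib, Finset.mul_sum]
      _ = _ := by ring
  have hS : S ≤ 2 * (L * (Real.exp (2 * β) + (L + 1)) * (2 * D)) :=
    (sum_sq_pushUp_le β f).trans (mul_le_mul_of_nonneg_left (runSum_le hβ f) zero_le_two)
  have hT : 12 * L * T ≤ 1 / 2 * Q := by
    refine le_trans ?_ (mul_le_mul_of_nonneg_right hsmall hQ)
    rw [mul_assoc (12 * (L : ℝ))]
    exact mul_le_mul_of_nonneg_left (sum_terminalTerm_le β hf) (by positivity)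
  calc Q ≤ 2 * (6 * L * (1 + L) * S) := by linarith
    _ ≤ 2 * (6 * L * (1 + L) * (2 * (L * (Real.exp (2 * β) + (L + 1)) * (2 * D)))) := by gcongr
    _ = _ := by ring

end Hardy

/-! ### The minus area as a test function -/

section MinusArea

variable {L : ℕ}

/-- The number of minus spins. -/
def minusCount (σ : Config L) : ℕ := (Finset.univ.filter fun k => σ k = false).card

/-- The test function for the lower bound on the mixing time: the minus area above the threshold
`2L`. The threshold makes it locally constant at the thin rectangles, which are the configurations
with four defects that can be changed without raising the energy. -/
def areaFn (σ : Config L) : ℝ := max 0 ((minusCount σ : ℝ) - 2 * L)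

/-- The sites whose flip does not increase the energy. -/
def easySites (σ : Config L) : Finset (Fin L × Fin L) :=
  Finset.univ.filter fun x => energy (flip L σ x) ≤ energy σ

theorem minusCount_flip_le (σ : Config L) (x : Fin L × Fin L) :
    minusCount (flip L σ x) ≤ minusCount σ + 1 := by
  refine (Finset.card_le_card fun k hk => ?_).trans (Finset.card_insert_le x _)
  rw [Finset.mem_insert, or_iff_not_imp_left]
  intro hkx
  simpa [flip, hkx] using hk

theorem areaFn_eq_zero {σ : Config L} (h : minusCount σ ≤ 2 * L) : areaFn σ = 0 := by
  have hcast : (minusCount σ : ℝ) ≤ 2 * L := by exact_mod_cast h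
  exact max_eq_left (by linarith)

theorem areaFn_allPlus : areaFn (allPlus L) = 0 :=
  areaFn_eq_zero (by simp [minusCount, allPlus])

theorem sq_areaFn_flip_sub_le_one (σ : Config L) (x : Fin L × Fin L) :
    (areaFn (flip L σ x) - areaFn σ) ^ 2 ≤ 1 := by
  have hflip : (minusCount (flip L σ x) : ℝ) ≤ minusCount σ + 1 := by
    exact_mod_cast minusCount_flip_le σ x
  have hback : (minusCount σ : ℝ) ≤ minusCount (flip L σ x) + 1 := by
    have := minusCount_flip_le (flip L σ x) x
    rw [flip_flip] at this
    exact_mod_cast this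
  rw [sq_le_one_iff_abs_le_one]
  refine (abs_max_sub_max_le_max _ _ _ _).trans ?_
  rw [sub_self, abs_zero, max_le_iff, abs_le]
  exact ⟨zero_le_one, by linarith, by linarith⟩

-- Each edge `{σ, flip L σ x}` is charged to its endpoint of higher energy.
theorem dirichlet_le_sum_easySites (β : ℝ) (f : Config L → ℝ) :
    dirichlet (gen L β) (gibbs L β) f ≤
      ∑ σ, ∑ x ∈ easySites σ, gibbs L β σ * (f (flip L σ x) - f σ) ^ 2 := by
  let charge (σ : Config L) (x : Fin L × Fin L) : ℝ :=
    if energy (flip L σ x) ≤ energy σ then gibbs L β σ * (f (flip L σ x) - f σ) ^ 2 else 0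
  have charge_nonneg (σ : Config L) (x : Fin L × Fin L) : 0 ≤ charge σ x := by
    have := gibbs_pos β σ
    dsimp only [charge]
    split_ifs <;> positivity
  have edge_le (σ : Config L) (x : Fin L × Fin L) :
      min (gibbs L β σ) (gibbs L β (flip L σ x)) * (f (flip L σ x) - f σ) ^ 2 ≤
        charge σ x + charge (flip L σ x) x := by
    rcases le_total (energy (flip L σ x)) (energy σ) with h | h
    · refine le_add_of_le_of_nonneg ?_ (charge_nonneg _ _)
      dsimp only [charge]
      rw [if_pos h]
      exact mul_le_mul_of_nonneg_right (min_le_left _ _) (sq_nonneg _)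
    · refine le_add_of_nonneg_of_le (charge_nonneg _ _) ?_
      dsimp only [charge]
      rw [flip_flip, if_pos h, ← neg_sub (f (flip L σ x)) (f σ), neg_sq]
      exact mul_le_mul_of_nonneg_right (min_le_right _ _) (sq_nonneg _)
  have sum_charge_flip : ∑ σ : Config L, ∑ x, charge (flip L σ x) x = ∑ σ, ∑ x, charge σ x := by
    rw [Finset.sum_comm, Finset.sum_comm (f := charge)]
    exact Finset.sum_congr rfl fun x _ => Equiv.sum_comp
      (Function.Involutive.toPerm (fun σ => flip L σ x) fun σ => flip_flip σ x)
      (fun σ => charge σ x)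
  simp_rw [dirichlet_gen, easySites, Finset.sum_filter]
  rw [div_le_iff₀ two_pos, mul_two]
  refine (Finset.sum_le_sum fun σ _ => Finset.sum_le_sum fun x _ => edge_le σ x).trans_eq ?_
  simp_rw [Finset.sum_add_distrib]
  rw [sum_charge_flip]

theorem energy_flip (σ : Config L) (x : Fin L × Fin L) :
    energy (flip L σ x) + 2 * (occ σ x.2 x.1 + occ σ x.2 (x.1 + 1)) = energy σ + 4 := by
  rw [flip_eq_flipRect]
  exact energy_flipRow σ x.2.2 x.1.2.le x.1.2 (Nat.lt_succ_self x.1).ne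

theorem mem_easySites {σ : Config L} {x : Fin L × Fin L} :
    x ∈ easySites σ ↔ 2 ≤ occ σ x.2 x.1 + occ σ x.2 (x.1 + 1) := by
  have := energy_flip σ x
  simp only [easySites, Finset.mem_filter, Finset.mem_univ, true_and]
  omega

theorem card_easySites_le (σ : Config L) : (easySites σ).card ≤ 2 * energy σ := by
  have hrow (y : ℕ) : ∑ x ∈ Finset.range L, (occ σ y x + occ σ y (x + 1)) ≤
      2 * ∑ x ∈ Finset.range (L + 1), occ σ y x := by
    rw [Finset.sum_add_distrib]
    have hlast := Finset.sum_range_succ (occ σ y) L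
    have hfirst := Finset.sum_range_succ' (occ σ y) L
    omega
  have htotal : (easySites σ).card * 2 ≤ 2 * (2 * energy σ) := by
    calc (easySites σ).card * 2 ≤ ∑ x ∈ easySites σ, (occ σ x.2 x.1 + occ σ x.2 (x.1 + 1)) := by
          rw [← smul_eq_mul]
          exact Finset.card_nsmul_le_sum _ _ _ fun x hx => mem_easySites.1 hx
      _ ≤ ∑ x : Fin L × Fin L, (occ σ x.2 x.1 + occ σ x.2 (x.1 + 1)) :=
          Finset.sum_le_sum_of_subset (Finset.subset_univ _)
      _ = ∑ y ∈ Finset.range L, ∑ x ∈ Finset.range L, (occ σ y x + occ σ y (x + 1)) := by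
          simp only [Fintype.sum_prod_type_right, Finset.sum_range]
      _ ≤ ∑ y ∈ Finset.range L, 2 * ∑ x ∈ Finset.range (L + 1), occ σ y x :=
          Finset.sum_le_sum fun y _ => hrow y
      _ ≤ 2 * (2 * energy σ) := by
          rw [← Finset.mul_sum]
          exact Nat.mul_le_mul_left 2 (sum_occ_le σ)
  omega

theorem sum_easySites_areaFn_le (β : ℝ) (σ : Config L) :
    ∑ x ∈ easySites σ, gibbs L β σ * (areaFn (flip L σ x) - areaFn σ) ^ 2 ≤
      2 * (energy σ * Real.exp (-β * energy σ)) := by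
  have hterm : ∀ x ∈ easySites σ, gibbs L β σ * (areaFn (flip L σ x) - areaFn σ) ^ 2 ≤
      Real.exp (-β * energy σ) := fun x _ =>
    (mul_le_of_le_one_right (gibbs_pos β σ).le (sq_areaFn_flip_sub_le_one σ x)).trans
      (gibbs_le_exp β σ)
  refine (Finset.sum_le_card_nsmul _ _ _ hterm).trans ?_
  rw [nsmul_eq_mul, ← mul_assoc]
  refine mul_le_mul_of_nonneg_right ?_ (Real.exp_pos _).le
  exact_mod_cast card_easySites_le σ

end MinusArea

section FourDefects

variable {L : ℕ}

theorem exists_eq_flipRect_of_energy_eq_four {σ : Config L} (h : energy σ = 4) :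
    ∃ x ≤ L, ∃ u ≤ L, ∃ y ≤ L, ∃ v ≤ L, σ = flipRect (allPlus L) x u y v := by
  have hne : σ ≠ allPlus L := by
    rintro rfl
    rw [energy_allPlus] at h
    omega
  obtain ⟨z, hz⟩ := defectSet_nonempty hne
  obtain ⟨w, hw, hred⟩ := exists_rectangle_reduction hz
  obtain ⟨⟨hzx, hzy⟩, -⟩ := mem_defectSet.1 hz
  obtain ⟨hwx, hwy⟩ := mem_grid.1 hw
  refine ⟨z.1, hzx, w.1, hwx, z.2, hzy, w.2, hwy, ?_⟩
  have hground : flipRect σ z.1 w.1 z.2 w.2 = allPlus L := by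
    by_contra hcon
    have := four_le_energy hcon
    omega
  rw [← hground, flipRect_flipRect]

theorem adjacent_of_mem_easySites {x u y v : ℕ} (hx : x ≤ L) (hu : u ≤ L) (hy : y ≤ L)
    (hv : v ≤ L) {s : Fin L × Fin L} (h : s ∈ easySites (flipRect (allPlus L) x u y v)) :
    (u = x + 1 ∨ x = u + 1) ∨ (v = y + 1 ∨ y = v + 1) := by
  have hsparse (p q i : ℕ) (hpq : ¬ (q = p + 1 ∨ p = q + 1)) :
      ((decide (i = p) ^^ decide (i = q)) && (decide (i + 1 = p) ^^ decide (i + 1 = q))) =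
        false := by
    grind
  rw [mem_easySites] at h
  simp only [occ, isDefect_flipRect _ hx hu hy hv, isDefect_allPlus, Bool.false_xor] at h
  by_contra! hcon
  have hcols := hsparse x u s.1 (by omega)
  have hrows := hsparse y v s.2 (by omega)
  revert h hcols hrows
  generalize (decide ((s.1 : ℕ) = x) ^^ decide ((s.1 : ℕ) = u)) = left
  generalize (decide ((s.1 : ℕ) + 1 = x) ^^ decide ((s.1 : ℕ) + 1 = u)) = right
  generalize (decide ((s.2 : ℕ) = y) ^^ decide ((s.2 : ℕ) = v)) = lower
  generalize (decide ((s.2 : ℕ) + 1 = y) ^^ decide ((s.2 : ℕ) + 1 = v)) = upper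
  revert left right lower upper
  decide

theorem eq_of_between_adjacent {p q i j : ℕ} (h : q = p + 1 ∨ p = q + 1)
    (hi : between p q (i + 1) = true) (hj : between p q (j + 1) = true) : i = j := by
  rcases h with rfl | rfl
  · rw [between_succ, decide_eq_true_eq] at hi hj
    omega
  · rw [between_comm, between_succ, decide_eq_true_eq] at hi hj
    omega

theorem minusCount_flipRect_le_of_adjacent {x u y v : ℕ}
    (h : (u = x + 1 ∨ x = u + 1) ∨ (v = y + 1 ∨ y = v + 1)) :
    minusCount (flipRect (allPlus L) x u y v) ≤ L := by
  have hmem {k : Fin L × Fin L}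
      (hk : k ∈ Finset.univ.filter fun k => flipRect (allPlus L) x u y v k = false) :
      between x u (k.1 + 1) = true ∧ between y v (k.2 + 1) = true := by
    simpa [flipRect, allPlus] using hk
  refine le_of_le_of_eq ?_ (Finset.card_fin L)
  rcases h with h | h
  · refine Finset.card_le_card_of_injOn Prod.snd (fun _ _ => Finset.mem_univ _) ?_
    intro k hk k' hk' hsnd
    exact Prod.ext (Fin.ext (eq_of_between_adjacent h (hmem hk).1 (hmem hk').1)) hsnd
  · refine Finset.card_le_card_of_injOn Prod.fst (fun _ _ => Finset.mem_univ _) ?_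
    intro k hk k' hk' hfst
    exact Prod.ext hfst (Fin.ext (eq_of_between_adjacent h (hmem hk).2 (hmem hk').2))

theorem areaFn_flip_eq_of_energy_eq_four {σ : Config L} (h : energy σ = 4) {s : Fin L × Fin L}
    (hs : s ∈ easySites σ) : areaFn (flip L σ s) = areaFn σ := by
  obtain ⟨x, hx, u, hu, y, hy, v, hv, rfl⟩ := exists_eq_flipRect_of_energy_eq_four h
  have hthin := minusCount_flipRect_le_of_adjacent (L := L)
    (adjacent_of_mem_easySites hx hu hy hv hs)
  have hflip := minusCount_flip_le (flipRect (allPlus L) x u y v) s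
  have hL : 0 < L := s.1.pos
  rw [areaFn_eq_zero (by omega), areaFn_eq_zero (by omega)]

end FourDefects

section SixDefects

variable {L : ℕ}

/-- Two neighbouring plaquette columns both contain a defect. -/
def HasAdjacentColumns (σ : Config L) : Prop :=
  ∃ k < L, (∃ j ≤ L, isDefect σ k j = true) ∧ ∃ j ≤ L, isDefect σ (k + 1) j = true

/-- Reflection of a configuration in the diagonal, exchanging rows and columns. -/
def transposeConfig (σ : Config L) : Config L := fun k => σ (k.2, k.1)

theorem two_mul_card_rows_le_energy {σ : Config L} (rows : Finset ℕ)
    (h : ∀ r ∈ rows, r ≤ L ∧ ∃ i ≤ L, isDefect σ i r = true) : 2 * rows.card ≤ energy σ := by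
  have htwo : ∀ r ∈ rows, 2 ≤ ((defectSet σ).filter fun z => z.2 = r).card := by
    intro r hr
    obtain ⟨hrL, i, hi, hir⟩ := h r hr
    obtain ⟨u, hu, hui, hur⟩ := exists_row_mate hi hir
    refine Finset.one_lt_card.2 ⟨(i, r), ?_, (u, r), ?_, by simpa using hui.symm⟩
    · exact Finset.mem_filter.2 ⟨mem_defectSet.2 ⟨⟨hi, hrL⟩, hir⟩, rfl⟩
    · exact Finset.mem_filter.2 ⟨mem_defectSet.2 ⟨⟨hu, hrL⟩, hur⟩, rfl⟩
  calc 2 * rows.card = rows.card • 2 := by rw [smul_eq_mul, mul_comm]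
    _ ≤ ∑ r ∈ rows, ((defectSet σ).filter fun z => z.2 = r).card :=
        Finset.card_nsmul_le_sum _ _ _ htwo
    _ = ((defectSet σ).filter fun z => z.2 ∈ rows).card :=
        Finset.sum_card_fiberwise_eq_card_filter _ _ _
    _ ≤ energy σ := Finset.card_filter_le _ _

theorem exists_common_row_of_energy_lt_eight {σ : Config L} (h : energy σ < 8) {k : ℕ}
    (hk : k < L) (hleft : ∃ j ≤ L, isDefect σ k j = true)
    (hright : ∃ j ≤ L, isDefect σ (k + 1) j = true) :
    ∃ r ≤ L, isDefect σ k r = true ∧ isDefect σ (k + 1) r = true := by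
  obtain ⟨j₁, hj₁, d₁⟩ := hleft
  obtain ⟨j₂, hj₂, hne, d₂⟩ := exists_col_mate hj₁ d₁
  obtain ⟨j₃, hj₃, d₃⟩ := hright
  obtain ⟨j₄, hj₄, hne', d₄⟩ := exists_col_mate hj₃ d₃
  by_contra! hcon
  have hcross {i j : ℕ} (hi : i ≤ L) (hdi : isDefect σ k i = true)
      (hdj : isDefect σ (k + 1) j = true) : i ≠ j := by
    rintro rfl
    exact hcon i hi hdi hdj
  have hcard : ({j₁, j₂, j₃, j₄} : Finset ℕ).card = 4 := by
    rw [Finset.card_insert_of_notMem, Finset.card_insert_of_notMem, Finset.card_pair hne'.symm]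
    · simp [hcross hj₂ d₂ d₃, hcross hj₂ d₂ d₄]
    · simp [hne.symm, hcross hj₁ d₁ d₃, hcross hj₁ d₁ d₄]
  have hrows := two_mul_card_rows_le_energy (σ := σ) {j₁, j₂, j₃, j₄} (by
    simp only [Finset.mem_insert, Finset.mem_singleton]
    rintro r (rfl | rfl | rfl | rfl)
    exacts [⟨hj₁, k, hk.le, d₁⟩, ⟨hj₂, k, hk.le, d₂⟩, ⟨hj₃, k + 1, hk, d₃⟩,
      ⟨hj₄, k + 1, hk, d₄⟩])
  omega

theorem exists_flipRect_of_energy_eq_six {σ : Config L} (h : energy σ = 6)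
    (hadj : HasAdjacentColumns σ) :
    ∃ τ ∈ levelSet L 4, ∃ z ∈ defectSet τ, ∃ r ∈ Finset.range (L + 1),
      flipRect τ (z.1 - 1) z.1 r z.2 = σ := by
  obtain ⟨k, hk, hleft, hright⟩ := hadj
  obtain ⟨r, hr, hkr, hkr'⟩ := exists_common_row_of_energy_lt_eight (by omega) hk hleft hright
  obtain ⟨v, hv, hvr, hkv⟩ := exists_col_mate hr hkr
  have henergy := energy_flipRect σ hk.le hk hr hv (Nat.lt_succ_self k).ne hvr.symm
  rw [Nat.succ_eq_add_one, hkr, hkr', hkv, h, Bool.toNat_true] at henergy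
  have hne : flipRect σ k (k + 1) r v ≠ allPlus L := by
    intro hground
    rw [hground, energy_allPlus] at henergy
    have := Bool.toNat_le (isDefect σ (k + 1) v)
    omega
  have hfour := four_le_energy hne
  have hcorner : isDefect σ (k + 1) v = false := by
    rw [← Bool.toNat_eq_zero]
    omega
  rw [hcorner, Bool.toNat_false] at henergy
  refine ⟨flipRect σ k (k + 1) r v, mem_levelSet.2 (by omega), (k + 1, v),
    mem_defectSet.2 ⟨⟨hk, hv⟩, ?_⟩, r, Finset.mem_range.2 (by omega), ?_⟩
  · simp [isDefect_flipRect σ hk.le hk hr hv, hcorner, hvr]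
  · exact flipRect_flipRect σ k (k + 1) r v

theorem card_energy_six_adjacent_columns_le (L : ℕ) :
    (Finset.univ.filter fun σ : Config L => energy σ = 6 ∧ HasAdjacentColumns σ).card ≤
      4 * (L + 1) ^ 5 := by
  have hsub : (Finset.univ.filter fun σ : Config L => energy σ = 6 ∧ HasAdjacentColumns σ) ⊆
      (levelSet L 4).biUnion fun τ => (defectSet τ ×ˢ Finset.range (L + 1)).image
        fun q => flipRect τ (q.1.1 - 1) q.1.1 q.2 q.1.2 := by
    intro σ hσ
    obtain ⟨-, hsix, hadj⟩ := Finset.mem_filter.1 hσ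
    obtain ⟨τ, hτ, z, hz, r, hr, hflip⟩ := exists_flipRect_of_energy_eq_six hsix hadj
    rw [Finset.mem_biUnion]
    exact ⟨τ, hτ, Finset.mem_image.2 ⟨(z, r), Finset.mem_product.2 ⟨hz, hr⟩, hflip⟩⟩
  have hfiber : ∀ τ ∈ levelSet L 4, ((defectSet τ ×ˢ Finset.range (L + 1)).image
      fun q => flipRect τ (q.1.1 - 1) q.1.1 q.2 q.1.2).card ≤ 4 * (L + 1) := by
    intro τ hτ
    refine Finset.card_image_le.trans_eq ?_
    rw [Finset.card_product, Finset.card_range, ← mem_levelSet.1 hτ, energy]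
  calc _ ≤ (levelSet L 4).card * (4 * (L + 1)) :=
        (Finset.card_le_card hsub).trans (Finset.card_biUnion_le_card_mul _ _ _ hfiber)
    _ ≤ (L + 1) ^ 4 * (4 * (L + 1)) := Nat.mul_le_mul_right _ (card_levelSet_le L 4)
    _ = 4 * (L + 1) ^ 5 := by ring

theorem transposeConfig_transposeConfig (σ : Config L) :
    transposeConfig (transposeConfig σ) = σ := rfl

theorem minusAt_transposeConfig (σ : Config L) (i j : ℕ) :
    minusAt (transposeConfig σ) i j = minusAt σ j i := by
  refine decide_eq_decide.2 ⟨?_, ?_⟩ <;>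
  · rintro ⟨k, hi, hj, hk⟩
    exact ⟨(k.2, k.1), hj, hi, hk⟩

theorem isDefect_transposeConfig (σ : Config L) (i j : ℕ) :
    isDefect (transposeConfig σ) i j = isDefect σ j i := by
  simp only [isDefect, minusAt_transposeConfig, Bool.xor_assoc, Bool.xor_left_comm]

theorem energy_transposeConfig (σ : Config L) : energy (transposeConfig σ) = energy σ := by
  rw [energy_eq_sum, energy_eq_sum, grid, Finset.sum_product, Finset.sum_product_right]
  simp only [isDefect_transposeConfig]

theorem hasAdjacentColumns_of_mem_easySites {σ : Config L} {s : Fin L × Fin L}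
    (hs : s ∈ easySites σ) : HasAdjacentColumns σ ∨ HasAdjacentColumns (transposeConfig σ) := by
  obtain ⟨⟨a, ha⟩, ⟨b, hb⟩⟩ := s
  rw [mem_easySites, occ, occ] at hs
  dsimp only at hs
  have hcases : ((isDefect σ a b = true ∨ isDefect σ a (b + 1) = true) ∧
        (isDefect σ (a + 1) b = true ∨ isDefect σ (a + 1) (b + 1) = true)) ∨
      ((isDefect σ a b = true ∨ isDefect σ (a + 1) b = true) ∧
        (isDefect σ a (b + 1) = true ∨ isDefect σ (a + 1) (b + 1) = true)) := by
    revert hs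
    generalize isDefect σ a b = d₁
    generalize isDefect σ a (b + 1) = d₂
    generalize isDefect σ (a + 1) b = d₃
    generalize isDefect σ (a + 1) (b + 1) = d₄
    revert d₁ d₂ d₃ d₄
    decide
  unfold HasAdjacentColumns
  simp only [isDefect_transposeConfig]
  rcases hcases with ⟨hleft, hright⟩ | ⟨hlower, hupper⟩
  · exact Or.inl ⟨a, ha, hleft.elim (fun h => ⟨b, hb.le, h⟩) fun h => ⟨b + 1, hb, h⟩,
      hright.elim (fun h => ⟨b, hb.le, h⟩) fun h => ⟨b + 1, hb, h⟩⟩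
  · exact Or.inr ⟨b, hb, hlower.elim (fun h => ⟨a, ha.le, h⟩) fun h => ⟨a + 1, ha, h⟩,
      hupper.elim (fun h => ⟨a, ha.le, h⟩) fun h => ⟨a + 1, ha, h⟩⟩

theorem card_energy_six_easySites_nonempty_le (L : ℕ) :
    (Finset.univ.filter fun σ : Config L => energy σ = 6 ∧ (easySites σ).Nonempty).card ≤
      8 * (L + 1) ^ 5 := by
  set adjacent := Finset.univ.filter fun σ : Config L => energy σ = 6 ∧ HasAdjacentColumns σ
  have hsub : (Finset.univ.filter fun σ : Config L => energy σ = 6 ∧ (easySites σ).Nonempty) ⊆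
      adjacent ∪ adjacent.image transposeConfig := by
    intro σ hσ
    obtain ⟨-, hsix, s, hs⟩ := Finset.mem_filter.1 hσ
    rw [Finset.mem_union]
    rcases hasAdjacentColumns_of_mem_easySites hs with h | h
    · exact Or.inl (Finset.mem_filter.2 ⟨Finset.mem_univ _, hsix, h⟩)
    · exact Or.inr (Finset.mem_image.2 ⟨transposeConfig σ, Finset.mem_filter.2
        ⟨Finset.mem_univ _, (energy_transposeConfig σ).trans hsix, h⟩,
        transposeConfig_transposeConfig σ⟩)
  have hunion := (Finset.card_le_card hsub).trans (Finset.card_union_le _ _)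
  have himage : (adjacent.image transposeConfig).card ≤ adjacent.card := Finset.card_image_le
  have hadjacent : adjacent.card ≤ 4 * (L + 1) ^ 5 := card_energy_six_adjacent_columns_le L
  omega

end SixDefects

section AreaEstimates

variable {L : ℕ}

theorem energy_eq_or_seven_le (σ : Config L) :
    energy σ = 0 ∨ energy σ = 4 ∨ energy σ = 6 ∨ 7 ≤ energy σ := by
  have hfive : energy σ ≠ 5 := by
    rw [Ne, ← mem_levelSet, levelSet_five_eq_empty]
    exact Finset.notMem_empty σ
  by_cases hσ : σ = allPlus L
  · exact Or.inl (hσ ▸ energy_allPlus)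
  · have := four_le_energy hσ
    omega

theorem sum_easySites_areaFn_le_ite (β : ℝ) (σ : Config L) :
    ∑ x ∈ easySites σ, gibbs L β σ * (areaFn (flip L σ x) - areaFn σ) ^ 2 ≤
      (if energy σ = 6 ∧ (easySites σ).Nonempty then 12 * Real.exp (-β * 6) else 0) +
      (if 7 ≤ energy σ then 2 * (energy σ * Real.exp (-β * energy σ)) else 0) := by
  have hbound := sum_easySites_areaFn_le β σ
  have hsix_nonneg :
      0 ≤ if energy σ = 6 ∧ (easySites σ).Nonempty then 12 * Real.exp (-β * 6) else 0 := by
    split_ifs <;> positivity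
  rcases energy_eq_or_seven_le σ with h | h | h | h
  · rw [if_neg (show ¬ 7 ≤ energy σ by omega), add_zero]
    exact (hbound.trans_eq (by simp [h])).trans hsix_nonneg
  · rw [if_neg (show ¬ 7 ≤ energy σ by omega), add_zero]
    refine (Finset.sum_eq_zero fun x hx => ?_).trans_le hsix_nonneg
    rw [areaFn_flip_eq_of_energy_eq_four h hx, sub_self, zero_pow two_ne_zero, mul_zero]
  · rw [if_neg (show ¬ 7 ≤ energy σ by omega), add_zero]
    rcases (easySites σ).eq_empty_or_nonempty with hempty | hne
    · simpa only [hempty, Finset.sum_empty] using hsix_nonneg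
    · rw [if_pos ⟨h, hne⟩]
      refine hbound.trans_eq ?_
      rw [h]
      push_cast
      ring
  · rw [if_pos h]
    exact hbound.trans (le_add_of_nonneg_left hsix_nonneg)

theorem dirichlet_areaFn_le {β r : ℝ} (hr : r = (L + 1) * Real.exp (-β)) (hr4 : r ≤ 1 / 4) :
    dirichlet (gen L β) (gibbs L β) (areaFn (L := L)) ≤
      96 * (L + 1) ^ 5 * Real.exp (-β * 6) + 4 * (2 * r) ^ 7 := by
  have hcount : ((Finset.univ.filter fun σ : Config L =>
      energy σ = 6 ∧ (easySites σ).Nonempty).card : ℝ) ≤ 8 * (L + 1) ^ 5 := by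
    exact_mod_cast card_energy_six_easySites_nonempty_le L
  have hsix := mul_le_mul_of_nonneg_right hcount (by positivity : 0 ≤ 12 * Real.exp (-β * 6))
  have hseven := sum_energy_exp_le hr hr4 7
  refine (dirichlet_le_sum_easySites β _).trans ?_
  refine (Finset.sum_le_sum fun σ _ => sum_easySites_areaFn_le_ite β σ).trans ?_
  rw [Finset.sum_add_distrib, ← Finset.sum_filter, ← Finset.sum_filter, Finset.sum_const,
    nsmul_eq_mul, ← Finset.mul_sum]
  linarith

theorem energy_flipRect_allPlus {a u b v : ℕ} (ha : a ≤ L) (hu : u ≤ L) (hb : b ≤ L) (hv : v ≤ L)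
    (hau : a ≠ u) (hbv : b ≠ v) : energy (flipRect (allPlus L) a u b v) = 4 := by
  simpa [isDefect_allPlus, energy_allPlus] using energy_flipRect (allPlus L) ha hu hb hv hau hbv

theorem isDefect_flipRect_allPlus {a u b v : ℕ} (hu : u ≤ L) (hv : v ≤ L) (hau : a < u)
    (hbv : b < v) (i j : ℕ) : isDefect (flipRect (allPlus L) a u b v) i j = true ↔
      (i = a ∨ i = u) ∧ (j = b ∨ j = v) := by
  rw [isDefect_flipRect _ (hau.le.trans hu) hu (hbv.le.trans hv) hv, isDefect_allPlus]
  grind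

theorem flipRect_allPlus_inj {a u b v a' u' b' v' : ℕ} (hu : u ≤ L) (hv : v ≤ L) (hu' : u' ≤ L)
    (hv' : v' ≤ L) (hau : a < u) (hbv : b < v) (hau' : a' < u') (hbv' : b' < v')
    (h : flipRect (allPlus L) a u b v = flipRect (allPlus L) a' u' b' v') :
    a = a' ∧ u = u' ∧ b = b' ∧ v = v' := by
  have hcorners (i j : ℕ) :
      (i = a ∨ i = u) ∧ (j = b ∨ j = v) ↔ (i = a' ∨ i = u') ∧ (j = b' ∨ j = v') := by
    rw [← isDefect_flipRect_allPlus hu hv hau hbv, h,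
      isDefect_flipRect_allPlus hu' hv' hau' hbv']
  have hab' := hcorners a' b'
  have huv' := hcorners u' v'
  omega

/-- The minus rectangles with one corner plaquette in `[0:m-1]²` and the opposite one in
`[2m:3m-1]²`. They all contain the square of sites `[m+1:2m]²`, so they are `m⁴` configurations with
four defects and minus area at least `m²`. -/
def wideRect (L : ℕ) {m : ℕ} (k : (Fin m × Fin m) × Fin m × Fin m) : Config L :=
  flipRect (allPlus L) k.1.1 (2 * m + k.1.2) k.2.1 (2 * m + k.2.2)

theorem wideRect_injective {m : ℕ} (hL : 3 * m ≤ L) : Function.Injective (wideRect L (m := m)) := by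
  rintro ⟨⟨⟨a, ha⟩, u, hu⟩, ⟨b, hb⟩, v, hv⟩ ⟨⟨⟨a', ha'⟩, u', hu'⟩, ⟨b', hb'⟩, v', hv'⟩ h
  have := flipRect_allPlus_inj (by dsimp only; omega) (by dsimp only; omega) (by dsimp only; omega)
    (by dsimp only; omega) (by dsimp only; omega) (by dsimp only; omega) (by dsimp only; omega)
    (by dsimp only; omega) h
  simp only [Prod.mk.injEq, Fin.mk.injEq]
  dsimp only at this
  omega

theorem energy_wideRect {m : ℕ} (hL : 3 * m ≤ L) (k : (Fin m × Fin m) × Fin m × Fin m) :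
    energy (wideRect L k) = 4 := by
  obtain ⟨⟨⟨a, ha⟩, u, hu⟩, ⟨b, hb⟩, v, hv⟩ := k
  apply energy_flipRect_allPlus <;> dsimp only <;> omega

theorem sq_le_minusCount_wideRect {m : ℕ} (hL : 3 * m ≤ L) (k : (Fin m × Fin m) × Fin m × Fin m) :
    m ^ 2 ≤ minusCount (wideRect L k) := by
  let centre (c : Fin m × Fin m) : Fin L × Fin L :=
    (⟨m + c.1, by omega⟩, ⟨m + c.2, by omega⟩)
  have hcard : (Finset.univ : Finset (Fin m × Fin m)).card = m ^ 2 := by simp [sq]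
  rw [← hcard]
  refine Finset.card_le_card_of_injOn centre (fun c _ => ?_) fun c _ c' _ h => ?_
  · have hfst : between k.1.1 (2 * m + k.1.2) (m + c.1 + 1) = true := by
      simp only [between]
      grind
    have hsnd : between k.2.1 (2 * m + k.2.2) (m + c.2 + 1) = true := by
      simp only [between]
      grind
    simp [wideRect, flipRect, centre, allPlus, hfst, hsnd]
  · simp only [centre, Prod.mk.injEq, Fin.mk.injEq] at h
    exact Prod.ext (Fin.ext (by omega)) (Fin.ext (by omega))

theorem le_gibbs_mul_areaFn_wideRect_sq {β : ℝ} {m : ℕ} (hL : 3 * m ≤ L) (hm : 2 * L ≤ m ^ 2)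
    (hZ : partitionFn L β ≤ 2) (k : (Fin m × Fin m) × Fin m × Fin m) :
    Real.exp (-β * 4) / 2 * ((m : ℝ) ^ 2 - 2 * L) ^ 2 ≤
      gibbs L β (wideRect L k) * areaFn (wideRect L k) ^ 2 := by
  have hcount : (m : ℝ) ^ 2 ≤ minusCount (wideRect L k) := by
    exact_mod_cast sq_le_minusCount_wideRect hL k
  have hm0 : 0 ≤ (m : ℝ) ^ 2 - 2 * L := sub_nonneg.2 (by exact_mod_cast hm)
  have harea : (m : ℝ) ^ 2 - 2 * L ≤ areaFn (wideRect L k) :=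
    (sub_le_sub_right hcount _).trans (le_max_right _ _)
  have hgibbs : Real.exp (-β * 4) / 2 ≤ gibbs L β (wideRect L k) := by
    rw [gibbs_eq, energy_wideRect hL, Nat.cast_ofNat]
    exact div_le_div_of_nonneg_left (Real.exp_pos _).le (partitionFn_pos L β) hZ
  exact mul_le_mul hgibbs (pow_le_pow_left₀ hm0 harea 2) (sq_nonneg _) (gibbs_pos β _).le

theorem le_sqNorm_areaFn {β : ℝ} {m : ℕ} (hL : 3 * m ≤ L) (hm : 2 * L ≤ m ^ 2)
    (hZ : partitionFn L β ≤ 2) :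
    (m : ℝ) ^ 4 * (Real.exp (-β * 4) / 2 * ((m : ℝ) ^ 2 - 2 * L) ^ 2) ≤
      sqNorm (gibbs L β) areaFn := by
  have hcard : Fintype.card ((Fin m × Fin m) × Fin m × Fin m) = m ^ 4 := by
    simp only [Fintype.card_prod, Fintype.card_fin]
    ring
  calc _ = ∑ _k : (Fin m × Fin m) × Fin m × Fin m,
        Real.exp (-β * 4) / 2 * ((m : ℝ) ^ 2 - 2 * L) ^ 2 := by
        rw [Finset.sum_const, nsmul_eq_mul, Finset.card_univ, hcard, Nat.cast_pow]
    _ ≤ ∑ k, gibbs L β (wideRect L k) * areaFn (wideRect L k) ^ 2 :=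
        Finset.sum_le_sum fun k _ => le_gibbs_mul_areaFn_wideRect_sq hL hm hZ k
    _ = ∑ σ ∈ Finset.univ.image (wideRect L), gibbs L β σ * areaFn σ ^ 2 :=
        (Finset.sum_image (f := fun σ => gibbs L β σ * areaFn σ ^ 2) (g := wideRect L)
          (wideRect_injective hL).injOn).symm
    _ ≤ sqNorm (gibbs L β) areaFn :=
        Finset.sum_le_sum_of_subset_of_nonneg (Finset.subset_univ _)
          fun σ _ _ => mul_nonneg (gibbs_pos β σ).le (sq_nonneg _)

end AreaEstimates

/-! ### Mixing times on boxes of side of order `X = e^{β/2}` -/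

section Scale

variable {L : ℕ} {β X : ℝ}

theorem exp_neg_mul_natCast (hXβ : X ^ 2 = Real.exp β) (n : ℕ) :
    Real.exp (-β * n) = (X ^ (2 * n))⁻¹ := by
  rw [mul_comm, Real.exp_nat_mul, Real.exp_neg, ← hXβ, inv_pow, ← pow_mul]

theorem add_one_mul_exp_neg_le (hX : 1 ≤ X) (hXβ : X ^ 2 = Real.exp β) (hL : L ≤ X) :
    (L + 1) * Real.exp (-β) ≤ 2 / X := by
  have : 0 < X := by linarith
  rw [Real.exp_neg, ← hXβ]
  calc (L + 1) * (X ^ 2)⁻¹ ≤ 2 * X * (X ^ 2)⁻¹ := by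
        gcongr
        linarith
    _ = 2 / X := by field_simp

theorem add_one_mul_exp_neg_le_quarter (hX : 8 ≤ X) (hXβ : X ^ 2 = Real.exp β) (hL : L ≤ X) :
    (L + 1) * Real.exp (-β) ≤ 1 / 4 := by
  refine (add_one_mul_exp_neg_le (by linarith) hXβ hL).trans ?_
  rw [div_le_iff₀ (by linarith)]
  linarith

theorem energyPoincare_gen_scale (hβ : 0 ≤ β) (hX : 16 ≤ X) (hXβ : X ^ 2 = Real.exp β)
    (hL : L ≤ X) :
    EnergyPoincare (gen L β) (gibbs L β) (fun σ => (energy σ : ℝ)) (allPlus L) (288 * X ^ 7) := by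
  have hL1 : (L : ℝ) + 1 ≤ 2 * X := by linarith
  have hexp2 : Real.exp (-2 * β) = (X ^ 4)⁻¹ := by
    rw [neg_mul_comm, mul_comm]
    exact_mod_cast exp_neg_mul_natCast hXβ 2
  have hexp4 : Real.exp (-4 * β) = (X ^ 8)⁻¹ := by
    rw [neg_mul_comm, mul_comm]
    exact_mod_cast exp_neg_mul_natCast hXβ 4
  have hexp : Real.exp (2 * β) = X ^ 4 := by
    rw [← neg_neg (2 * β), Real.exp_neg, ← neg_mul, hexp2, inv_inv]
  have hX2 : (16 : ℝ) ^ 2 ≤ X ^ 2 := by gcongr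
  have hsmall : 12 * L * (4 * (L + 1) * Real.exp (-2 * β) +
      L * (L + 1) ^ 2 * Real.exp (-4 * β)) ≤ 1 / 2 := by
    rw [hexp2, hexp4]
    calc _ ≤ 12 * X * (4 * (2 * X) * (X ^ 4)⁻¹ + X * (2 * X) ^ 2 * (X ^ 8)⁻¹) := by gcongr
      _ = (96 * X ^ 2 + 48) / (X ^ 2 * X ^ 2) := by
          field_simp
          ring
      _ ≤ 1 / 2 := by
          rw [div_le_iff₀ (by positivity)]
          nlinarith
  refine (energyPoincare_gen hβ hsmall).mono (isReversibleGenerator_gen L β) ?_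
  have hLX4 : (L : ℝ) + 1 ≤ 2 * X ^ 4 := hL1.trans (by
    gcongr
    exact le_self_pow₀ (by linarith) (by norm_num))
  calc 48 * (L : ℝ) ^ 2 * (1 + L) * (Real.exp (2 * β) + (L + 1))
      ≤ 48 * X ^ 2 * (2 * X) * (X ^ 4 + 2 * X ^ 4) := by
        rw [hexp]
        gcongr
        linarith
    _ = 288 * X ^ 7 := by ring

theorem tv_lt_quarter_scale (hβ : 1 ≤ β) (hX : 16 ≤ X) (hXβ : X ^ 2 = Real.exp β) (hL : L ≤ X)
    (σ : Config L) :
    tv (mexp ((β * (288 * X ^ 7) * Real.log (β * (4 * X ^ 2)) + 3 * (288 * X ^ 7)) • gen L β) σ)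
      (gibbs L β) < 1 / 4 := by
  have henergy (τ : Config L) : (energy τ : ℝ) ≤ 4 * X ^ 2 := by
    calc (energy τ : ℝ) ≤ ((L : ℝ) + 1) ^ 2 := by exact_mod_cast energy_le τ
      _ ≤ (2 * X) ^ 2 := by
          gcongr
          linarith
      _ = 4 * X ^ 2 := by ring
  refine (isReversibleGenerator_gen L β).tv_lt_of_energyPoincare (by linarith)
    (partitionFn_pos L β) (partitionFn_le_two (add_one_mul_exp_neg_le_quarter (by linarith) hXβ hL))
    (gibbs_eq β) (by simp [energy_allPlus]) (fun τ hτ => ?_) henergy (by nlinarith) (by positivity)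
    (energyPoincare_gen_scale (by linarith) hX hXβ hL) σ
  have := four_le_energy hτ
  exact_mod_cast (by omega : 1 ≤ energy τ)

theorem dirichlet_areaFn_scale_le (hX : 8 ≤ X) (hXβ : X ^ 2 = Real.exp β) (hL : L ≤ X) :
    dirichlet (gen L β) (gibbs L β) (areaFn (L := L)) ≤ 68608 / X ^ 7 := by
  refine (dirichlet_areaFn_le rfl (add_one_mul_exp_neg_le_quarter hX hXβ hL)).trans ?_
  have hexp6 : Real.exp (-β * 6) = (X ^ 12)⁻¹ := by exact_mod_cast exp_neg_mul_natCast hXβ 6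
  have hL1 : (L : ℝ) + 1 ≤ 2 * X := by linarith
  have hr := add_one_mul_exp_neg_le (by linarith) hXβ hL
  calc _ ≤ 96 * (2 * X) ^ 5 * (X ^ 12)⁻¹ + 4 * (2 * (2 / X)) ^ 7 := by
        rw [hexp6]
        gcongr
    _ = 68608 / X ^ 7 := by
        field_simp
        norm_num

theorem le_sqNorm_areaFn_scale (hX : 1024 ≤ X) (hXβ : X ^ 2 = Real.exp β) (hL : L ≤ X)
    (hXL : X ≤ 2 * L) : 1 / 2 ^ 35 ≤ sqNorm (gibbs L β) areaFn := by
  have hZ := partitionFn_le_two (add_one_mul_exp_neg_le_quarter (by linarith) hXβ hL)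
  have hL512 : (512 : ℝ) ≤ L := by linarith
  have hm : (L : ℝ) / 8 ≤ (L / 4 : ℕ) := by
    have hL512' : 512 ≤ L := by exact_mod_cast hL512
    rw [div_le_iff₀ (by norm_num)]
    exact_mod_cast (by omega : L ≤ L / 4 * 8)
  have hm_sq : (L : ℝ) ^ 2 / 128 ≤ ((L / 4 : ℕ) : ℝ) ^ 2 - 2 * L := by
    have : ((L : ℝ) / 8) ^ 2 ≤ ((L / 4 : ℕ) : ℝ) ^ 2 := by gcongr
    nlinarith
  have hthreshold : 2 * L ≤ (L / 4) ^ 2 := by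
    have : (2 : ℝ) * L ≤ ((L / 4 : ℕ) : ℝ) ^ 2 := by nlinarith
    exact_mod_cast this
  have hexp4 : Real.exp (-β * 4) = (X ^ 8)⁻¹ := by exact_mod_cast exp_neg_mul_natCast hXβ 4
  have hLX : X / 2 ≤ L := by linarith
  calc (1 : ℝ) / 2 ^ 35 = (X / 2 / 8) ^ 4 * ((X ^ 8)⁻¹ / 2 * ((X / 2) ^ 2 / 128) ^ 2) := by
        field_simp
        norm_num
    _ ≤ ((L : ℝ) / 8) ^ 4 * (Real.exp (-β * 4) / 2 * ((L : ℝ) ^ 2 / 128) ^ 2) := by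
        rw [hexp4]
        gcongr
    _ ≤ ((L / 4 : ℕ) : ℝ) ^ 4 * (Real.exp (-β * 4) / 2 * (((L / 4 : ℕ) : ℝ) ^ 2 - 2 * L) ^ 2) := by
        gcongr
    _ ≤ sqNorm (gibbs L β) areaFn := le_sqNorm_areaFn (by omega) hthreshold hZ

theorem half_le_gibbs_allPlus (hZ : partitionFn L β ≤ 2) : 1 / 2 ≤ gibbs L β (allPlus L) := by
  rw [gibbs_eq, energy_allPlus, Nat.cast_zero, mul_zero, Real.exp_zero]
  exact one_div_le_one_div_of_le (partitionFn_pos L β) hZ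

theorem le_of_tv_lt_quarter_scale (hX : 1024 ≤ X) (hXβ : X ^ 2 = Real.exp β) (hL : L ≤ X)
    (hXL : X ≤ 2 * L) {t : ℝ} (ht : 0 < t)
    (hmix : ∀ σ : Config L, tv (mexp (t • gen L β) σ) (gibbs L β) < 1 / 4) :
    1 / 2 ^ 54 * X ^ 7 ≤ t := by
  have hgen := isReversibleGenerator_gen L β
  have hground := half_le_gibbs_allPlus
    (partitionFn_le_two (add_one_mul_exp_neg_le_quarter (by linarith) hXβ hL))
  have hsqNorm := le_sqNorm_areaFn_scale hX hXβ hL hXL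
  have hvariance : 1 / 2 * (1 / 2 ^ 35) ≤ variance (gibbs L β) areaFn := by
    calc _ ≤ gibbs L β (allPlus L) * sqNorm (gibbs L β) areaFn := by gcongr
      _ ≤ _ := mul_sqNorm_le_variance (fun σ => (gibbs_pos β σ).le) (sum_gibbs L β) areaFn_allPlus
  have hdirichlet := mul_le_mul_of_nonneg_left
    (dirichlet_areaFn_scale_le (by linarith) hXβ hL) (by linarith : 0 ≤ 2 * t)
  have hgap := hgen.variance_le_of_tv_le ht.le (fun σ => (hmix σ).le) areaFn
  have hlower : 3 / 2 ^ 38 ≤ 2 * t * 68608 / X ^ 7 := by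
    rw [mul_div_assoc]
    linarith
  rw [le_div_iff₀ (by positivity)] at hlower
  linarith

theorem log_mul_four_sq_le (hβ : 4 ≤ β) (hXβ : X ^ 2 = Real.exp β) :
    Real.log (β * (4 * X ^ 2)) ≤ 3 * β := by
  have hβ0 : 0 < β := by linarith
  have hlogβ := Real.log_le_sub_one_of_pos hβ0
  have hlog4 := Real.log_le_sub_one_of_pos (zero_lt_four (α := ℝ))
  rw [hXβ, Real.log_mul hβ0.ne' (by positivity), Real.log_mul four_ne_zero (Real.exp_ne_zero _),
    Real.log_exp]
  linarith

theorem exists_mixed_time_scale (hβ : 4 ≤ β) (hX : 16 ≤ X) (hXβ : X ^ 2 = Real.exp β)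
    (hL : L ≤ X) : ∃ t, 0 < t ∧ t ≤ 1728 * β ^ 2 * X ^ 7 ∧
      ∀ σ : Config L, tv (mexp (t • gen L β) σ) (gibbs L β) < 1 / 4 := by
  have hlog0 : 0 ≤ Real.log (β * (4 * X ^ 2)) := Real.log_nonneg (by nlinarith)
  have hlog := log_mul_four_sq_le hβ hXβ
  refine ⟨_, by positivity, ?_, tv_lt_quarter_scale (by linarith) hX hXβ hL⟩
  calc _ ≤ β * (288 * X ^ 7) * (3 * β) + 3 * (288 * X ^ 7) := by gcongr
    _ = (864 * β ^ 2 + 864) * X ^ 7 := by ring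
    _ ≤ 1728 * β ^ 2 * X ^ 7 := by
        gcongr
        nlinarith

theorem le_tmix_quarter_scale (hβ : 4 ≤ β) (hX : 1024 ≤ X) (hXβ : X ^ 2 = Real.exp β) (hL : L ≤ X)
    (hXL : X ≤ 2 * L) : 1 / 2 ^ 54 * X ^ 7 ≤ tmix L β (1 / 4) := by
  obtain ⟨t, ht, -, hmix⟩ := exists_mixed_time_scale hβ (by linarith) hXβ hL
  exact le_csInf ⟨t, ht, hmix⟩ fun s hs => le_of_tv_lt_quarter_scale hX hXβ hL hXL hs.1 hs.2

theorem tmix_quarter_scale_le (hβ : 4 ≤ β) (hX : 16 ≤ X) (hXβ : X ^ 2 = Real.exp β) (hL : L ≤ X) :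
    tmix L β (1 / 4) ≤ 1728 * β ^ 2 * X ^ 7 := by
  obtain ⟨t, ht, hle, hmix⟩ := exists_mixed_time_scale hβ hX hXβ hL
  exact csInf_le_of_le ⟨0, fun s hs => hs.1.le⟩ ⟨ht, hmix⟩ hle

theorem le_exp_of_twenty_le (hβ : 20 ≤ β) : 1024 ≤ Real.exp (β / 2) := by
  calc (1024 : ℝ) = 2 ^ 10 := by norm_num
    _ ≤ Real.exp 1 ^ 10 := by
        gcongr
        linarith [Real.add_one_le_exp (1 : ℝ)]
    _ = Real.exp 10 := by rw [← Real.exp_nat_mul]; norm_num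
    _ ≤ Real.exp (β / 2) := Real.exp_le_exp.2 (by linarith)

end Scale

end SPM

theorem spm_plus_mixing_time_bounds_general {L : ℕ} {β : ℝ} (hβ : 20 ≤ β)
    (hL : L ≤ Real.exp (β / 2)) (hL' : Real.exp (β / 2) ≤ 2 * L) :
    1 / 2 ^ 54 * Real.exp (3.5 * β) ≤ tmix L β (1 / 4) ∧
      tmix L β (1 / 4) ≤ 1728 * β ^ 2 * Real.exp (3.5 * β) := by
  have hX : 1024 ≤ Real.exp (β / 2) := le_exp_of_twenty_le hβ
  have hX2 : Real.exp (β / 2) ^ 2 = Real.exp β := by rw [← Real.exp_nat_mul]; ring_nf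
  have hX7 : Real.exp (β / 2) ^ 7 = Real.exp (3.5 * β) := by rw [← Real.exp_nat_mul]; ring_nf
  rw [← hX7]
  exact ⟨le_tmix_quarter_scale (by linarith) hX hX2 hL hL',
    tmix_quarter_scale_le (by linarith) (by linarith) hX2 hL⟩

/-- Theorem `ThmMainResPlus`: mixing time bounds for the square plaquette
model with all-plus boundary conditions on the critical length scale:
`e^{3.5β} ≲ T⁺_mix(L_c) ≲ β⁸ e^{3.75β}`. -/
theorem spm_plus_mixing_time_bounds :
    ∃ c C β₀ : ℝ, 0 < c ∧ 0 < C ∧ ∀ β : ℝ, β₀ ≤ β →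
      c * Real.exp (3.5 * β) ≤ tmix (Lc β) β (1 / 4) ∧
      tmix (Lc β) β (1 / 4) ≤ C * β ^ 8 * Real.exp (3.75 * β) := by
  refine ⟨1 / 2 ^ 54, 1728, 20, by norm_num, by norm_num, fun β hβ => ?_⟩
  have hL : Lc β ≤ Real.exp (β / 2) := Nat.floor_le (Real.exp_pos _).le
  have hL' : Real.exp (β / 2) < Lc β + 1 := Nat.lt_floor_add_one _
  obtain ⟨hlower, hupper⟩ := spm_plus_mixing_time_bounds_general hβ hL
    (by linarith [le_exp_of_twenty_le hβ])
  refine ⟨hlower, hupper.trans ?_⟩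
  gcongr <;> linarith

end
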